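/- arXiv:1609.00453 — 7 statements merged into one kernel-verified Lean document; each statement's English description precedes it below -/
import Mathlib

section
/- There exists a 2-factorization of K_48 minus a perfect matching into exactly 17 C_3-factors and 6 C_4-factors. That is, (17,6) ∈ HWP(48; 3, 4). -/
open SimpleGraph

/-- A `C_k`-factor: a spanning 2-regular subgraph all of whose connected
components (necessarily cycles) have exactly `k` vertices. -/
def IsCycleFactor {V : Type*} (H : SimpleGraph V) (k : ℕ) : Prop :=
  (∀ v : V, (H.neighborSet v).ncard = 2) ∧
  (∀ v : V, (H.connectedComponentMk v).supp.ncard = k)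

/-- A 1-factor (perfect matching): every vertex has exactly one neighbour. -/
def IsOneFactor {V : Type*} (H : SimpleGraph V) : Prop :=
  ∀ v : V, (H.neighborSet v).ncard = 1

/-- `F 0, …, F (N-1)` partitions the edge set of `G`. -/
def IsDecompOn {V : Type*} (G : SimpleGraph V) (F : ℕ → SimpleGraph V) (N : ℕ) : Prop :=
  (∀ i < N, F i ≤ G) ∧
  (∀ i < N, ∀ j < N, i ≠ j → Disjoint (F i).edgeSet (F j).edgeSet) ∧
  G.edgeSet = ⋃ i ∈ Set.Iio N, (F i).edgeSet

/-- A Hamilton–Waterloo decomposition of a graph `G` into `α` `C_m`-factors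
and `β` `C_n`-factors. -/
def IsHWGraph {V : Type*} (G : SimpleGraph V) (m n α β : ℕ) : Prop :=
  ∃ F : ℕ → SimpleGraph V, IsDecompOn G F (α + β) ∧
    (∀ i < α, IsCycleFactor (F i) m) ∧
    (∀ i, α ≤ i → i < α + β → IsCycleFactor (F i) n)

/-- `HW v m n α β`: a partition of `E(K_v)` (for `v` odd) or of `E(K_v)` minus a
perfect matching (for `v` even) into `α` `C_m`-factors and `β` `C_n`-factors. -/
def HW (v m n α β : ℕ) : Prop :=
  ∃ I : SimpleGraph (Fin v),
    (Odd v → I = ⊥) ∧ (Even v → IsOneFactor I) ∧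
    IsHWGraph ((⊤ : SimpleGraph (Fin v)) \ I) m n α β

/-- The complete `u`-partite graph with parts of size `g`. -/
def Kpartite (u g : ℕ) : SimpleGraph (Fin u × Fin g) :=
  SimpleGraph.fromRel (fun a b => a.1 ≠ b.1)

/-- The Cayley graph on an additive group with connection set `S`. -/
def cayley (Γ : Type*) [AddGroup Γ] (S : Set Γ) : SimpleGraph Γ :=
  SimpleGraph.fromRel (fun a b => a - b ∈ S)

/-- Successor of each vertex in the base triangle factor (vertex `16 * l + x` is `x` in layer `l`). -/
def baseSucc : List ℕ := [19, 5, 35, 27, 29, 22, 17, 25, 23, 21, 16, 31, 26, 20, 24, 28, 34, 36, 44, 43, 33, 32, 1, 46, 45, 42, 41, 47, 40, 38, 18, 37, 9, 13, 10, 39, 6, 11, 4, 2, 15, 12, 7, 0, 30, 14, 8, 3]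

/-- Entry `16 * l + d`: start (in layer `l`) of the base edge to layer `l + 1` with difference `d`. -/
def mixedStart : List ℕ := [0, 5, 7, 0, 11, 1, 10, 13, 3, 4, 14, 6, 9, 15, 12, 8, 0, 9, 0, 1, 11, 8, 15, 7, 3, 13, 2, 5, 12, 4, 14, 10, 0, 13, 4, 9, 15, 11, 5, 8, 2, 0, 14, 7, 1, 10, 6, 3]

/-- Translate inside each layer. -/
def rotV (k v : ℕ) : ℕ := 16 * (v / 16) + (v + k) % 16

/-- Successor of `v` in factor `i`: `i < 16` translates of the base triangle factor, `16` the
vertical triangles, `17, …, 22` the 4-cycle factors inside the layers. -/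
def succN (i v : ℕ) : ℕ :=
  if i < 16 then rotV i (baseSucc.getD (rotV (16 - i) v) 0)
  else if i = 16 then (v + 16) % 48
  else
    let m := (i - 17) / 2 + 1
    let h := (i - 17) % 2
    let x := v % 16
    let r := x % 4
    let q := x / 4
    let r' := r ^^^ m
    let q' := if r < r' then q ^^^ (2 * h) else q ^^^ (2 * h) ^^^ 1
    16 * (v / 16) + 4 * q' + r'

/-- Colour of an oriented edge between consecutive layers. -/
def mixedCol (v w : ℕ) : ℕ :=
  let d := (w + 16 - v % 16) % 16
  if d = 0 then 16 else (v % 16 + 16 - mixedStart.getD (16 * (v / 16) + d) 0) % 16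

/-- Colour of a pair of vertices; colour `23` is the 1-factor. -/
def colN (v w : ℕ) : ℕ :=
  if v / 16 = w / 16 then
    let x := v % 16
    let y := w % 16
    let st := if v / 16 = 0 then 1 else if v / 16 = 1 then 14 else 3
    if x % 4 = y % 4 then
      if (x + 8) % 16 = y then 23
      else if (x + 4) % 16 = y then (x + 16 - st) % 16
      else (y + 16 - st) % 16
    else 17 + 2 * ((x % 4 ^^^ y % 4) - 1) + (x / 8 ^^^ y / 8)
  else if (v / 16 + 1) % 3 = w / 16 then mixedCol v w
  else mixedCol w v

def succV (i : ℕ) (v : Fin 48) : Fin 48 := ⟨succN i v % 48, Nat.mod_lt _ (by norm_num)⟩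

def mateV (v : Fin 48) : Fin 48 := ⟨rotV 8 v % 48, Nat.mod_lt _ (by norm_num)⟩

def colV (v w : Fin 48) : ℕ := colN v w

/-- The graph of colour `i`. -/
def colGraph (i : ℕ) : SimpleGraph (Fin 48) :=
  SimpleGraph.fromRel (fun v w => colV v w = i)

set_option maxRecDepth 100000 in
theorem colV_pairs : ∀ v w : Fin 48, v ≠ w → colV v w = colV w v ∧
    ((colV v w < 23 ∧ (w = succV (colV v w) v ∨ v = succV (colV v w) w)) ∨
      (colV v w = 23 ∧ w = mateV v)) := by
  decide +kernel

set_option maxRecDepth 100000 in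
theorem mateV_spec : ∀ v : Fin 48, mateV v ≠ v ∧ colV v (mateV v) = 23 := by
  decide +kernel

set_option maxRecDepth 100000 in
theorem succV_spec : ∀ i < 23, ∀ v : Fin 48, succV i v ≠ v ∧ colV v (succV i v) = i := by
  decide +kernel

set_option maxRecDepth 100000 in
theorem succV_three : ∀ i < 17, ∀ v : Fin 48, succV i (succV i (succV i v)) = v := by
  decide +kernel

set_option maxRecDepth 100000 in
theorem succV_four : ∀ i < 23, 17 ≤ i → ∀ v : Fin 48,
    succV i (succV i (succV i (succV i v))) = v ∧ succV i (succV i v) ≠ v := by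
  decide +kernel

theorem colGraph_adj (i : ℕ) (v w : Fin 48) :
    (colGraph i).Adj v w ↔ v ≠ w ∧ colV v w = i := by
  rw [colGraph, SimpleGraph.fromRel_adj]
  constructor
  · rintro ⟨h, h1 | h1⟩
    · exact ⟨h, h1⟩
    · exact ⟨h, (colV_pairs v w h).1.trans h1⟩
  · rintro ⟨h, h1⟩
    exact ⟨h, Or.inl h1⟩

theorem colGraph_adj_succ (i : ℕ) (hi : i < 23) (v w : Fin 48) :
    (colGraph i).Adj v w ↔ w = succV i v ∨ v = succV i w := by
  rw [colGraph_adj]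
  constructor
  · rintro ⟨h, h1⟩
    have h2 := (colV_pairs v w h).2
    rw [h1] at h2
    rcases h2 with h2 | h2
    · exact h2.2
    · omega
  · rintro (rfl | rfl)
    · exact ⟨(succV_spec i hi v).1.symm, (succV_spec i hi v).2⟩
    · have := succV_spec i hi w
      exact ⟨this.1, (colV_pairs _ _ this.1).1.trans this.2⟩

/-- A set containing `v`, closed under adjacency and reachable from `v`, is the component of `v`. -/
theorem supp_eq_of_closed {V : Type*} (H : SimpleGraph V) (v : V) (T : Set V) (hv : v ∈ T)
    (hc : ∀ a ∈ T, ∀ b, H.Adj a b → b ∈ T) (hr : ∀ a ∈ T, H.Reachable a v) :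
    (H.connectedComponentMk v).supp = T := by
  ext a
  rw [SimpleGraph.ConnectedComponent.mem_supp_iff, SimpleGraph.ConnectedComponent.eq]
  refine ⟨?_, hr a⟩
  intro h
  obtain ⟨p⟩ := h.symm
  clear h hr
  induction p with
  | nil => exact hv
  | cons hadj p ih => exact ih (hc _ hv _ hadj)

theorem cycleFactor_three {V : Type*} (H : SimpleGraph V) (f : V → V)
    (hadj : ∀ v w, H.Adj v w ↔ w = f v ∨ v = f w) (hne : ∀ v, f v ≠ v)
    (h3 : ∀ v, f (f (f v)) = v) : IsCycleFactor H 3 := by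
  have h02 : ∀ v, f (f v) ≠ v := fun v h => hne v (by have := h3 v; rwa [h] at this)
  constructor
  · intro v
    have : H.neighborSet v = {f v, f (f v)} := by
      ext w
      simp only [SimpleGraph.mem_neighborSet, hadj, Set.mem_insert_iff, Set.mem_singleton_iff]
      constructor
      · rintro (h | h)
        · exact Or.inl h
        · right; rw [h, h3]
      · rintro (h | h)
        · exact Or.inl h
        · right; rw [h, h3]
    rw [this, Set.ncard_pair (hne (f v)).symm]
  · intro v
    rw [supp_eq_of_closed H v {v, f v, f (f v)}]
    · rw [Set.ncard_eq_three]
      exact ⟨v, f v, f (f v), (hne v).symm, (h02 v).symm, (hne _).symm, rfl⟩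
    · simp
    · intro a ha b hab
      rw [hadj] at hab
      simp only [Set.mem_insert_iff, Set.mem_singleton_iff] at ha ⊢
      have hb : b = f a ∨ b = f (f a) := by
        rcases hab with h | h
        · exact Or.inl h
        · right; rw [h, h3]
      rcases ha with rfl | rfl | rfl <;> rcases hb with rfl | rfl <;> simp [h3]
    · intro a ha
      have e : ∀ x, H.Reachable (f x) x := fun x =>
        SimpleGraph.Adj.reachable ((hadj _ _).2 (Or.inr rfl))
      rcases ha with rfl | rfl | rfl
      · exact SimpleGraph.Reachable.refl _
      · exact e v
      · exact (e _).trans (e v)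

theorem cycleFactor_four {V : Type*} (H : SimpleGraph V) (f : V → V)
    (hadj : ∀ v w, H.Adj v w ↔ w = f v ∨ v = f w) (hne : ∀ v, f v ≠ v)
    (h4 : ∀ v, f (f (f (f v))) = v) (h2 : ∀ v, f (f v) ≠ v) : IsCycleFactor H 4 := by
  have h03 : ∀ v, f (f (f v)) ≠ v := fun v h => hne v (by have := h4 v; rwa [h] at this)
  constructor
  · intro v
    have : H.neighborSet v = {f v, f (f (f v))} := by
      ext w
      simp only [SimpleGraph.mem_neighborSet, hadj, Set.mem_insert_iff, Set.mem_singleton_iff]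
      constructor
      · rintro (h | h)
        · exact Or.inl h
        · right; rw [h, h4]
      · rintro (h | h)
        · exact Or.inl h
        · right; rw [h, h4]
    rw [this, Set.ncard_pair (h2 (f v)).symm]
  · intro v
    rw [supp_eq_of_closed H v {v, f v, f (f v), f (f (f v))}]
    · classical
      rw [Set.ncard_insert_of_notMem, Set.ncard_eq_three.2]
      · exact ⟨f v, f (f v), f (f (f v)), (hne _).symm, (h2 _).symm, (hne _).symm, rfl⟩
      · simp only [Set.mem_insert_iff, Set.mem_singleton_iff, not_or]
        exact ⟨(hne v).symm, (h2 v).symm, (h03 v).symm⟩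
    · simp
    · intro a ha b hab
      rw [hadj] at hab
      simp only [Set.mem_insert_iff, Set.mem_singleton_iff] at ha ⊢
      have hb : b = f a ∨ b = f (f (f a)) := by
        rcases hab with h | h
        · exact Or.inl h
        · right; rw [h, h4]
      rcases ha with rfl | rfl | rfl | rfl <;> rcases hb with rfl | rfl <;> simp [h4]
    · intro a ha
      have e : ∀ x, H.Reachable (f x) x := fun x =>
        SimpleGraph.Adj.reachable ((hadj _ _).2 (Or.inr rfl))
      rcases ha with rfl | rfl | rfl | rfl
      · exact SimpleGraph.Reachable.refl _
      · exact e v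
      · exact (e _).trans (e v)
      · exact ((e _).trans (e _)).trans (e v)

theorem stmt_4 : HW 48 3 4 17 6 := by
  refine ⟨colGraph 23, fun h => absurd h (by decide), fun _ v => ?_, colGraph, ⟨?_, ?_, ?_⟩, ?_, ?_⟩
  · have : (colGraph 23).neighborSet v = {mateV v} := by
      ext w
      rw [SimpleGraph.mem_neighborSet, colGraph_adj, Set.mem_singleton_iff]
      constructor
      · rintro ⟨h, h1⟩
        rcases (colV_pairs v w h).2 with h2 | h2
        · omega
        · exact h2.2
      · rintro rfl
        exact ⟨(mateV_spec v).1.symm, (mateV_spec v).2⟩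
    rw [this, Set.ncard_singleton]
  · intro i hi v w h
    rw [colGraph_adj] at h
    rw [SimpleGraph.sdiff_adj, SimpleGraph.top_adj, colGraph_adj]
    exact ⟨h.1, fun h' => by omega⟩
  · intro i _ j _ hij
    rw [Set.disjoint_left]
    intro e
    induction e using Sym2.ind with
    | _ v w =>
      rw [SimpleGraph.mem_edgeSet, SimpleGraph.mem_edgeSet, colGraph_adj, colGraph_adj]
      rintro ⟨_, h⟩ ⟨_, h'⟩
      exact hij (h.symm.trans h')
  · ext e
    induction e using Sym2.ind with
    | _ v w =>
      simp only [Set.mem_iUnion, SimpleGraph.mem_edgeSet, SimpleGraph.sdiff_adj,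
        SimpleGraph.top_adj, colGraph_adj, Set.mem_Iio, exists_prop]
      constructor
      · rintro ⟨h, h'⟩
        refine ⟨colV v w, ?_, h, rfl⟩
        rcases (colV_pairs v w h).2 with h2 | h2
        · omega
        · exact absurd ⟨h, h2.1⟩ h'
      · rintro ⟨i, hi, h, h'⟩
        exact ⟨h, fun h2 => by omega⟩
  · intro i hi
    exact cycleFactor_three _ (succV i) (colGraph_adj_succ i (by omega))
      (fun v => (succV_spec i (by omega) v).1) (succV_three i hi)
  · intro i hi hi'
    exact cycleFactor_four _ (succV i) (colGraph_adj_succ i (by omega))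
      (fun v => (succV_spec i (by omega) v).1) (fun v => (succV_four i (by omega) hi v).1)
      (fun v => (succV_four i (by omega) hi v).2)
end

section
/- There exists a 2-factorization of K_45 into exactly 21 C_3-factors and 1 C_5-factor. That is, (21,1) ∈ HWP(45; 3, 5). -/
open SimpleGraph

/-- successor tables of the 22 factors -/
def hwT : List (List ℕ) :=
  [
   [1, 17, 30, 34, 38, 24, 10, 12, 33, 41, 28, 5, 14, 36, 7, 16, 32, 0, 4, 8, 39, 25, 27, 3, 11, 43, 20, 29, 6, 22, 31, 2, 15, 19, 23, 9, 40, 42, 18, 26, 13, 35, 44, 21, 37],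
   [8, 2, 18, 31, 35, 39, 25, 11, 13, 34, 42, 29, 6, 0, 37, 23, 17, 33, 1, 5, 9, 40, 26, 28, 4, 12, 44, 21, 15, 7, 38, 32, 3, 16, 20, 24, 10, 41, 43, 19, 27, 14, 36, 30, 22],
   [38, 9, 3, 19, 32, 36, 40, 26, 12, 14, 35, 43, 15, 7, 1, 8, 24, 18, 34, 2, 6, 10, 41, 27, 29, 5, 13, 30, 22, 16, 23, 39, 33, 4, 17, 21, 25, 11, 42, 44, 20, 28, 0, 37, 31],
   [2, 39, 10, 4, 20, 33, 37, 41, 27, 13, 0, 36, 44, 16, 8, 17, 9, 25, 19, 35, 3, 7, 11, 42, 28, 15, 6, 14, 31, 23, 32, 24, 40, 34, 5, 18, 22, 26, 12, 43, 30, 21, 29, 1, 38],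
   [9, 3, 40, 11, 5, 21, 34, 38, 42, 28, 14, 1, 37, 30, 17, 24, 18, 10, 26, 20, 36, 4, 8, 12, 43, 29, 16, 7, 0, 32, 39, 33, 25, 41, 35, 6, 19, 23, 27, 13, 44, 31, 22, 15, 2],
   [18, 10, 4, 41, 12, 6, 22, 35, 39, 43, 29, 0, 2, 38, 31, 33, 25, 19, 11, 27, 21, 37, 5, 9, 13, 44, 15, 17, 8, 1, 3, 40, 34, 26, 42, 36, 7, 20, 24, 28, 14, 30, 32, 23, 16],
   [32, 19, 11, 5, 42, 13, 7, 23, 36, 40, 44, 15, 1, 3, 39, 2, 34, 26, 20, 12, 28, 22, 38, 6, 10, 14, 30, 16, 18, 9, 17, 4, 41, 35, 27, 43, 37, 8, 21, 25, 29, 0, 31, 33, 24],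
   [40, 33, 20, 12, 6, 43, 14, 8, 24, 37, 41, 30, 16, 2, 4, 10, 3, 35, 27, 21, 13, 29, 23, 39, 7, 11, 0, 31, 17, 19, 25, 18, 5, 42, 36, 28, 44, 38, 9, 22, 26, 15, 1, 32, 34],
   [5, 41, 34, 21, 13, 7, 44, 0, 9, 25, 38, 42, 31, 17, 3, 20, 11, 4, 36, 28, 22, 14, 15, 24, 40, 8, 12, 1, 32, 18, 35, 26, 19, 6, 43, 37, 29, 30, 39, 10, 23, 27, 16, 2, 33],
   [4, 6, 42, 35, 22, 14, 8, 30, 1, 10, 26, 39, 43, 32, 18, 19, 21, 12, 5, 37, 29, 23, 0, 16, 25, 41, 9, 13, 2, 33, 34, 36, 27, 20, 7, 44, 38, 15, 31, 40, 11, 24, 28, 17, 3],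
   [19, 5, 7, 43, 36, 23, 0, 9, 31, 2, 11, 27, 40, 44, 33, 34, 20, 22, 13, 6, 38, 15, 24, 1, 17, 26, 42, 10, 14, 3, 4, 35, 37, 28, 21, 8, 30, 39, 16, 32, 41, 12, 25, 29, 18],
   [34, 20, 6, 8, 44, 37, 24, 1, 10, 32, 3, 12, 28, 41, 30, 4, 35, 21, 23, 14, 7, 39, 16, 25, 2, 18, 27, 43, 11, 0, 19, 5, 36, 38, 29, 22, 9, 31, 40, 17, 33, 42, 13, 26, 15],
   [31, 35, 21, 7, 9, 30, 38, 25, 2, 11, 33, 4, 13, 29, 42, 1, 5, 36, 22, 24, 0, 8, 40, 17, 26, 3, 19, 28, 44, 12, 16, 20, 6, 37, 39, 15, 23, 10, 32, 41, 18, 34, 43, 14, 27],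
   [43, 32, 36, 22, 8, 10, 31, 39, 26, 3, 12, 34, 5, 14, 15, 13, 2, 6, 37, 23, 25, 1, 9, 41, 18, 27, 4, 20, 29, 30, 28, 17, 21, 7, 38, 40, 16, 24, 11, 33, 42, 19, 35, 44, 0],
   [16, 44, 33, 37, 23, 9, 11, 32, 40, 27, 4, 13, 35, 6, 0, 31, 14, 3, 7, 38, 24, 26, 2, 10, 42, 19, 28, 5, 21, 15, 1, 29, 18, 22, 8, 39, 41, 17, 25, 12, 34, 43, 20, 36, 30],
   [15, 16, 17, 18, 19, 20, 21, 22, 23, 24, 25, 26, 27, 28, 29, 36, 37, 38, 39, 40, 41, 42, 43, 44, 30, 31, 32, 33, 34, 35, 9, 10, 11, 12, 13, 14, 0, 1, 2, 3, 4, 5, 6, 7, 8],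
   [24, 25, 26, 27, 28, 29, 15, 16, 17, 18, 19, 20, 21, 22, 23, 30, 31, 32, 33, 34, 35, 36, 37, 38, 39, 40, 41, 42, 43, 44, 6, 7, 8, 9, 10, 11, 12, 13, 14, 0, 1, 2, 3, 4, 5],
   [21, 22, 23, 24, 25, 26, 27, 28, 29, 15, 16, 17, 18, 19, 20, 39, 40, 41, 42, 43, 44, 30, 31, 32, 33, 34, 35, 36, 37, 38, 0, 1, 2, 3, 4, 5, 6, 7, 8, 9, 10, 11, 12, 13, 14],
   [23, 24, 25, 26, 27, 28, 29, 15, 16, 17, 18, 19, 20, 21, 22, 40, 41, 42, 43, 44, 30, 31, 32, 33, 34, 35, 36, 37, 38, 39, 12, 13, 14, 0, 1, 2, 3, 4, 5, 6, 7, 8, 9, 10, 11],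
   [27, 28, 29, 15, 16, 17, 18, 19, 20, 21, 22, 23, 24, 25, 26, 38, 39, 40, 41, 42, 43, 44, 30, 31, 32, 33, 34, 35, 36, 37, 10, 11, 12, 13, 14, 0, 1, 2, 3, 4, 5, 6, 7, 8, 9],
   [25, 26, 27, 28, 29, 15, 16, 17, 18, 19, 20, 21, 22, 23, 24, 42, 43, 44, 30, 31, 32, 33, 34, 35, 36, 37, 38, 39, 40, 41, 8, 9, 10, 11, 12, 13, 14, 0, 1, 2, 3, 4, 5, 6, 7],
   [3, 4, 5, 6, 7, 8, 9, 10, 11, 12, 13, 14, 0, 1, 2, 18, 19, 20, 21, 22, 23, 24, 25, 26, 27, 28, 29, 15, 16, 17, 33, 34, 35, 36, 37, 38, 39, 40, 41, 42, 43, 44, 30, 31, 32]]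

/-- edge colours (22 on the diagonal) -/
def hwC : List (List ℕ) :=
  [
   [22, 0, 3, 21, 9, 8, 10, 8, 1, 4, 3, 5, 21, 1, 14, 15, 14, 0, 5, 10, 12, 17, 9, 18, 16, 20, 7, 19, 4, 11, 17, 12, 6, 18, 11, 19, 15, 20, 2, 16, 7, 6, 2, 13, 13],
   [0, 22, 1, 4, 21, 10, 9, 11, 9, 2, 5, 4, 6, 21, 2, 12, 15, 0, 1, 6, 11, 13, 17, 10, 18, 16, 20, 8, 19, 5, 14, 17, 13, 7, 18, 12, 19, 15, 20, 3, 16, 8, 7, 3, 14],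
   [3, 1, 22, 2, 5, 21, 11, 10, 12, 10, 3, 6, 5, 7, 21, 6, 13, 15, 1, 2, 7, 12, 14, 17, 11, 18, 16, 20, 9, 19, 0, 0, 17, 14, 8, 18, 13, 19, 15, 20, 4, 16, 9, 8, 4],
   [21, 4, 2, 22, 3, 6, 21, 12, 11, 13, 11, 4, 7, 6, 8, 19, 7, 14, 15, 2, 3, 8, 13, 0, 17, 12, 18, 16, 20, 10, 5, 1, 1, 17, 0, 9, 18, 14, 19, 15, 20, 5, 16, 10, 9],
   [9, 21, 5, 3, 22, 4, 7, 21, 13, 12, 14, 12, 5, 8, 7, 11, 19, 8, 0, 15, 3, 4, 9, 14, 1, 17, 13, 18, 16, 20, 10, 6, 2, 2, 17, 1, 10, 18, 0, 19, 15, 20, 6, 16, 11],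
   [8, 10, 21, 6, 4, 22, 5, 8, 21, 14, 13, 0, 13, 6, 9, 20, 12, 19, 9, 1, 15, 4, 5, 10, 0, 2, 17, 14, 18, 16, 12, 11, 7, 3, 3, 17, 2, 11, 18, 1, 19, 15, 20, 7, 16],
   [10, 9, 11, 21, 7, 5, 22, 6, 9, 21, 0, 14, 1, 14, 7, 16, 20, 13, 19, 10, 2, 15, 5, 6, 11, 1, 3, 17, 0, 18, 16, 13, 12, 8, 4, 4, 17, 3, 12, 18, 2, 19, 15, 20, 8],
   [8, 11, 10, 12, 21, 8, 6, 22, 7, 10, 21, 1, 0, 2, 0, 18, 16, 20, 14, 19, 11, 3, 15, 6, 7, 12, 2, 4, 17, 1, 9, 16, 14, 13, 9, 5, 5, 17, 4, 13, 18, 3, 19, 15, 20],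
   [1, 9, 12, 11, 13, 21, 9, 7, 22, 8, 11, 21, 2, 1, 3, 2, 18, 16, 20, 0, 19, 12, 4, 15, 7, 8, 13, 3, 5, 17, 20, 10, 16, 0, 14, 10, 6, 6, 17, 5, 14, 18, 4, 19, 15],
   [4, 2, 10, 13, 12, 14, 21, 10, 8, 22, 9, 12, 21, 3, 2, 17, 3, 18, 16, 20, 1, 19, 13, 5, 15, 8, 9, 14, 4, 6, 15, 20, 11, 16, 1, 0, 11, 7, 7, 17, 6, 0, 18, 5, 19],
   [3, 5, 3, 11, 14, 13, 0, 21, 11, 9, 22, 10, 13, 21, 4, 7, 17, 4, 18, 16, 20, 2, 19, 14, 6, 15, 9, 10, 0, 5, 19, 15, 20, 12, 16, 2, 1, 12, 8, 8, 17, 7, 1, 18, 6],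
   [5, 4, 6, 4, 12, 0, 14, 1, 21, 12, 10, 22, 11, 14, 21, 6, 8, 17, 5, 18, 16, 20, 3, 19, 0, 7, 15, 10, 11, 1, 7, 19, 15, 20, 13, 16, 3, 2, 13, 9, 9, 17, 8, 2, 18],
   [21, 6, 5, 7, 5, 13, 1, 0, 2, 21, 13, 11, 22, 12, 0, 2, 7, 9, 17, 6, 18, 16, 20, 4, 19, 1, 8, 15, 11, 12, 18, 8, 19, 15, 20, 14, 16, 4, 3, 14, 10, 10, 17, 9, 3],
   [1, 21, 7, 6, 8, 6, 14, 2, 1, 3, 21, 14, 12, 22, 13, 13, 3, 8, 10, 17, 7, 18, 16, 20, 5, 19, 2, 9, 15, 12, 4, 18, 9, 19, 15, 20, 0, 16, 5, 4, 0, 11, 11, 17, 10],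
   [14, 2, 21, 8, 7, 9, 7, 0, 3, 2, 4, 21, 0, 13, 22, 13, 14, 4, 9, 11, 17, 8, 18, 16, 20, 6, 19, 3, 10, 15, 11, 5, 18, 10, 19, 15, 20, 1, 16, 6, 5, 1, 12, 12, 17],
   [15, 12, 6, 19, 11, 20, 16, 18, 2, 17, 7, 6, 2, 13, 13, 22, 0, 3, 21, 9, 8, 10, 8, 1, 4, 3, 5, 21, 1, 14, 16, 14, 0, 5, 10, 12, 15, 9, 19, 17, 18, 7, 20, 4, 11],
   [14, 15, 13, 7, 19, 12, 20, 16, 18, 3, 17, 8, 7, 3, 14, 0, 22, 1, 4, 21, 10, 9, 11, 9, 2, 5, 4, 6, 21, 2, 12, 16, 0, 1, 6, 11, 13, 15, 10, 19, 17, 18, 8, 20, 5],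
   [0, 0, 15, 14, 8, 19, 13, 20, 16, 18, 4, 17, 9, 8, 4, 3, 1, 22, 2, 5, 21, 11, 10, 12, 10, 3, 6, 5, 7, 21, 6, 13, 16, 1, 2, 7, 12, 14, 15, 11, 19, 17, 18, 9, 20],
   [5, 1, 1, 15, 0, 9, 19, 14, 20, 16, 18, 5, 17, 10, 9, 21, 4, 2, 22, 3, 6, 21, 12, 11, 13, 11, 4, 7, 6, 8, 20, 7, 14, 16, 2, 3, 8, 13, 0, 15, 12, 19, 17, 18, 10],
   [10, 6, 2, 2, 15, 1, 10, 19, 0, 20, 16, 18, 6, 17, 11, 9, 21, 5, 3, 22, 4, 7, 21, 13, 12, 14, 12, 5, 8, 7, 11, 20, 8, 0, 16, 3, 4, 9, 14, 1, 15, 13, 19, 17, 18],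
   [12, 11, 7, 3, 3, 15, 2, 11, 19, 1, 20, 16, 18, 7, 17, 8, 10, 21, 6, 4, 22, 5, 8, 21, 14, 13, 0, 13, 6, 9, 18, 12, 20, 9, 1, 16, 4, 5, 10, 0, 2, 15, 14, 19, 17],
   [17, 13, 12, 8, 4, 4, 15, 3, 12, 19, 2, 20, 16, 18, 8, 10, 9, 11, 21, 7, 5, 22, 6, 9, 21, 0, 14, 1, 14, 7, 17, 18, 13, 20, 10, 2, 16, 5, 6, 11, 1, 3, 15, 0, 19],
   [9, 17, 14, 13, 9, 5, 5, 15, 4, 13, 19, 3, 20, 16, 18, 8, 11, 10, 12, 21, 8, 6, 22, 7, 10, 21, 1, 0, 2, 0, 19, 17, 18, 14, 20, 11, 3, 16, 6, 7, 12, 2, 4, 15, 1],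
   [18, 10, 17, 0, 14, 10, 6, 6, 15, 5, 14, 19, 4, 20, 16, 1, 9, 12, 11, 13, 21, 9, 7, 22, 8, 11, 21, 2, 1, 3, 2, 19, 17, 18, 0, 20, 12, 4, 16, 7, 8, 13, 3, 5, 15],
   [16, 18, 11, 17, 1, 0, 11, 7, 7, 15, 6, 0, 19, 5, 20, 4, 2, 10, 13, 12, 14, 21, 10, 8, 22, 9, 12, 21, 3, 2, 15, 3, 19, 17, 18, 1, 20, 13, 5, 16, 8, 9, 14, 4, 6],
   [20, 16, 18, 12, 17, 2, 1, 12, 8, 8, 15, 7, 1, 19, 6, 3, 5, 3, 11, 14, 13, 0, 21, 11, 9, 22, 10, 13, 21, 4, 7, 15, 4, 19, 17, 18, 2, 20, 14, 6, 16, 9, 10, 0, 5],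
   [7, 20, 16, 18, 13, 17, 3, 2, 13, 9, 9, 15, 8, 2, 19, 5, 4, 6, 4, 12, 0, 14, 1, 21, 12, 10, 22, 11, 14, 21, 6, 8, 15, 5, 19, 17, 18, 3, 20, 0, 7, 16, 10, 11, 1],
   [19, 8, 20, 16, 18, 14, 17, 4, 3, 14, 10, 10, 15, 9, 3, 21, 6, 5, 7, 5, 13, 1, 0, 2, 21, 13, 11, 22, 12, 0, 2, 7, 9, 15, 6, 19, 17, 18, 4, 20, 1, 8, 16, 11, 12],
   [4, 19, 9, 20, 16, 18, 0, 17, 5, 4, 0, 11, 11, 15, 10, 1, 21, 7, 6, 8, 6, 14, 2, 1, 3, 21, 14, 12, 22, 13, 13, 3, 8, 10, 15, 7, 19, 17, 18, 5, 20, 2, 9, 16, 12],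
   [11, 5, 19, 10, 20, 16, 18, 1, 17, 6, 5, 1, 12, 12, 15, 14, 2, 21, 8, 7, 9, 7, 0, 3, 2, 4, 21, 0, 13, 22, 13, 14, 4, 9, 11, 15, 8, 19, 17, 18, 6, 20, 3, 10, 16],
   [17, 14, 0, 5, 10, 12, 16, 9, 20, 15, 19, 7, 18, 4, 11, 16, 12, 6, 20, 11, 18, 17, 19, 2, 15, 7, 6, 2, 13, 13, 22, 0, 3, 21, 9, 8, 10, 8, 1, 4, 3, 5, 21, 1, 14],
   [12, 17, 0, 1, 6, 11, 13, 16, 10, 20, 15, 19, 8, 18, 5, 14, 16, 13, 7, 20, 12, 18, 17, 19, 3, 15, 8, 7, 3, 14, 0, 22, 1, 4, 21, 10, 9, 11, 9, 2, 5, 4, 6, 21, 2],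
   [6, 13, 17, 1, 2, 7, 12, 14, 16, 11, 20, 15, 19, 9, 18, 0, 0, 16, 14, 8, 20, 13, 18, 17, 19, 4, 15, 9, 8, 4, 3, 1, 22, 2, 5, 21, 11, 10, 12, 10, 3, 6, 5, 7, 21],
   [18, 7, 14, 17, 2, 3, 8, 13, 0, 16, 12, 20, 15, 19, 10, 5, 1, 1, 16, 0, 9, 20, 14, 18, 17, 19, 5, 15, 10, 9, 21, 4, 2, 22, 3, 6, 21, 12, 11, 13, 11, 4, 7, 6, 8],
   [11, 18, 8, 0, 17, 3, 4, 9, 14, 1, 16, 13, 20, 15, 19, 10, 6, 2, 2, 16, 1, 10, 20, 0, 18, 17, 19, 6, 15, 11, 9, 21, 5, 3, 22, 4, 7, 21, 13, 12, 14, 12, 5, 8, 7],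
   [19, 12, 18, 9, 1, 17, 4, 5, 10, 0, 2, 16, 14, 20, 15, 12, 11, 7, 3, 3, 16, 2, 11, 20, 1, 18, 17, 19, 7, 15, 8, 10, 21, 6, 4, 22, 5, 8, 21, 14, 13, 0, 13, 6, 9],
   [15, 19, 13, 18, 10, 2, 17, 5, 6, 11, 1, 3, 16, 0, 20, 15, 13, 12, 8, 4, 4, 16, 3, 12, 20, 2, 18, 17, 19, 8, 10, 9, 11, 21, 7, 5, 22, 6, 9, 21, 0, 14, 1, 14, 7],
   [20, 15, 19, 14, 18, 11, 3, 17, 6, 7, 12, 2, 4, 16, 1, 9, 15, 14, 13, 9, 5, 5, 16, 4, 13, 20, 3, 18, 17, 19, 8, 11, 10, 12, 21, 8, 6, 22, 7, 10, 21, 1, 0, 2, 0],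
   [2, 20, 15, 19, 0, 18, 12, 4, 17, 7, 8, 13, 3, 5, 16, 19, 10, 15, 0, 14, 10, 6, 6, 16, 5, 14, 20, 4, 18, 17, 1, 9, 12, 11, 13, 21, 9, 7, 22, 8, 11, 21, 2, 1, 3],
   [16, 3, 20, 15, 19, 1, 18, 13, 5, 17, 8, 9, 14, 4, 6, 17, 19, 11, 15, 1, 0, 11, 7, 7, 16, 6, 0, 20, 5, 18, 4, 2, 10, 13, 12, 14, 21, 10, 8, 22, 9, 12, 21, 3, 2],
   [7, 16, 4, 20, 15, 19, 2, 18, 14, 6, 17, 9, 10, 0, 5, 18, 17, 19, 12, 15, 2, 1, 12, 8, 8, 16, 7, 1, 20, 6, 3, 5, 3, 11, 14, 13, 0, 21, 11, 9, 22, 10, 13, 21, 4],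
   [6, 8, 16, 5, 20, 15, 19, 3, 18, 0, 7, 17, 10, 11, 1, 7, 18, 17, 19, 13, 15, 3, 2, 13, 9, 9, 16, 8, 2, 20, 5, 4, 6, 4, 12, 0, 14, 1, 21, 12, 10, 22, 11, 14, 21],
   [2, 7, 9, 16, 6, 20, 15, 19, 4, 18, 1, 8, 17, 11, 12, 20, 8, 18, 17, 19, 14, 15, 4, 3, 14, 10, 10, 16, 9, 3, 21, 6, 5, 7, 5, 13, 1, 0, 2, 21, 13, 11, 22, 12, 0],
   [13, 3, 8, 10, 16, 7, 20, 15, 19, 5, 18, 2, 9, 17, 12, 4, 20, 9, 18, 17, 19, 0, 15, 5, 4, 0, 11, 11, 16, 10, 1, 21, 7, 6, 8, 6, 14, 2, 1, 3, 21, 14, 12, 22, 13],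
   [13, 14, 4, 9, 11, 16, 8, 20, 15, 19, 6, 18, 3, 10, 17, 11, 5, 20, 10, 18, 17, 19, 1, 15, 6, 5, 1, 12, 12, 16, 14, 2, 21, 8, 7, 9, 7, 0, 3, 2, 4, 21, 0, 13, 22]]

/-- successor map of the `i`-th factor -/
def hwS (i : ℕ) (v : Fin 45) : Fin 45 := Fin.ofNat 45 ((hwT.getD i []).getD v.val 0)

/-- colour of an edge -/
def hwCol (u v : Fin 45) : ℕ := (hwC.getD u.val []).getD v.val 22

theorem hwCol_symm : ∀ u v : Fin 45, hwCol u v = hwCol v u := by decide +kernel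

theorem hwCol_lt : ∀ u v : Fin 45, hwCol u v < 22 ↔ u ≠ v := by decide +kernel

theorem hwCol_iff : ∀ i : Fin 22, ∀ u v : Fin 45,
    hwCol u v = i.val ↔ (hwS i.val u = v ∨ hwS i.val v = u) := by decide +kernel

theorem hwS_three : ∀ i : Fin 21, ∀ v : Fin 45, hwS i.val (hwS i.val (hwS i.val v)) = v := by
  decide +kernel

theorem hwS_three_ne : ∀ i : Fin 21, ∀ v : Fin 45,
    hwS i.val v ≠ v ∧ hwS i.val (hwS i.val v) ≠ v := by
  decide +kernel

theorem hwS_five : ∀ v : Fin 45, (hwS 21)^[5] v = v := by decide +kernel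

theorem hwS_five_ne : ∀ v : Fin 45, ∀ j : Fin 5, 0 < j.val → (hwS 21)^[j.val] v ≠ v := by
  decide +kernel

/-- A graph whose edges are `{v, σ v}`, with all orbits of `σ` of length `k`, is a `C_k`-factor. -/
theorem isCycleFactor_of_succ {V : Type*} (H : SimpleGraph V) (σ : V → V) (k : ℕ)
    (hk : 3 ≤ k) (hadj : ∀ u v, H.Adj u v ↔ (σ u = v ∨ σ v = u))
    (hit : ∀ v, σ^[k] v = v) (hne : ∀ v, ∀ j, j < k → 0 < j → σ^[j] v ≠ v) :
    IsCycleFactor H k := by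
  have hinj : Function.Injective σ := by
    intro a b hab
    obtain ⟨m, rfl⟩ : ∃ m, k = m + 1 := ⟨k - 1, by omega⟩
    rw [← hit a, ← hit b, Function.iterate_succ_apply, Function.iterate_succ_apply, hab]
  constructor
  · intro v
    obtain ⟨m, rfl⟩ : ∃ m, k = m + 1 := ⟨k - 1, by omega⟩
    have hs : H.neighborSet v = {σ v, σ^[m] v} := by
      ext w
      simp only [mem_neighborSet, hadj, Set.mem_insert_iff, Set.mem_singleton_iff]
      have e : σ w = v ↔ w = σ^[m] v := by
        have := hit v
        rw [Function.iterate_succ_apply'] at this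
        constructor
        · intro h
          apply hinj
          rw [h, this]
        · intro h
          rw [h, this]
      rw [e, eq_comm]
    rw [hs, Set.ncard_pair]
    intro h
    obtain ⟨l, rfl⟩ : ∃ l, m = l + 1 := ⟨m - 1, by omega⟩
    rw [Function.iterate_succ_apply'] at h
    exact hne v l (by omega) (by omega) (hinj h).symm
  · intro v
    have hs : (H.connectedComponentMk v).supp = (fun j => σ^[j] v) '' (Set.Iio k) := by
      ext w
      rw [ConnectedComponent.mem_supp_iff, ConnectedComponent.eq]
      constructor
      · intro h
        have h' := h.symm
        rw [SimpleGraph.reachable_iff_reflTransGen] at h'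
        induction h' with
        | refl => exact ⟨0, by simp; omega, rfl⟩
        | tail hb hc ih =>
          rename_i b c
          have hb' : H.Reachable v b := by rwa [SimpleGraph.reachable_iff_reflTransGen]
          obtain ⟨j, hj, rfl⟩ := ih hb'.symm
          simp only [Set.mem_Iio] at hj
          rcases (hadj _ _).1 hc with h1 | h1
          · by_cases hjk : j + 1 = k
            · refine ⟨0, by simp; omega, ?_⟩
              rw [← h1]
              simp only [← Function.iterate_succ_apply' σ, Nat.succ_eq_add_one, hjk, hit]
              rfl
            · refine ⟨j + 1, by simp; omega, ?_⟩
              rw [← h1]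
              exact Function.iterate_succ_apply' σ j v
          · rcases j with _ | j
            · refine ⟨k - 1, by simp; omega, ?_⟩
              apply hinj
              rw [h1]
              simp only [← Function.iterate_succ_apply' σ]
              rw [show (k - 1).succ = k by omega, hit]
              rfl
            · refine ⟨j, by simp; omega, ?_⟩
              apply hinj
              rw [h1]
              exact (Function.iterate_succ_apply' σ j v).symm
      · rintro ⟨j, -, rfl⟩
        apply Reachable.symm
        induction j with
        | zero => exact Reachable.refl _
        | succ j ih =>
          refine ih.trans (Adj.reachable ?_)
          rw [hadj]
          left
          exact (Function.iterate_succ_apply' σ j v).symm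
    have hlt : ∀ a b, a < b → b < k → σ^[a] v ≠ σ^[b] v := by
      intro a b hab hb h
      obtain ⟨c, rfl⟩ : ∃ c, b = a + c := ⟨b - a, by omega⟩
      rw [Function.iterate_add_apply] at h
      exact hne v c (by omega) (by omega) (hinj.iterate a h).symm
    rw [hs, Set.ncard_image_of_injOn]
    · rw [← Finset.coe_Iio, Set.ncard_coe_finset]
      simp
    · intro a ha b hb hab
      simp only [Set.mem_Iio] at ha hb
      rcases lt_trichotomy a b with h | h | h
      · exact absurd hab (hlt a b h hb)
      · exact h
      · exact absurd hab.symm (hlt b a h ha)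

/-- the `i`-th factor -/
def hwF (i : ℕ) : SimpleGraph (Fin 45) where
  Adj u v := u ≠ v ∧ hwCol u v = i
  symm := ⟨fun u v h => ⟨h.1.symm, by rw [hwCol_symm]; exact h.2⟩⟩
  loopless := ⟨fun _ h => h.1 rfl⟩

theorem hwF_adj (i : ℕ) (hi : i < 22) (u v : Fin 45) :
    (hwF i).Adj u v ↔ (hwS i u = v ∨ hwS i v = u) := by
  rw [← hwCol_iff ⟨i, hi⟩ u v]
  refine ⟨fun h => h.2, fun h => ⟨?_, h⟩⟩
  rw [← hwCol_lt, h]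
  exact hi

theorem stmt_10 : HW 45 3 5 21 1 := by
  refine ⟨⊥, fun _ => rfl, fun h => absurd h (by decide), hwF, ⟨?_, ?_, ?_⟩, ?_, ?_⟩
  · intro i _ u v h
    simpa using h.1
  · intro i _ j _ hij
    rw [Set.disjoint_left]
    intro e
    induction e with
    | _ u v =>
      intro h1 h2
      exact hij (h1.2.symm.trans h2.2)
  · ext e
    induction e with
    | _ u v =>
      simp only [sdiff_bot, mem_edgeSet, top_adj, Set.mem_iUnion, Set.mem_Iio]
      constructor
      · intro h
        exact ⟨hwCol u v, (hwCol_lt u v).2 h, h, rfl⟩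
      · rintro ⟨i, _, h⟩
        exact h.1
  · intro i hi
    refine isCycleFactor_of_succ _ (hwS i) 3 le_rfl (hwF_adj i (by omega))
      (hwS_three ⟨i, hi⟩) ?_
    intro v j hj hj0
    have h := hwS_three_ne ⟨i, hi⟩ v
    interval_cases j
    · exact h.1
    · exact h.2
  · intro i h1 h2
    obtain rfl : i = 21 := by omega
    exact isCycleFactor_of_succ _ (hwS 21) 5 (by norm_num) (hwF_adj 21 (by omega))
      hwS_five (fun v j hj hj0 => hwS_five_ne v ⟨j, hj⟩ hj0)
end

section
/- For every v ≡ 15 (mod 30) with v > 15, there exists a 2-factorization of K_v into (v−3)/2 C_3-factors and exactly 1 C_5-factor. -/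
open SimpleGraph

/-- The graph joining `x` to `σ x`. -/
def cg {V : Type*} (σ : Equiv.Perm V) : SimpleGraph V :=
  SimpleGraph.fromRel (fun x y => σ x = y)

lemma cg_adj {V : Type*} (σ : Equiv.Perm V) (x y : V) :
    (cg σ).Adj x y ↔ x ≠ y ∧ (σ x = y ∨ σ y = x) := by
  simp [cg]

/-- The rotation of the cycles listed by `φ`. -/
def rot {V T : Type*} {k : ℕ} [NeZero k] (φ : T × Fin k ≃ V) : Equiv.Perm V :=
  φ.symm.trans ((Equiv.prodCongr (Equiv.refl T) (Equiv.addRight (1 : Fin k))).trans φ)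

lemma rot_apply {V T : Type*} {k : ℕ} [NeZero k] (φ : T × Fin k ≃ V) (t : T) (r : Fin k) :
    rot φ (φ (t, r)) = φ (t, r + 1) := by
  simp [rot]

lemma cg_factor {V T : Type*} {k : ℕ} [NeZero k] (φ : T × Fin k ≃ V)
    (h1 : ∀ r : Fin k, r + 1 ≠ r) (h2 : ∀ r : Fin k, r + 1 ≠ r - 1)
    (h3 : ∀ r : Fin k, ∃ m : ℕ, r = (m : ℕ) • (1 : Fin k)) :
    IsCycleFactor (cg (rot φ)) k := by
  have adj : ∀ t r, (cg (rot φ)).Adj (φ (t, r)) (φ (t, r + 1)) := by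
    intro t r
    rw [cg_adj, rot_apply]
    refine ⟨?_, Or.inl rfl⟩
    intro h
    have := φ.injective h
    simp only [Prod.mk.injEq, true_and] at this
    exact h1 r this.symm
  constructor
  · intro v
    obtain ⟨⟨t, r⟩, rfl⟩ := φ.surjective v
    have : (cg (rot φ)).neighborSet (φ (t, r)) = {φ (t, r + 1), φ (t, r - 1)} := by
      ext y
      obtain ⟨⟨t', r'⟩, rfl⟩ := φ.surjective y
      simp only [SimpleGraph.mem_neighborSet, Set.mem_insert_iff, Set.mem_singleton_iff]
      constructor
      · intro h
        rw [cg_adj, rot_apply, rot_apply] at h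
        rcases h.2 with h | h
        · exact Or.inl h.symm
        · right
          have := φ.injective h
          simp only [Prod.mk.injEq] at this
          obtain ⟨rfl, rfl⟩ := this
          simp
      · rintro (h | h)
        · rw [h]; exact adj t r
        · rw [h]
          have := adj t (r - 1)
          rw [sub_add_cancel] at this
          exact this.symm
    rw [this, Set.ncard_pair]
    intro h
    have := φ.injective h
    simp only [Prod.mk.injEq, true_and] at this
    exact h2 r this
  · intro v
    obtain ⟨⟨t, r⟩, rfl⟩ := φ.surjective v
    have : ((cg (rot φ)).connectedComponentMk (φ (t, r))).supp
        = Set.range (fun r' : Fin k => φ (t, r')) := by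
      ext y
      rw [SimpleGraph.ConnectedComponent.mem_supp_iff, SimpleGraph.ConnectedComponent.eq]
      constructor
      · rintro ⟨w⟩
        have key : ∀ a b : V, (cg (rot φ)).Walk a b → (φ.symm a).1 = (φ.symm b).1 := by
          intro a b w
          induction w with
          | nil => rfl
          | cons h _ ih =>
            rw [← ih]
            rename_i u v _ _
            obtain ⟨⟨t1, r1⟩, rfl⟩ := φ.surjective u
            obtain ⟨⟨t2, r2⟩, rfl⟩ := φ.surjective v
            rw [cg_adj, rot_apply, rot_apply] at h
            rcases h.2 with h | h
            · have := φ.injective h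
              simp only [Prod.mk.injEq] at this
              simp [this.1]
            · have := φ.injective h
              simp only [Prod.mk.injEq] at this
              simp [this.1]
        have := key _ _ w
        obtain ⟨⟨t', r'⟩, rfl⟩ := φ.surjective y
        simp only [Equiv.symm_apply_apply] at this
        subst this
        exact ⟨r', rfl⟩
      · rintro ⟨r', rfl⟩
        have key : ∀ m : ℕ, ∀ q : Fin k,
            (cg (rot φ)).Reachable (φ (t, q + m • (1 : Fin k))) (φ (t, q)) := by
          intro m
          induction m with
          | zero => intro q; simp
          | succ m ih =>
            intro q
            rw [succ_nsmul, ← add_assoc]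
            exact ((adj t _).symm.reachable).trans (ih q)
        obtain ⟨m, hm⟩ := h3 (r' - r)
        have := key m r
        rw [← hm, add_sub_cancel] at this
        exact this
    rw [this]
    have hinj : Function.Injective (fun r' : Fin k => φ (t, r')) := by
      intro a b h
      have := φ.injective h
      simpa using this
    rw [← Set.image_univ, Set.ncard_image_of_injective _ hinj, Set.ncard_univ]
    simp

lemma hw_of (v α : ℕ) (hv : v = 2 * α + 3) (ι : Type) [Fintype ι] [DecidableEq ι]
    (hι : Fintype.card ι = α)
    (σ : ι → Equiv.Perm (Fin v)) (τ : Equiv.Perm (Fin v))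
    (h3 : ∀ i, IsCycleFactor (cg (σ i)) 3) (h5 : IsCycleFactor (cg τ) 5)
    (cov : ∀ x y, x ≠ y → (∃ i, σ i x = y ∨ σ i y = x) ∨ τ x = y ∨ τ y = x) :
    HW v 3 5 α 1 := by
  classical
  let ρ : Option ι → Equiv.Perm (Fin v) := fun o => o.elim τ σ
  have cov' : ∀ x y, x ≠ y → ∃ o, ρ o x = y ∨ ρ o y = x := by
    intro x y hxy
    rcases cov x y hxy with ⟨i, hi⟩ | h
    · exact ⟨some i, hi⟩
    · exact ⟨none, h⟩
  -- uniqueness by counting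
  have uniq : ∀ x y, x ≠ y → ∀ o o', (ρ o x = y ∨ ρ o y = x) → (ρ o' x = y ∨ ρ o' y = x) →
      o = o' := by
    intro x y hxy o o' ho ho'
    let f : Option ι × Bool → Fin v := fun p => if p.2 then ρ p.1 x else (ρ p.1).symm x
    have hsub : (Finset.univ.erase x) ⊆ Finset.univ.image f := by
      intro z hz
      have hz' : x ≠ z := fun h => by simp [h] at hz
      obtain ⟨o, h | h⟩ := cov' x z hz'
      · exact Finset.mem_image.2 ⟨(o, true), Finset.mem_univ _, by simp [f, h]⟩
      · exact Finset.mem_image.2 ⟨(o, false), Finset.mem_univ _, by simp [f, ← h]⟩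
    have hcard : (Finset.univ.image f).card = (Finset.univ : Finset (Option ι × Bool)).card := by
      apply le_antisymm Finset.card_image_le
      refine le_trans ?_ (Finset.card_le_card hsub)
      rw [Finset.card_erase_of_mem (Finset.mem_univ _)]
      simp [hι]
      omega
    have hinj : Function.Injective f := by
      have := Finset.card_image_iff.1 hcard
      simpa [Set.injOn_univ] using this
    have get : ∀ o, (ρ o x = y ∨ ρ o y = x) → ∃ b, f (o, b) = y := by
      rintro o (h | h)
      · exact ⟨true, by simp [f, h]⟩
      · exact ⟨false, by simp [f, ← h]⟩
    obtain ⟨b, hb⟩ := get o ho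
    obtain ⟨b', hb'⟩ := get o' ho'
    have := hinj (hb.trans hb'.symm)
    simp only [Prod.mk.injEq] at this
    exact this.1
  have eι : Fin α ≃ ι := (Fintype.equivFinOfCardEq hι).symm
  let g : ℕ → Option ι := fun i => if h : i < α then some (eι ⟨i, h⟩) else none
  have ginj : ∀ i < α + 1, ∀ j < α + 1, g i = g j → i = j := by
    intro i hi j hj hij
    by_cases h1 : i < α <;> by_cases h2 : j < α
    · simp [g, h1, h2] at hij; exact hij
    · simp [g, h1, h2] at hij
    · simp [g, h1, h2] at hij
    · omega
  have gsurj : ∀ o, ∃ i < α + 1, g i = o := by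
    intro o
    cases o with
    | none => exact ⟨α, by omega, by simp [g]⟩
    | some i => exact ⟨(eι.symm i : ℕ), by omega, by simp [g]⟩
  refine ⟨⊥, fun _ => rfl, ?_, ?_⟩
  · intro he
    exfalso
    rw [hv] at he
    rcases he with ⟨w, hw⟩
    omega
  · rw [sdiff_bot]
    refine ⟨fun i => cg (ρ (g i)), ⟨fun i _ => le_top, ?_, ?_⟩, ?_, ?_⟩
    · intro i hi j hj hij
      rw [Set.disjoint_left]
      intro e
      induction e using Sym2.ind with
      | _ x y =>
        intro h1 h2
        rw [SimpleGraph.mem_edgeSet, cg_adj] at h1 h2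
        exact hij (ginj i hi j hj (uniq x y h1.1 _ _ h1.2 h2.2))
    · ext e
      induction e using Sym2.ind with
      | _ x y =>
        simp only [SimpleGraph.mem_edgeSet, Set.mem_iUnion, SimpleGraph.top_adj, cg_adj,
          Set.mem_Iio]
        constructor
        · intro hxy
          obtain ⟨o, ho⟩ := cov' x y hxy
          obtain ⟨i, hi, rfl⟩ := gsurj o
          exact ⟨i, hi, hxy, ho⟩
        · rintro ⟨i, _, h, _⟩
          exact h
    · intro i hi
      simp only [g, hi, dif_pos]
      exact h3 _
    · intro i hi _
      have : ¬ i < α := by omega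
      simp only [g, this, dif_neg, not_false_iff]
      exact h5

/-- Variant of `hw_of` for classes given as surjective listings of triangles and pentagons. -/
lemma hw_of_lists (V : Type) [Fintype V] [DecidableEq V] (v α : ℕ) (hV : Fintype.card V = v)
    (hv : v = 2 * α + 3)
    (ι : Type) [Fintype ι] [DecidableEq ι] (hι : Fintype.card ι = α)
    (T3 T5 : Type) [Fintype T3] [Fintype T5] (c3 : Fintype.card T3 * 3 = v)
    (c5 : Fintype.card T5 * 5 = v)
    (φ : ι → T3 × Fin 3 → V) (hφ : ∀ i, Function.Surjective (φ i))
    (ψ : T5 × Fin 5 → V) (hψ : Function.Surjective ψ)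
    (cov : ∀ x y, x ≠ y → (∃ i t r r', φ i (t, r) = x ∧ φ i (t, r') = y) ∨
      ∃ t r, (ψ (t, r) = x ∧ ψ (t, r + 1) = y) ∨ (ψ (t, r) = y ∧ ψ (t, r + 1) = x)) :
    HW v 3 5 α 1 := by
  classical
  have e : V ≃ Fin v := Fintype.equivFinOfCardEq hV
  have bφ : ∀ i, Function.Bijective (φ i) := fun i =>
    (Fintype.bijective_iff_surjective_and_card _).2 ⟨hφ i, by simp [c3, hV]⟩
  have bψ : Function.Bijective ψ :=
    (Fintype.bijective_iff_surjective_and_card _).2 ⟨hψ, by simp [c5, hV]⟩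
  let Φ : ∀ _ : ι, T3 × Fin 3 ≃ Fin v := fun i => (Equiv.ofBijective _ (bφ i)).trans e
  let Ψ : T5 × Fin 5 ≃ Fin v := (Equiv.ofBijective _ bψ).trans e
  have hΦ : ∀ i p, Φ i p = e (φ i p) := fun i p => rfl
  have hΨ : ∀ p, Ψ p = e (ψ p) := fun p => rfl
  refine hw_of v α hv ι hι (fun i => rot (Φ i)) (rot Ψ) (fun i => ?_) ?_ ?_
  · exact cg_factor _ (by decide) (by decide) (fun r => ⟨r, by revert r; decide⟩)
  · exact cg_factor _ (by decide) (by decide) (fun r => ⟨r, by revert r; decide⟩)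
  · intro x y hxy
    have hxy' : e.symm x ≠ e.symm y := fun h => hxy (e.symm.injective h)
    rcases cov _ _ hxy' with ⟨i, t, r, r', h1, h2⟩ | ⟨t, r, h | h⟩
    · left
      refine ⟨i, ?_⟩
      have hx : x = Φ i (t, r) := by rw [hΦ, h1]; simp
      have hy : y = Φ i (t, r') := by rw [hΦ, h2]; simp
      have hr : r ≠ r' := by rintro rfl; exact hxy (hx.trans hy.symm)
      have : r' = r + 1 ∨ r = r' + 1 := by
        clear h1 h2 hx hy
        revert r r'; decide
      rw [hx, hy, rot_apply, rot_apply]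
      rcases this with h | h
      · left; rw [h]
      · right; rw [← h]
    · right; left
      have hx : x = Ψ (t, r) := by rw [hΨ, h.1]; simp
      have hy : y = Ψ (t, r + 1) := by rw [hΨ, h.2]; simp
      rw [hx, hy, rot_apply]
    · right; right
      have hy : y = Ψ (t, r) := by rw [hΨ, h.1]; simp
      have hx : x = Ψ (t, r + 1) := by rw [hΨ, h.2]; simp
      rw [hx, hy, rot_apply]

/-! ### The finite data -/

/-- Label triples of the three coloured classes (left end, middle, right end), packed in base 16:
`[[[1, 5, 1], [2, 3, 9], [9, 8, 10], [10, 4, 2], [14, 6, 14]], [[0, 3, 0], [7, 4, 7], [11, 6, 12], [12, 8, 11], [13, 5, 13]], [[1, 3, 12], [2, 4, 0], [9, 6, 13], [10, 5, 11], [14, 8, 7]]]`. -/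
def labK (k : Fin 3) (i : Fin 5) (r : Fin 3) : Fin 15 :=
  Fin.ofNat 15 (723860828442781338022920752320352881159512820288790865 / 16 ^ (15 * k.val + 3 * i.val + r.val) % 16)

/-- Label triples of the translation-invariant classes, packed in base 16:
`[[[0, 12, 2], [3, 7, 13], [8, 6, 4], [11, 1, 10], [14, 5, 9]], [[0, 13, 14], [2, 5, 10], [3, 11, 8], [4, 6, 9], [12, 7, 1]]]`. -/
def labI (k : Fin 2) (i : Fin 5) (r : Fin 3) : Fin 15 :=
  Fin.ofNat 15 (123507557981812116954882782801638080 / 16 ^ (15 * k.val + 3 * i.val + r.val) % 16)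

/-- Label triples of the classes that use the differences 0, 1, 2, packed in base 16:
`[[[0, 4, 13], [1, 3, 12], [2, 11, 14], [5, 7, 10], [6, 8, 9]], [[0, 4, 8], [1, 6, 14], [2, 5, 12], [3, 7, 11], [9, 10, 13]], [[0, 9, 11], [1, 13, 14], [2, 4, 10], [3, 5, 6], [7, 8, 12]], [[0, 2, 5], [1, 10, 11], [3, 8, 13], [4, 9, 14], [6, 7, 12]]]`. -/
def labZ (k : Fin 4) (i : Fin 5) (r : Fin 3) : Fin 15 :=
  Fin.ofNat 15 (1376428792316943775710543750910180710065316706885021741805154332703923520 / 16 ^ (15 * k.val + 3 * i.val + r.val) % 16)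

/-- Offsets (plus 2) of the classes that use the differences 0, 1, 2, packed in base 8:
`[[[0, 1, 1], [0, -1, -2], [0, 0, 0], [0, 0, 0], [0, 0, 1]], [[0, 0, 0], [0, 0, 0], [0, 1, -1], [0, 1, 1], [0, -2, -2]], [[0, -1, 0], [0, 1, 1], [0, 0, 0], [0, 0, 0], [0, 0, 0]], [[0, 2, 1], [0, 1, -1], [0, -2, -2], [0, -2, -2], [0, 0, -1]]]` before adding 2. -/
def offZn (k : Fin 4) (i : Fin 5) (r : Fin 3) : ℕ :=
  245450455832787443780524324007339797902849776588166362 / 8 ^ (15 * k.val + 3 * i.val + r.val) % 8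

/-- The base pentagon. -/
def labC : Fin 5 → Fin 15 := ![0, 6, 13, 7, 14]

/-- The action of the group of order 3 on labels. -/
def tr (z : Fin 3) : Fin 15 := Fin.ofNat 15 (5 * z.val)

/-- The two admissible moves on colours. -/
def mvA : Equiv.Perm (Fin 3) := Equiv.swap 0 1

def mvB : Equiv.Perm (Fin 3) := Equiv.addRight 1

lemma surjK : ∀ (g : Fin 3) (l : Fin 15), (∀ k, ∃ i, labK k i 1 + tr g = l) ∨
    (∀ k, ((∃ i, labK k i 2 + tr g = l) ∨ ∃ i, labK (mvA k) i 0 + tr g = l) ∧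
      ((∃ i, labK k i 2 + tr g = l) ∨ ∃ i, labK (mvB k) i 0 + tr g = l)) := by
  decide +kernel

lemma surjI : ∀ (j : Fin 2) (z : Fin 3) (l : Fin 15), ∃ i r, labI j i r + tr z = l := by
  decide +kernel

lemma surjZ : ∀ (j : Fin 4) (z : Fin 3) (l : Fin 15), ∃ i r, labZ j i r + tr z = l := by
  decide +kernel

lemma surjC : ∀ (l : Fin 15), ∃ i r, labC r + tr i = l := by
  decide +kernel

/-- The ordered pair of labels occurs in a coloured class between two given roles. -/
def KC (r r' : Fin 3) (a b : Fin 15) : Prop :=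
  ∃ (g k : Fin 3) (i : Fin 5), labK k i r + tr g = a ∧ labK k i r' + tr g = b

instance (r r' : Fin 3) (a b : Fin 15) : Decidable (KC r r' a b) := by
  unfold KC; infer_instance

def IC (r r' : Fin 3) (a b : Fin 15) : Prop :=
  ∃ (j : Fin 2) (z : Fin 3) (i : Fin 5), labI j i r + tr z = a ∧ labI j i r' + tr z = b

instance (r r' : Fin 3) (a b : Fin 15) : Decidable (IC r r' a b) := by
  unfold IC; infer_instance

def ZC (e : ℕ) (a b : Fin 15) : Prop :=
  ∃ (j : Fin 4) (z : Fin 3) (i : Fin 5) (r : Fin 3), labZ j i r + tr z = a ∧ ∃ r' : Fin 3,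
    labZ j i r' + tr z = b ∧ offZn j i r' = offZn j i r + e

instance (e : ℕ) (a b : Fin 15) : Decidable (ZC e a b) := by
  unfold ZC; infer_instance

def SC (a b : Fin 15) : Prop := (KC 0 1 a b ∨ KC 1 2 a b) ∨ IC 0 1 a b ∨ IC 1 2 a b

instance (a b : Fin 15) : Decidable (SC a b) := by
  unfold SC; infer_instance

def TC (a b : Fin 15) : Prop := KC 0 2 a b ∨ IC 0 2 a b

instance (a b : Fin 15) : Decidable (TC a b) := by
  unfold TC; infer_instance

lemma covST : ∀ a b : Fin 15, (SC a b ∧ SC b a) ∨ (TC a b ∧ TC b a) := by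
  decide +kernel

lemma covI1 : ∀ a b : Fin 15, (IC 0 1 a b ∨ IC 1 2 a b) → ZC 1 a b := by
  decide +kernel

lemma covI2 : ∀ a b : Fin 15, IC 0 2 a b → ZC 2 a b := by
  decide +kernel

lemma covZ : ∀ a b : Fin 15, a ≠ b → ZC 0 a b ∨
    ∃ (i : Fin 3) (r : Fin 5), (labC r + tr i = a ∧ labC (r + 1) + tr i = b) ∨
      (labC r + tr i = b ∧ labC (r + 1) + tr i = a) := by
  decide +kernel

/-! ### Colourings of the cycles of step `t` -/

def word : ℕ → Equiv.Perm (Fin 3)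
  | 0 => 1
  | 1 => mvB
  | 2 => mvB * mvB
  | (k + 3) => mvA ^ k

lemma mvA_sq : mvA * mvA = 1 := by decide

lemma mvB_cube : mvB * (mvB * mvB) = 1 := by decide

lemma word_succ (k : ℕ) : word (k + 1) = mvA * word k ∨ word (k + 1) = mvB * word k := by
  match k with
  | 0 => right; simp [word]
  | 1 => right; simp [word]
  | 2 => right; simp [word, mvB_cube]
  | (k + 3) => left; simp only [word]; rw [pow_succ']

lemma word_last (l : ℕ) (hl : Odd l) (h3 : 3 ≤ l) :
    word 0 = mvA * word (l - 1) ∨ word 0 = mvB * word (l - 1) := by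
  obtain ⟨m, rfl⟩ := hl
  obtain ⟨m, rfl⟩ : ∃ q, m = q + 1 := ⟨m - 1, by omega⟩
  cases m with
  | zero => right; simp [word, mvB_cube]
  | succ m =>
    left
    have : 2 * (m + 1 + 1) + 1 - 1 = (2 * m + 1) + 3 := by omega
    rw [this]
    simp only [word]
    rw [← pow_succ', show 2 * m + 1 + 1 = 2 * (m + 1) by ring, pow_mul, pow_two, mvA_sq, one_pow]

lemma exists_colouring (G : Type) [AddCommGroup G] [Finite G] (t : G)
    (hodd : Odd (addOrderOf t)) (h3 : 3 ≤ addOrderOf t) :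
    ∃ c : G → Equiv.Perm (Fin 3), ∀ x, c (x + t) = mvA * c x ∨ c (x + t) = mvB * c x := by
  classical
  let rep : G → G := fun x => (QuotientAddGroup.mk x : G ⧸ AddSubgroup.zmultiples t).out
  have hrep : ∀ x, ∃ k, k < addOrderOf t ∧ x = rep x + k • t := by
    intro x
    have h : (QuotientAddGroup.mk (rep x) : G ⧸ AddSubgroup.zmultiples t) = QuotientAddGroup.mk x :=
      Quotient.out_eq _
    rw [QuotientAddGroup.eq] at h
    rw [mem_zmultiples_iff_mem_range_addOrderOf] at h
    obtain ⟨k, hk, hk'⟩ := Finset.mem_image.1 h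
    refine ⟨k, Finset.mem_range.1 hk, ?_⟩
    rw [hk']
    abel
  choose k hk hx using hrep
  have hrt : ∀ x, rep (x + t) = rep x := by
    intro x
    have : (QuotientAddGroup.mk (x + t) : G ⧸ AddSubgroup.zmultiples t) = QuotientAddGroup.mk x := by
      rw [QuotientAddGroup.eq]
      simp
    simp only [rep, this]
  have hstep : ∀ x, k (x + t) ≡ k x + 1 [MOD addOrderOf t] := by
    intro x
    rw [← nsmul_eq_nsmul_iff_modEq]
    have h1 := hx (x + t)
    rw [hrt] at h1
    have h2 := hx x
    rw [add_nsmul, one_nsmul]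
    have : rep x + k (x + t) • t = rep x + (k x • t + t) := by
      rw [← h1, ← add_assoc, ← h2]
    exact add_left_cancel this
  refine ⟨fun x => word (k x), fun x => ?_⟩
  have h := hstep x
  have h1 := hk x
  have h2 := hk (x + t)
  show word (k (x + t)) = mvA * word (k x) ∨ word (k (x + t)) = mvB * word (k x)
  by_cases hlt : k x + 1 < addOrderOf t
  · have : k (x + t) = k x + 1 := Nat.ModEq.eq_of_lt_of_lt h h2 hlt
    rw [this]
    exact word_succ _
  · have hkx : k x = addOrderOf t - 1 := by omega
    have : k (x + t) = 0 := by
      have h' : k (x + t) ≡ 0 [MOD addOrderOf t] := by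
        refine h.trans ?_
        rw [hkx, Nat.sub_add_cancel (by omega)]
        simp [Nat.ModEq]
      exact Nat.ModEq.eq_of_lt_of_lt h' h2 (by omega)
    rw [this, hkx]
    exact word_last _ hodd h3

/-! ### Assembling -/

lemma hw_all (h : ℕ) : HW (30 * h + 45) 3 5 (15 * h + 21) 1 := by
  classical
  let n := 2 * h + 3
  have hn : n = 2 * h + 3 := rfl
  have : NeZero n := ⟨by omega⟩
  -- half of the nonzero residues
  let s : Fin (h + 1) → ZMod n := fun i => ((i.val + 1 : ℕ) : ZMod n)
  have hhalf : ∀ e : ZMod n, e ≠ 0 → ∃ i, e = s i ∨ e = - s i := by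
    intro e he
    have hlt := ZMod.val_lt e
    have hpos : e.val ≠ 0 := by rwa [Ne, ZMod.val_eq_zero]
    by_cases hle : e.val ≤ h + 1
    · refine ⟨⟨e.val - 1, by omega⟩, Or.inl ?_⟩
      simp only [s]
      rw [Nat.sub_add_cancel (by omega), ZMod.natCast_zmod_val]
    · refine ⟨⟨n - e.val - 1, by omega⟩, Or.inr ?_⟩
      simp only [s]
      rw [Nat.sub_add_cancel (by omega), Nat.cast_sub hlt.le, ZMod.natCast_zmod_val]
      simp
  have htwo : ∀ e : ZMod n, ∃ d, e = d + d := by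
    intro e
    refine ⟨e * ((h + 2 : ℕ) : ZMod n), ?_⟩
    have h1 : ((n : ℕ) : ZMod n) = 0 := ZMod.natCast_self n
    rw [hn] at h1
    have : ((h + 2 : ℕ) : ZMod n) + ((h + 2 : ℕ) : ZMod n) = 1 := by
      have h2 : ((2 * h + 3 : ℕ) : ZMod n) + 1 = 1 := by rw [h1]; simp
      rw [← h2]; push_cast; ring
    rw [← mul_add, this, mul_one]
  have hcol : ∀ i : Fin (h + 1), ∃ c : ZMod n → Equiv.Perm (Fin 3),
      ∀ x, c (x + (s i + s i)) = mvA * c x ∨ c (x + (s i + s i)) = mvB * c x := by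
    intro i
    have hdvd : addOrderOf (s i + s i) ∣ n := by
      rw [addOrderOf_dvd_iff_nsmul_eq_zero]; simp
    have hodd : Odd (addOrderOf (s i + s i)) :=
      Odd.of_dvd_nat ⟨h + 1, by omega⟩ hdvd
    apply exists_colouring _ _ hodd
    have h1 : addOrderOf (s i + s i) ≠ 1 := by
      rw [Ne, AddMonoid.addOrderOf_eq_one_iff]
      simp only [s]
      rw [← Nat.cast_add, ZMod.natCast_eq_zero_iff]
      have hi := i.isLt
      rintro ⟨q, hq⟩
      rcases q with _ | _ | q
      · omega
      · omega
      · have : n * (q + 1 + 1) = n * q + n + n := by ring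
        have := Nat.zero_le (n * q)
        omega
    obtain ⟨m, hm⟩ := hodd
    omega
  choose col hcol using hcol
  let ctr : Fin 3 → ZMod n → ZMod n := fun r d => ![-d, 0, d] r
  have ctr0 : ∀ d, ctr 0 d = -d := fun d => rfl
  have ctr1 : ∀ d, ctr 1 d = 0 := fun d => rfl
  have ctr2 : ∀ d, ctr 2 d = d := fun d => rfl
  let φ : (Fin 4 × Fin 3) ⊕ ((Fin 2 × Fin 3) × Fin h) ⊕ ((Fin 3 × Fin 3) × Fin (h + 1)) →
      (ZMod n × Fin 5) × Fin 3 → ZMod n × Fin 15 := fun c p =>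
    match c with
    | Sum.inl (j, z) => (p.1.1 + ((offZn j p.1.2 p.2 : ℕ) : ZMod n), labZ j p.1.2 p.2 + tr z)
    | Sum.inr (Sum.inl ((j, z), i)) => (p.1.1 + ctr p.2 (s i.succ), labI j p.1.2 p.2 + tr z)
    | Sum.inr (Sum.inr ((g, κ), i)) =>
      (p.1.1 + ctr p.2 (s i), labK (col i p.1.1 κ) p.1.2 p.2 + tr g)
  have φZ : ∀ j z x i r, φ (Sum.inl (j, z)) ((x, i), r) =
      (x + ((offZn j i r : ℕ) : ZMod n), labZ j i r + tr z) := fun _ _ _ _ _ => rfl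
  have φI : ∀ j z q x i r, φ (Sum.inr (Sum.inl ((j, z), q))) ((x, i), r) =
      (x + ctr r (s q.succ), labI j i r + tr z) := fun _ _ _ _ _ _ => rfl
  have φK : ∀ g κ q x i r, φ (Sum.inr (Sum.inr ((g, κ), q))) ((x, i), r) =
      (x + ctr r (s q), labK (col q x κ) i r + tr g) := fun _ _ _ _ _ _ => rfl
  let ψ : (ZMod n × Fin 3) × Fin 5 → ZMod n × Fin 15 := fun p =>
    (p.1.1, labC p.2 + tr p.1.2)
  have hψ : ∀ x i r, ψ ((x, i), r) = (x, labC r + tr i) := fun _ _ _ => rfl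
  -- coverage of a given difference
  let Cov : ZMod n × Fin 15 → ZMod n × Fin 15 → Prop := fun x y =>
    ∃ c t r r', φ c (t, r) = x ∧ φ c (t, r') = y
  have Cov_symm : ∀ x y, Cov x y → Cov y x := by
    rintro x y ⟨c, t, r, r', h1, h2⟩
    exact ⟨c, t, r', r, h2, h1⟩
  have covZ' : ∀ (e : ℕ) a b x, ZC e a b → Cov (x, a) (x + (e : ZMod n), b) := by
    rintro e a b x ⟨j, z, i, r, h1, r', h2, h3⟩
    refine ⟨Sum.inl (j, z), (x - ((offZn j i r : ℕ) : ZMod n), i), r, r', ?_, ?_⟩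
    · rw [φZ, h1, sub_add_cancel]
    · rw [φZ, h2, h3]; push_cast; congr 1; ring
  have covK' : ∀ r r' q a b x, KC r r' a b →
      Cov (x, a) (x - ctr r (s q) + ctr r' (s q), b) := by
    rintro r r' q a b x ⟨g, k, i, h1, h2⟩
    refine ⟨Sum.inr (Sum.inr ((g, (col q (x - ctr r (s q))).symm k), q)),
      (x - ctr r (s q), i), r, r', ?_, ?_⟩
    · rw [φK, Equiv.apply_symm_apply, h1, sub_add_cancel]
    · rw [φK, Equiv.apply_symm_apply, h2]
  have covI' : ∀ r r' (q : Fin h) a b x, IC r r' a b →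
      Cov (x, a) (x - ctr r (s q.succ) + ctr r' (s q.succ), b) := by
    rintro r r' q a b x ⟨j, z, i, h1, h2⟩
    refine ⟨Sum.inr (Sum.inl ((j, z), q)), (x - ctr r (s q.succ), i), r, r', ?_, ?_⟩
    · rw [φI, h1, sub_add_cancel]
    · rw [φI, h2]
  have s0 : s 0 = 1 := by simp [s]
  have covS : ∀ q a b x, SC a b → Cov (x, a) (x + s q, b) := by
    rintro q a b x ((hk | hk) | hi)
    · have := covK' 0 1 q a b x hk
      simpa [ctr0, ctr1] using this
    · have := covK' 1 2 q a b x hk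
      simpa [ctr1, ctr2] using this
    · induction q using Fin.cases with
      | zero =>
        have := covZ' 1 a b x (covI1 a b hi)
        simpa [s0] using this
      | succ q =>
        rcases hi with hi | hi
        · have := covI' 0 1 q a b x hi
          simpa [ctr0, ctr1] using this
        · have := covI' 1 2 q a b x hi
          simpa [ctr1, ctr2] using this
  have covT : ∀ q a b x, TC a b → Cov (x, a) (x + (s q + s q), b) := by
    rintro q a b x (hk | hi)
    · have := covK' 0 2 q a b x hk
      simpa [ctr0, ctr2, add_assoc] using this
    · induction q using Fin.cases with
      | zero =>
        have := covZ' 2 a b x (covI2 a b hi)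
        rw [s0, one_add_one_eq_two]
        simpa using this
      | succ q =>
        have := covI' 0 2 q a b x hi
        simpa [ctr0, ctr2, add_assoc] using this
  have covMain : ∀ x y a b, x ≠ y → Cov (x, a) (y, b) := by
    intro x y a b hxy
    have he : y - x ≠ 0 := sub_ne_zero.2 hxy.symm
    rcases covST a b with ⟨h1, h2⟩ | ⟨h1, h2⟩
    · obtain ⟨q, hq | hq⟩ := hhalf _ he
      · have := covS q a b x h1
        rwa [← hq, add_sub_cancel] at this
      · have := covS q b a y h2
        have hq' : y + s q = x := by
          rw [← neg_eq_iff_eq_neg.2 hq]; ring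
        rw [hq'] at this
        exact Cov_symm _ _ this
    · obtain ⟨d, hd⟩ := htwo (y - x)
      have hd0 : d ≠ 0 := by rintro rfl; exact he (by simpa using hd)
      obtain ⟨q, hq | hq⟩ := hhalf _ hd0
      · have := covT q a b x h1
        rwa [← hq, ← hd, add_sub_cancel] at this
      · have := covT q b a y h2
        have hq' : y + (s q + s q) = x := by
          have : s q = -d := by rw [hq, neg_neg]
          rw [this]
          have : y = x + (d + d) := by rw [← hd]; ring
          rw [this]; ring
        rw [hq'] at this
        exact Cov_symm _ _ this
  refine hw_of_lists (ZMod n × Fin 15) _ _ ?_ ?_ _ ?_ (ZMod n × Fin 5) (ZMod n × Fin 3) ?_ ?_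
    φ ?_ ψ ?_ ?_
  · simp [ZMod.card, hn]; ring
  · ring
  · simp; ring
  · simp [ZMod.card, hn]; ring
  · simp [ZMod.card, hn]; ring
  · rintro (⟨j, z⟩ | ⟨⟨j, z⟩, q⟩ | ⟨⟨g, κ⟩, q⟩) ⟨y, l⟩
    · obtain ⟨i, r, hi⟩ := surjZ j z l
      refine ⟨((y - ((offZn j i r : ℕ) : ZMod n), i), r), ?_⟩
      rw [φZ, hi, sub_add_cancel]
    · obtain ⟨i, r, hi⟩ := surjI j z l
      refine ⟨((y - ctr r (s q.succ), i), r), ?_⟩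
      rw [φI, hi, sub_add_cancel]
    · rcases surjK g l with hm | he
      · obtain ⟨i, hi⟩ := hm (col q y κ)
        exact ⟨((y, i), 1), by rw [φK, hi, ctr1, add_zero]⟩
      · have hc := he (col q (y - s q) κ)
        have hs := hcol q (y - s q)
        have hy : y - s q + (s q + s q) = y + s q := by ring
        rw [hy] at hs
        have : (∃ i, labK (col q (y - s q) κ) i 2 + tr g = l) ∨
            ∃ i, labK (col q (y + s q) κ) i 0 + tr g = l := by
          rcases hs with hs | hs
          · rw [hs]; exact hc.1
          · rw [hs]; exact hc.2
        rcases this with ⟨i, hi⟩ | ⟨i, hi⟩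
        · exact ⟨((y - s q, i), 2), by rw [φK, hi, ctr2, sub_add_cancel]⟩
        · exact ⟨((y + s q, i), 0), by rw [φK, hi, ctr0, add_neg_cancel_right]⟩
  · rintro ⟨y, l⟩
    obtain ⟨i, r, hi⟩ := surjC l
    exact ⟨((y, i), r), by rw [hψ, hi]⟩
  · rintro ⟨x, a⟩ ⟨y, b⟩ hxy
    by_cases hx : x = y
    · subst hx
      have hab : a ≠ b := fun h => hxy (by rw [h])
      rcases covZ a b hab with hz | ⟨i, r, hc | hc⟩
      · left
        have := covZ' 0 a b x hz
        rw [Nat.cast_zero, add_zero] at this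
        exact this
      · right
        exact ⟨(x, i), r, Or.inl ⟨by rw [hψ, hc.1], by rw [hψ, hc.2]⟩⟩
      · right
        exact ⟨(x, i), r, Or.inr ⟨by rw [hψ, hc.1], by rw [hψ, hc.2]⟩⟩
    · exact Or.inl (covMain x y a b hx)

theorem stmt_12 (v : ℕ) (hv : v % 30 = 15) (hv15 : 15 < v) :
    HW v 3 5 ((v - 3) / 2) 1 := by
  obtain ⟨h, rfl⟩ : ∃ h, v = 30 * h + 45 := ⟨(v - 45) / 30, by omega⟩
  have e : (30 * h + 45 - 3) / 2 = 15 * h + 21 := by omega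
  rw [e]
  exact hw_all h
end

section
/- For every pair of nonnegative integers (α, β) with α + β = 14, there exists a partition of the edge set of K_30 minus a perfect matching into α C_3-factors and β C_5-factors. That is, HWP(30; 3, 5) = {(α, β) : α + β = 14}. -/
open SimpleGraph

/-- The successor of the vertex `u` in the factor with code `c`. -/
def nx (c u : ℕ) : ℕ := c / 30 ^ u % 30

/-- The cycle length of the `i`-th factor. -/
def cyLen (a i : ℕ) : ℕ := if i < a then 3 else 5

/-- A fast test that a list has no repetitions and avoids the elements of the bit mask `m`. -/
def ndMask : List ℕ → ℕ → Bool
  | [], _ => true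
  | x :: xs, m => match Nat.testBit m x with
    | true => false
    | false => match m ||| 2 ^ x with
      | 0 => false
      | mm + 1 => ndMask xs (mm + 1)

theorem ndMask_sound : ∀ (l : List ℕ) (m : ℕ), ndMask l m = true →
    l.Nodup ∧ ∀ x ∈ l, Nat.testBit m x = false
  | [], _, _ => by simp
  | x :: xs, m, h => by
    rw [ndMask] at h
    split at h
    · simp at h
    · rename_i hx
      split at h
      · simp at h
      · rename_i mm hm
        obtain ⟨h1, h2⟩ := ndMask_sound xs (mm + 1) h
        have h3 : ∀ y ∈ xs, Nat.testBit m y = false ∧ x ≠ y := by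
          intro y hy
          have h4 := h2 y hy
          have h5 : (m ||| 2 ^ x).testBit y = false := by
            rw [← h4]; exact congrArg (fun t => Nat.testBit t y) hm
          rw [Nat.testBit_or, Nat.testBit_two_pow] at h5
          simpa using h5
        refine ⟨List.nodup_cons.2 ⟨fun hmem => (h3 x hmem).2 rfl, h1⟩, ?_⟩
        intro y hy
        rcases List.mem_cons.1 hy with rfl | hy
        · exact hx
        · exact (h3 y hy).1

/-- The computational check of a decomposition. -/
def hwCheck (a : ℕ) (L : List ℕ) : Prop :=
  ∀ u < 30, (∀ i < 14, (nx (L.getD i 0))^[cyLen a i] u = u) ∧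
    ndMask (u :: (List.range 14).flatMap
      (fun i => [nx (L.getD i 0) u, (nx (L.getD i 0))^[cyLen a i - 1] u])) 0 = true

instance (a : ℕ) (L : List ℕ) : Decidable (hwCheck a L) := by
  unfold hwCheck; infer_instance

/-- `hwCodes α` lists the codes of the 14 factors of a decomposition with `α` triangle factors. The code
of a factor is the number whose base 30 digit at position `u` is the successor of the vertex `u`. -/
def hwCodes : ℕ → List ℕ
  | 0 => [
      178430819413587288530725372784146371332210761,
      142932343980258648980216708954998330122182657,
      148888202658029485085986388858014839949413692,
      21054314429583069162122191170951190622800416,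
      122744789720977585577266360215627804133978769,
      189292903187513597153488577282696800524800865,
      126826382852681732240550360972641237486228907,
      71497510835664942587448993511371426359605158,
      93074323419791484067086406981007972585192677,
      159253296347161428357528122619643281024602690,
      48058757662648861791849630953148723983264152,
      7623126819535110905807229545248367941562501,
      28758433828429603751771393728185529849512979,
      46250018805474393217368667431338233977492158]
  | 1 => [
      49454359818719057561712216626450525112333179,
      36436942514593266071217941570085173182253869,
      178430819168490414039084234274855480109613692,
      77891259095584218082062795529755629256059036,
      116951254842120011449106041787241542224594269,
      15488000662937378896519592986021768413230874,
      59957305869871256948786947160856663926664010,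
      158651650257983096085484661875688289408808242,
      31113917364329064110913139800715583342585211,
      180456478810168810059450273603002898345598546,
      66480953887748712807391145930590978690094321,
      148508045733239581143285998876748137024167573,
      103168424899313033788526928672588112619265124,
      12641603154227633832852414979711689739137020]
  | 2 => [
      21054311752995406135448176545529199249216088,
      56552779003985345035122217506808662334579726,
      178430819168490414039083819201129290108910761,
      63652437279042847557897717377430272724090071,
      134372575466469005207035763385895996991456758,
      126345355202585060060179743156458736807905684,
      91419894915916994192942351345270637073003802,
      38795347896108070263329866059538609345552017,
      107187992645311086107187859248464341507498460,
      69508012183606491986189552092405881722531325,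
      33428679413025948665871495443882799609142693,
      186395531274998739053030347330192964158218744,
      5590055151189938416442959396999886442345617,
      140486143117637742296224195350263395004806446]
  | 3 => [
      84952827069709190839572460903425512734843524,
      63652434647957468537577963597847073188259036,
      163048190403431025182833042284930829021703347,
      92051252976471636673575397638367390125669381,
      143947982631949355388525698526397339054099347,
      173401435794962326589503877779086208357278841,
      60720820899358318194846971600629941480803175,
      181595298278180532820036731690446545769598192,
      101787979524650593711401566724706923923283713,
      114500433445313094555276108180190364778722282,
      147854634892489200300775062491313221493606408,
      117881254420672820192872891886411822498530199,
      43388030336928641635388764655117796655604278,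
      37934613987170187322894357071327891750666295]
  | 4 => [
      36436935500980897413349353760570240629364214,
      127549720813471869466467024274694657205871105,
      92051248011228837445323804244872725810779726,
      938468297010161995114464309695597858174559,
      139066280677194736333950637815066852039326948,
      61264235591599614460638056442812842806761398,
      196753713066267362704350642955905075999740391,
      144758233823349877162883470510277248964345167,
      26131841873645263350610458982370345678792967,
      181119779626208145768206342406380172036150571,
      87523792574539197507238124334493722332950563,
      162119808595352370481242115783493888280254840,
      134054142054147512793399187963584225107478643,
      115609275276256648763134035774794485017347238]
  | 5 => [
      93415740972278722984216587940201888685350984,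
      132987238627480647213687243153700658761167313,
      83640224160633012553096940660722799214907337,
      45612876210716688109624615043746598699853566,
      105824041645753078242641860000498913345444935,
      49454363323119428784297435756515571504002140,
      184386673708831072947016919201146371332913692,
      6894325513938520002113284861779384590691795,
      99150906623904914365341921895510240125669381,
      110829210672815264798098989117201600394355714,
      3402686779130286856630850893914000031174208,
      74865074961437863045640871594019132489264189,
      194140689889892806970122158861206716493158977,
      65225039037511920014377333940705522752407264]
  | 6 => [
      56552783386512288582997960292470883188961967,
      119569127134484576007397144356992318430579050,
      92842311971266583789649508968788869880459449,
      115784395427922439008734272300345143745871261,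
      186334163186435048009658749657666313697475781,
      3748987077190616047356493797719292575511370,
      99150899319693401167755895343608341347991795,
      84952832620962257974936532563832747181710761,
      178430819168490414039084234274855480109613692,
      8188404298511731847732067310281915887800754,
      46821190475894868579269591359987348789460425,
      142073333987803017806330843998966725748015693,
      151477080424153101498330792662685974310408738,
      20663537746617855582234630207311787658695577]
  | 7 => [
      71935406843898467062596483878349130642771105,
      120451297537794870787565874256229696269781450,
      20647158830729427515473964269014900949838567,
      8840900402418959604214057711667210705294947,
      65290387376444719380103838236520243411486363,
      112791024975455565564541788076365814044293830,
      96572236757702863441196805595548559436313359,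
      184386670201186347028119643461195388741191795,
      178430819168490403952792687857855480108910761,
      136052668839822875216938352281368450740768792,
      142433077868275808016471929541432928582566709,
      162269337528138972181332782434977245385904058,
      104224838299505863137572069918258148203924697,
      45476657213577204017589512306271687939074362]
  | 8 => [
      77891263478111229764731868957450939258433179,
      113389729901288690850071115217390378747895398,
      99150900439672513460956617410919098185616088,
      55770028134126398694708054314711615016734466,
      33071532312498661033373423672328142392221922,
      141364599335192929617141169667600040015895606,
      130215142518867815094525546997075417439956120,
      173198327134097808024524191516198590447136551,
      184386673463734188369083819201146371332210761,
      50946713912201605543222231882531526393318522,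
      94263136076292712782491345502156753159054114,
      158408949073870638752063001706849432729261208,
      23832737801905046691744806031050743650439197,
      70091989313772460383239406210190218266609353]
  | 9 => [
      6894324298192964419627795536320837190090071,
      42392790088340795875122712208131710412879726,
      99150900780535675004554225082211898589371105,
      13955888522820861727515076545451145973353869,
      162478745296036580075939134223591976277397672,
      145966091168739297002795389542612900191863599,
      62367409770458523359767113839674077455745774,
      25101730641857483020178950314058789910376029,
      108163036972376814588080748437247311477818658,
      40254171457547155459052571494119278928418930,
      185229634456855331214665513066542719052405844,
      176504087826736393385338253097940263529163115,
      154944229993671674799854765818541523876781381,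
      125821796673400903241880575511165688920579366]
  | 10 => [
      54747189957185909099903676709915294696922945,
      105331902215870077530515761248355392631826296,
      78689779266527636260199981308253244178926833,
      99559100291899089209347885291493877091942941,
      111396853642046986625163702602712536432426167,
      34908256939140677237345233784512354723244504,
      24891741911135627464911970509267193056972625,
      136178555260282128480692591545462343433316697,
      180520902328259254815476192407766854723638869,
      69557329597063780470252031114902193433303552,
      141749067307560784029997039359955808561236623,
      12509467132963355931358290144603680732242956,
      176492576099704829343968009953286473691426630,
      151167155966836040664183560750633412466936834]
  | 11 => [
      39035408257250480260683625066915069865829681,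
      148591897492154913165250005623898647699028372,
      141142840750735658087571686333998632694989095,
      120130755971005902972243631006355532573810782,
      110873127731304399512380447816267283938056391,
      124278176399265026959678281006731594146292921,
      29404608484429119135025352885344376100775589,
      65673420364432654218828834790227834747405166,
      20455634014640003761963985826478706837965927,
      105926500450463118203417136140257756863115766,
      96527726304318856447241228065619416105460933,
      132537004353315599901568303940646751577645088,
      71278315011297307392077589124003854053477076,
      86537696509298115463201084008012173328450238]
  | 12 => [
      21734801115545883302483127339689780020298449,
      41470322919641650224888665979132783031556266,
      15823181838292366553326871618920087719425932,
      35697484665047465733812881701353139909115897,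
      48568505903677638411393508329147708949014850,
      116771115171928024813559283306426938641723068,
      10083995501489196708489779758635821020379978,
      69413035128477992388160194103121602529932776,
      30541373927334100150814556017411194122916724,
      99776375131621960100053368915133960557439509,
      938467663980233848899413208259639025893002,
      63652430557546745308767453760492187351826433,
      178430819168490403952792272784129290108910761,
      184386673708831072947017334274872561332913692]
  | 13 => [
      12395810223371212382842124752662422472835755,
      173082868816647507490778010891269225909210588,
      52307456343360535068526396471228084000455571,
      135085459707218594160148178157738743687805066,
      144300329666851568699315977660058862358289927,
      69377662035173601447602659816408328694276196,
      29403850356603548772649100373146412540273839,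
      65650549436379357074214503959288927932352661,
      120164469581450642394546413729564389694717778,
      111884536044646582181399359422470892565671275,
      20409878735090104243659530178242798276722933,
      104553842063966132654283466693180500025825946,
      55347974709409289973231144653311552486752833,
      141749067307560784029997039359955808561236623]
  | 14 => [
      123987717190521088036913426740647545631280175,
      130956969878224993112541858863385095922543196,
      138032475108290552642588712077449320050238533,
      96998160342458718854540531426966476178293930,
      104112324633355644721646874328878243252955838,
      111190356466078904559186310170510178742813089,
      116724862007135105410638495287068352618430618,
      43733222950210773869283332258358416164089154,
      2765744575386402038794001105829831426812561,
      9949870221785669577181113141847835098514769,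
      15517818348273465816849997892497143199392020,
      22638332165936264967578087262411214392709332,
      29685715731045304015305610303384743235417891,
      36764027568404699491511374434018728386668374]
  | _ => []

set_option maxRecDepth 100000 in
theorem hwCheck_all : ∀ a < 15, hwCheck a (hwCodes a) := by
  decide +kernel

/-- The graph of a successor function. -/
def succGraph (s : Fin 30 → Fin 30) : SimpleGraph (Fin 30) where
  Adj u v := u ≠ v ∧ (s u = v ∨ s v = u)
  symm := ⟨fun _ _ h => ⟨h.1.symm, h.2.symm⟩⟩
  loopless := ⟨fun _ h => h.1 rfl⟩

theorem succGraph_nbr (s p : Fin 30 → Fin 30) (hsp : ∀ u, s (p u) = u) (hps : ∀ u, p (s u) = u)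
    (hs : ∀ u, s u ≠ u) (u : Fin 30) : (succGraph s).neighborSet u = {s u, p u} := by
  ext v
  simp only [SimpleGraph.mem_neighborSet, succGraph, Set.mem_insert_iff, Set.mem_singleton_iff]
  constructor
  · rintro ⟨_, h | h⟩
    · exact Or.inl h.symm
    · right; rw [← h, hps]
  · rintro (h | h)
    · exact ⟨by rw [h]; exact (hs u).symm, Or.inl h.symm⟩
    · have : s v = u := by rw [h, hsp]
      refine ⟨?_, Or.inr this⟩
      rintro rfl
      exact hs _ this

theorem succGraph_supp (s : Fin 30 → Fin 30) (k : ℕ) (hk : k.Prime) (hit : ∀ u, s^[k] u = u)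
    (hs : ∀ u, s u ≠ u) (u : Fin 30) :
    ((succGraph s).connectedComponentMk u).supp.ncard = k := by
  have hmp : Function.minimalPeriod s u = k := by
    have := Fact.mk hk
    exact Function.minimalPeriod_eq_prime (hit u) (hs u)
  have hreach : ∀ j, (succGraph s).Reachable u (s^[j] u) := by
    intro j
    induction j with
    | zero => exact SimpleGraph.Reachable.refl _
    | succ j ih =>
      rw [Function.iterate_succ_apply']
      refine ih.trans (SimpleGraph.Adj.reachable ?_)
      exact ⟨(hs _).symm, Or.inl rfl⟩
  have hmod : ∀ j, s^[j] u = s^[j % k] u := by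
    intro j
    have := Function.iterate_mod_minimalPeriod_eq (f := s) (x := u) (n := j)
    rw [hmp] at this
    exact this.symm
  have hset : ((succGraph s).connectedComponentMk u).supp =
      ((Finset.range k).image (fun j => s^[j] u) : Finset (Fin 30)) := by
    ext w
    rw [SimpleGraph.ConnectedComponent.mem_supp_iff, SimpleGraph.ConnectedComponent.eq]
    simp only [Finset.coe_image, Set.mem_image, Finset.coe_range, Set.mem_Iio]
    constructor
    · rintro h
      have key : ∃ j, s^[j] u = w := by
        obtain ⟨p⟩ := h.symm
        have gen : ∀ (x y : Fin 30), (succGraph s).Walk x y → (∃ j, s^[j] u = x) →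
            ∃ j, s^[j] u = y := by
          intro x y q
          induction q with
          | nil => exact id
          | cons hadj _ ih =>
            rename_i a b c _
            rintro ⟨j, hj⟩
            apply ih
            rcases hadj.2 with h1 | h1
            · exact ⟨j + 1, by rw [Function.iterate_succ_apply', hj, h1]⟩
            · refine ⟨k - 1 + j, ?_⟩
              rw [Function.iterate_add_apply, hj, ← h1, ← Function.iterate_succ_apply,
                Nat.succ_eq_add_one, Nat.sub_add_cancel hk.one_lt.le, hit]
        exact gen u w p ⟨0, rfl⟩
      obtain ⟨j, hj⟩ := key
      exact ⟨j % k, Nat.mod_lt _ hk.pos, by rw [← hmod, hj]⟩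
    · rintro ⟨j, _, rfl⟩
      exact (hreach j).symm
  rw [hset, Set.ncard_coe_finset, Finset.card_image_of_injOn, Finset.card_range]
  have := Function.iterate_injOn_Iio_minimalPeriod (f := s) (x := u)
  rw [hmp] at this
  simpa using this

theorem hw_of_succ (a b : ℕ) (hab : a + b = 14) (s p : ℕ → Fin 30 → Fin 30)
    (hit : ∀ i < 14, ∀ u, (s i)^[cyLen a i] u = u)
    (hp : ∀ i < 14, ∀ u, p i u = (s i)^[cyLen a i - 1] u)
    (hnd : ∀ u, (u :: (List.range 14).flatMap (fun i => [s i u, p i u])).Nodup) :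
    HW 30 3 5 a b := by
  have hpos : ∀ i, cyLen a i - 1 + 1 = cyLen a i := by intro i; unfold cyLen; split <;> rfl
  have hsp : ∀ i < 14, ∀ u, s i (p i u) = u := by
    intro i hi u
    rw [hp i hi, ← Function.iterate_succ_apply' (s i), Nat.succ_eq_add_one, hpos, hit i hi]
  have hps : ∀ i < 14, ∀ u, p i (s i u) = u := by
    intro i hi u
    rw [hp i hi, ← Function.iterate_succ_apply, Nat.succ_eq_add_one, hpos, hit i hi]
  have hs : ∀ i < 14, ∀ u, s i u ≠ u := by
    intro i hi u h
    have := (List.nodup_cons.1 (hnd u)).1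
    apply this
    rw [List.mem_flatMap]
    exact ⟨i, List.mem_range.2 hi, by simp [h]⟩
  have hnbr : ∀ i < 14, ∀ u, (succGraph (s i)).neighborSet u = {s i u, p i u} :=
    fun i hi => succGraph_nbr _ _ (hsp i hi) (hps i hi) (hs i hi)
  have hadj : ∀ i < 14, ∀ u v, (succGraph (s i)).Adj u v ↔ v ∈ [s i u, p i u] := by
    intro i hi u v
    rw [← SimpleGraph.mem_neighborSet, hnbr i hi]
    simp
  have hne : ∀ i < 14, ∀ u, s i u ≠ p i u := by
    intro i hi u
    have h1 := (List.nodup_flatMap.1 (List.nodup_cons.1 (hnd u)).2).1 i (List.mem_range.2 hi)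
    simpa using h1
  have hdisj : ∀ i < 14, ∀ j < 14, i ≠ j → ∀ u v, (succGraph (s i)).Adj u v →
      ¬ (succGraph (s j)).Adj u v := by
    have hlt : ∀ i < 14, ∀ j < 14, i < j → ∀ u v, (succGraph (s i)).Adj u v →
        ¬ (succGraph (s j)).Adj u v := by
      intro i hi j hj hij u v h1 h2
      have h3 := (List.nodup_flatMap.1 (List.nodup_cons.1 (hnd u)).2).2
      rw [List.pairwise_iff_getElem] at h3
      have h4 := h3 i j (by simpa using hi) (by simpa using hj) hij
      simp only [List.getElem_range, Function.onFun] at h4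
      exact h4 ((hadj i hi u v).1 h1) ((hadj j hj u v).1 h2)
    intro i hi j hj hij u v h1 h2
    rcases lt_or_gt_of_ne hij with h | h
    · exact hlt i hi j hj h u v h1 h2
    · exact hlt j hj i hi h u v h2 h1
  have hfac : ∀ i < 14, IsCycleFactor (succGraph (s i)) (cyLen a i) := by
    intro i hi
    refine ⟨fun v => ?_, fun v => ?_⟩
    · rw [hnbr i hi, Set.ncard_pair (hne i hi v)]
    · refine succGraph_supp _ _ ?_ (hit i hi) (hs i hi) v
      unfold cyLen; split <;> norm_num
  let I : SimpleGraph (Fin 30) :=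
    { Adj := fun u v => u ≠ v ∧ ∀ i < 14, ¬ (succGraph (s i)).Adj u v
      symm := ⟨fun _ _ h => ⟨h.1.symm, fun i hi hh => h.2 i hi hh.symm⟩⟩
      loopless := ⟨fun _ h => h.1 rfl⟩ }
  have hG : ∀ u v, ((⊤ : SimpleGraph (Fin 30)) \ I).Adj u v ↔
      ∃ i < 14, (succGraph (s i)).Adj u v := by
    intro u v
    simp only [SimpleGraph.sdiff_adj, SimpleGraph.top_adj, I]
    constructor
    · rintro ⟨h1, h2⟩
      by_contra h3
      exact h2 ⟨h1, fun i hi h => h3 ⟨i, hi, h⟩⟩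
    · rintro ⟨i, hi, h⟩
      exact ⟨h.ne, fun h2 => h2.2 i hi h⟩
  refine ⟨I, fun h => absurd h (by decide), fun _ u => ?_, fun i => succGraph (s i), ⟨?_, ?_, ?_⟩,
    ?_, ?_⟩
  · set L := u :: (List.range 14).flatMap (fun i => [s i u, p i u]) with hL
    have h1 : I.neighborSet u = ((L.toFinset)ᶜ : Finset (Fin 30)) := by
      ext v
      simp only [SimpleGraph.mem_neighborSet, Finset.coe_compl, Set.mem_compl_iff, Finset.mem_coe,
        List.mem_toFinset, hL, List.mem_cons, List.mem_flatMap, List.mem_range, not_or, I]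
      constructor
      · rintro ⟨h1, h2⟩
        refine ⟨h1.symm, ?_⟩
        rintro ⟨i, hi, h⟩
        exact h2 i hi ((hadj i hi u v).2 (by simpa using h))
      · rintro ⟨h1, h2⟩
        refine ⟨Ne.symm h1, fun i hi h => h2 ⟨i, hi, ?_⟩⟩
        simpa using (hadj i hi u v).1 h
    rw [h1, Set.ncard_coe_finset, Finset.card_compl, List.toFinset_card_of_nodup (hnd u)]
    simp
  · intro i hi u v h
    exact (hG u v).2 ⟨i, by omega, h⟩
  · intro i hi j hj hij
    rw [Set.disjoint_left]
    intro e
    induction e using Sym2.ind with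
    | _ u v =>
      intro h1 h2
      exact hdisj i (by omega) j (by omega) hij u v h1 h2
  · ext e
    induction e using Sym2.ind with
    | _ u v =>
      rw [SimpleGraph.mem_edgeSet, hG]
      simp [hab]
  · intro i hi
    have := hfac i (by omega)
    rwa [cyLen, if_pos hi] at this
  · intro i hi hi2
    have := hfac i (by omega)
    rwa [cyLen, if_neg (by omega)] at this

theorem hw_exists (a b : ℕ) (hab : a + b = 14) : HW 30 3 5 a b := by
  have hc := hwCheck_all a (by omega)
  set L := hwCodes a
  let s : ℕ → Fin 30 → Fin 30 := fun i u => ⟨nx (L.getD i 0) u, Nat.mod_lt _ (by norm_num)⟩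
  have hval : ∀ i j u, (((s i)^[j] u : Fin 30) : ℕ) = (nx (L.getD i 0))^[j] u := by
    intro i j u
    induction j with
    | zero => rfl
    | succ j ih => rw [Function.iterate_succ_apply', Function.iterate_succ_apply', ← ih]
  refine hw_of_succ a b hab s (fun i u => (s i)^[cyLen a i - 1] u) ?_ (fun _ _ _ => rfl) ?_
  · intro i hi u
    apply Fin.ext
    rw [hval]
    exact (hc u u.2).1 i hi
  · intro u
    apply List.Nodup.of_map Fin.val
    have h := (ndMask_sound _ _ (hc u u.2).2).1
    rw [List.map_cons, List.map_flatMap]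
    simp only [List.map_cons, List.map_nil, hval]
    exact h

theorem hw_count (a b : ℕ) (h : HW 30 3 5 a b) : a + b = 14 := by
  classical
  obtain ⟨I, _, hI, F, ⟨hle, hd, hU⟩, h3, h5⟩ := h
  have hI1 := hI (by decide) 0
  have hdeg : ∀ i < a + b, ((F i).neighborSet 0).ncard = 2 := by
    intro i hi
    by_cases h : i < a
    · exact (h3 i h).1 0
    · exact (h5 i (by omega) hi).1 0
  have hadj : ∀ v, ((0 : Fin 30) ≠ v ∧ ¬ I.Adj 0 v) ↔ ∃ i < a + b, (F i).Adj 0 v := by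
    intro v
    have := Set.ext_iff.1 hU s(0, v)
    rw [SimpleGraph.mem_edgeSet, SimpleGraph.sdiff_adj, SimpleGraph.top_adj] at this
    rw [this]
    simp
  have hcard : ((Finset.range (a + b)).biUnion (fun i => ((F i).neighborSet 0).toFinset)).card =
      (a + b) * 2 := by
    rw [Finset.card_biUnion]
    · rw [Finset.sum_congr rfl (g := fun _ => 2)]
      · simp
      · intro i hi
        rw [← Set.ncard_eq_toFinset_card']
        exact hdeg i (Finset.mem_range.1 hi)
    · intro i hi j hj hij
      change Disjoint ((F i).neighborSet 0).toFinset ((F j).neighborSet 0).toFinset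
      rw [Finset.disjoint_left]
      intro v h1 h2
      simp only [Set.mem_toFinset, SimpleGraph.mem_neighborSet] at h1 h2
      exact Set.disjoint_left.1
        (hd i (by simpa using hi) j (by simpa using hj) hij)
        ((SimpleGraph.mem_edgeSet _).2 h1) ((SimpleGraph.mem_edgeSet _).2 h2)
  have hset : (Finset.range (a + b)).biUnion (fun i => ((F i).neighborSet 0).toFinset) =
      (insert 0 (I.neighborSet 0).toFinset)ᶜ := by
    ext v
    have h := hadj v
    simp only [Finset.mem_biUnion, Finset.mem_range, Set.mem_toFinset, Finset.mem_compl,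
      SimpleGraph.mem_neighborSet, Finset.mem_insert, not_or]
    rw [← h]
    tauto
  rw [hset, Finset.card_compl, Finset.card_insert_of_notMem (by simp),
    ← Set.ncard_eq_toFinset_card', hI1, Fintype.card_fin] at hcard
  omega

theorem stmt_13 (α β : ℕ) : HW 30 3 5 α β ↔ α + β = 14 :=
  ⟨hw_count α β, hw_exists α β⟩
end

section
/- For each (α, β) ∈ {(0,22), (6,16), (12,10)}, the complete 4-partite graph K_4[15] (minus a 1-factor) admits a decomposition into α C_3-factors and β C_5-factors. -/
open SimpleGraph

/-- `HW(K_u[g]; m, n, α, β)`: a partition of `E(K_u[g])` (minus a 1-factor when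
`g (u - 1)` is odd) into `α` `C_m`-factors and `β` `C_n`-factors. -/
def HWMultipartite (u g m n α β : ℕ) : Prop :=
  ∃ I : SimpleGraph (Fin u × Fin g),
    (¬ Odd (g * (u - 1)) → I = ⊥) ∧ (Odd (g * (u - 1)) → IsOneFactor I) ∧
    IsHWGraph (Kpartite u g \ I) m n α β

/-- Successor tables (base 64) of the 22 factors, then the matching. -/
def nxtA : List ℕ := [
  462888479199162621573991711796650340057770879513488654684190364607641472710597645283675037851852803289863316,
  1479630129147221843848608044509137446040698888005031288771766094904098570324915147753655749960413840676566381,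
  791903408163691640380730373884536608523628291732017346129583327407020616274707735585150503405127436797569938,
  1399702337920589948336574250292832917073814494607387396895327321158801896964725624855184872309979516871046387,
  373609935206916782912098368505426783478297432252041019681574041230742210744419642540505447872876975268908305,
  1211365601883729260136094772246315212399638930408206078126825208431411207523455067931577967367231888857928794,
  54036738222505441585071107831110307304754258340101465371999947822662969073021076750221067366728208694716117,
  1147085017400641991512662277550463349319854067600244059770830361274716900481907957245768989117053995024500152,
  645899501347080141885526671460893131653946004096791788541609081873981257288321313318243613842912865590541927,
  1449622632752786956201576232984844100340190720201705508719338003645919707840262226754793830440220917084957200,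
  716191722588211795417760636428491644955390380503927382931618199911695321569272621594679705772845595031405591,
  1251105209144254786487776462442456302689995383576925539490099225953923756430435523776911429945034994184689184,
  257563991808038464879213863769891520054652669455948368883752275677017292650741492288674444076011786676574322,
  81575849992451906692362381545892697027503861853387850471381511125383435624697410698120061709158262864751846,
  10608019826461159394673550889692766909545694975505484112331756131434180673564687500161868362147246463994319,
  409534034502812851555502367530477878407316236589643675734731428483076405819556844453327963838146977867560723,
  244504114562751421264912600824738021498783053219344702849452879089940980987984796562706505899746452274513512,
  192385414041172580409291296341199228631605683744141685625547689269050407376896646024221518795931979709822817,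
  1543546212679323067558910582853452798673951083891778510402931079843002060210092657243638122012279156176287004,
  667512169790561424182921690147616879914777151015572797442410977034343155955166910484779077269606528685123225,
  164589324875209753033903621737724013117010518598203279481302111312408751037046842468877710648863728508983451,
  480228329288044931390774154899207544510811681323424469112761706342073055451746575555903550984670839199586926,
  1377332204873039107401394199401953099679917650352520145301543793010819044415561068216082052483280912513869270]

/-- Edge colouring table (base 32), one row per vertex. -/
def colA : List ℕ := [
  901848127356346506046999777291542124168263732857244974723654390316755092638156499531325175,
  406355125376096754141967317583938676816241590189707251944326588981292345242097149250625271,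
  846602620092659840311457090150609205371237399534448221193156704888184464946642167030079223,
  349409218659526976199278358330862882515473089294063531427337273125321098419281323557117687,
  1310163240785604137775764112711124297567043703537735204145616718093980399679503175125819127,
  1124578733323751359482621348753622039562008722875692958477801942926023540860799834568515319,
  1040674155612618573556085888434596913206468219306804129930441244558355955891073061566013175,
  764761904050330131298897317432980891708974471388187752680073549857536580455742565286403831,
  83703875367485349986502152981105640969851672503533245087898867324474155075469006662786807,
  707571552770634577930289353242136205391458564762260548835487617477583290254539752564580087,
  284696271072359887881373961771720849286238787409565630261901253601909221890508183029145335,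
  964003432907959904837208278447696004732669434332064480996292603845686902912461162118110967,
  38004881728156330461638674558671822064967952715126448457619755437437790198154035164077815,
  1345524417788662094664346476424352299609410614394621436348661535039156973441070925310844663,
  26440126919516747379668578106968473212148420178059008468447280151749589946111493454683895,
  543485606312466364350198153447513743326150663298938443169881835852647010387942152921955566,
  1033399019011618294419538078695156146067022638705880238285822215275178741660314483421618505,
  545882407063284898683506614548617484084065612949494301163303747575714540097414463839579300,
  1237349277495460627528546468678695464385722958106965647146124242181421763892311615304243202,
  638592870429240568688434831117132440150659800569289114253652607749472585742907576350377071,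
  130633451808596652773990121642012813824303885838566180173263895006237928959656915621712448,
  167930453718812164018956063079456567462439817701251695059290102646462409068505764140700710,
  1238098655752537943423040038088222154391477317230536364979136373421904044993881299018680566,
  662897400370104635989088604761663293593491618843307747903822945636037715972441079415939786,
  907756753977003523957832752855458840550495422330962132515094742905618581832641096546828660,
  595112712219749823983187674356225346871248643208645179147289566116243723930145855779811859,
  775984124821746329744854515442944896215454054695206513838550543502811669073555233196923493,
  452574906788779448996475988065280204481589423567318890587947828419200901455310145446302932,
  288859906174336119601037909581003044189497569378433595833511152538921063063232723052699122,
  1097230276164758265943245717693975612481098241622091507989965976219460880773531809081479718,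
  840739299161197924286529553165845097718713446515199130314911900650294405052090345730679905,
  485911006483956101269659839818924594087408567306337388174237750015840160705156238286164041,
  973672489993412394122340087278772110365736844104981319784532429452127186497034726269783211,
  339206750275417788613140852056223405846859061124518404621622436096869661855002362513594769,
  745083716174343907086272346736914797353053347387244157476044350802298781314955812830164627,
  1369939325863665422915398830012296247697425125417908992331857167356127940787668308248184384,
  1314996592439253070669487361167256974439117881275296437678705267864996819289646677306720301,
  1404882265518085281191655138539381450688902341588667185478875155380903023354162594444773842,
  207151978480250098113792964122969533243951876543650408154903519885611512867603590176418349,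
  573513866858337871200182241019849850623540531523862892416436006874480404151976960194887112,
  74703657471243351516344645440394618886782806944292275945485576134533724875082806405474608,
  420674156997045091654048426234797094395677137764910528099707674198679422493777026317915816,
  1177743530596772752490914670421307680922806384842551136359463802465523199967537310246064428,
  1150513546784712363458813899117114065388524540234334853979252311208655404393794856587826599,
  215187876978594191030782421058647891008281661891310228646917753077265652416715897823246594,
  1511349272764296128521741469150932841104448782519770076513940165358015516794102902883294529,
  1511349272764296128521742463233935311052928251643413741908448455468467431443017693384682581,
  1511349272764296128521725409001388810478325001741983828735469445436321236099292655498169955,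
  1511349272764296128521710447449096187803325270774767548280542505507346490320849135536852111,
  1511349272764296128521725382004511151183704498707318386042607909532626161962423739946271204,
  1511349272764296128521717842030821251662798964467569015763174438150972661992688761342839820,
  1511349272764296128521737856192416271225819021958099846873060148995292522097173890735768995,
  1511349272764296128521739532724740407187092692675199950137296718974733428336027457617475722,
  1511349272764296128521747634138581311218409080873923907258266682382286225255467272457486709,
  1511349272764296128521728845109881392646861630731976093911186096947830482919670836244820497,
  1511349272764296128521720935515723443776100395771421327674147508379009183568657269727349392,
  1511349272764296128521739157142237485762565137845384485173036074232182317404610317957875367,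
  1511349272764296128521719028447775090735646301969297793496724515846760390462428843955865867,
  1511349272764296128521730374387656744580504728792092655496415339682388113656154509281830277,
  1511349272764296128521716054532530041291943620738686266226724583768202075032605021270357198]

/-- Successor tables (base 64) of the 22 factors, then the matching. -/
def nxtB : List ℕ := [
  52806096623505972679224671279280657230643708192698688516714907087756451464335269881284481629674253919291866,
  1068326054825371773229937654265645154841557298189999347807414757164109608200734152052509451590275554643183318,
  293810442267489859401571366092672643558257223355338779824218205430487298494769058034617567565922502879593958,
  153234534726797985405039047186596345699317453649696057633664294118790814708383109438256545675620905085131345,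
  450118345114560904013499342860928716826194706476450882877917047209485939039992371686685557644936996596655251,
  662339415171265208402603913858447298240746468602358165843860651895794387500071436172118216136387926413882664,
  5474815768818327599162482220744801198473463701909413756026295226705769969567038415643152718024862321153644,
  387666662899195715518007889441952785061114122391092558767633048867710581879226759596840595224455561010063252,
  1362519051504891108416352273718755128368356440072967822260588709789687460530810134516494010228526726131873136,
  342422187376024256384802862569784833254881648528232962769508786491062699881297608225179015346612398691806287,
  815415200795876076715557488908750474242006621651426606224608130231188851335943940169197707438996788667687960,
  88329015045768222696735681714847842965782604451353591724010443312540094771031109664947611752965654222109023,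
  993250251076322546461161710175507320503961714953062166409917295940941956304882878305207264379279705672673301,
  194510402488801013273760789246813453894216712175124714343948376853822709068044897325624618039526785338447262,
  743096913911753902848675041781361065253875722223138276444118216969841169247903377141503422206569420868384741,
  624629288570407974174513539359082653388053311993317713439136871991166559832628239943151389092312526948010404,
  565959214357047878509590834686923291305295732068163968732283016279074086393954965165886213546663223993633437,
  496014435209753565464283600110634133210256397238225057461932001923134009221639714905498384867841022852417191,
  918555175058265780291614588457356124725728422282488906556456973646166101087753480161688660041333076410873059,
  113637120145985459087635734451093493465194530559684223037697837767388865630332552577008569166784191599413097,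
  516845102454740305053805775142048980514015448538013754857906528520405044380625909472573821369663668468734233,
  239996230193296350580710609859395295475562112617994082096597661741380800493253022194718797621337228965012444,
  1259233837753262354335518105356401588584595607570512883437763579827707471713311189731559224872804572873538514]

/-- Edge colouring table (base 32), one row per vertex. -/
def colB : List ℕ := [
  386828444579799649904155509206416419432889614363337512577750652118983492161358510249729783,
  30965090359356122508879820590084573632033967204436270351142711721148979885676818870296311,
  736317263552890070453096427637857733968436191249710582361597603452533449958695957492915959,
  1220154392325640991993115381184377516035592217491111453775169236213831382289911277804052215,
  215871388124661640075231378067923501101096969702606024245949493785175083309056040164384503,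
  868393042358795881713618314747800629656745365327992684095654213289799803562486856129699575,
  1374613584470536740707714887172645264376308476623302060534501598328208456699191742395309815,
  1339247411998841067928669242944856453141344796838998341164716556801523075225753026429705975,
  143862617605326462141781080558288622200033077741914238201485787611000329781043522571067127,
  585296185816688408576947271529892134593419345251710396056628383236237426856138945635016439,
  461864987406262228776437756916163730558735101518099062697470007839699469798132419288358647,
  580291167237810345512124839662358852430834582109761396489910415602367250421653982389460727,
  293622890409188496726062822500740667052314471366911690813866717721598186592545892541914871,
  1118542888835859486197488609587596005507286671958361224590954883615978958546510143760883447,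
  1293128996555858288921407230831889606114620059144875479769627150564375450130621625725083383,
  1025303819195999147353909514944218093999848312278802103314828436967405896419331595618996905,
  282670921372852270524788412804447840020084555916948766634700144377234572982410981538447689,
  962840206972281777869783234991995510957910714442327017226249505719054763333075702275250499,
  321053617669101836483136535430096073124262055692673993140089773874348488606375101825521814,
  154371052307087967242264442555036659498392004429747543384224983887153012557469056722245188,
  935491146892358379766734039613091476705157257869570193714184689321460439213751451175208103,
  1037322249701199850492612517682038144380769021875765411826214231557323495244725140029377804,
  667138322376926123135743132701751499150237483079220884503180106970560305764507039224178081,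
  725241857733308059377082701490985925442195757934924696755106099022353102439917686896277583,
  859775961521501082167506057651475061134226420271540953112675482119870666601470892622446954,
  1160725267031557394449749957316780988616874355166939380322404496778811057366904842885312724,
  532387752445153749074495637598413508730788717764583214636777094140716256256361111356874272,
  795880573323826713993197119172740990755759521941907368969081810957957318992669810490624044,
  1083178453201669699196650451754897871298823514131040445673197342569921078593784586232826293,
  105766908808289809808532179334210111690008833654566300234563417381268166350536959739312752,
  1299219350723441350212242846291579782911400163370591260382808769986375091771348181863306477,
  900010716539285519757185982001106087003114919462913847014868673116850551541884200017830347,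
  347485990328590450968249468198788003477969933809012813016108040759013244175874051650403713,
  989763185661102559633180943959325660217275728342746740541019622724035549458082467972232272,
  1443190267129381024158637314266288464768685611287620397481733228627910629857384933622219272,
  1168119174964126700474735569854957556691289014187349464337377601865549865786395141327607090,
  779119392847086979886716630583010063967288895558927971516101005892819238337290885518731919,
  549121107147945772677143551910137303575964735154559869638749492571913125874989042988437870,
  1213983515694701664906603475267473466276698410865551234617095242698132819650853696272151010,
  18527666802808610349194482805110444477586603865471801420343154217751397644397499618077713,
  648649714702223060153950052052613628185117948528453936753994310933968566256916840315225637,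
  446168056103753471879170580079986725404457844011074014424444288054426537836509385160999027,
  83836793231658897607493847176214319927206227975529739258703037300688333855314338086654475,
  393155660070603900171183204930251584978189145616432751887908354888613526303469072433731971,
  225546511859152737766804994467120785783752109464391899742294564039629645365205483283657862,
  1511349272764296128521721935566178402290414797033807677543150857501496628652880372386104565,
  1511349272764296128521710507355150792440056503996509487511620231016170827711885045711053459,
  1511349272764296128521727294108344706802801006861633782264427286243272388925108822563147460,
  1511349272764296128521725272717175705424258949696389416389520452318006866213330513092496552,
  1511349272764296128521714406073484414610054829308008661374754314725550377106979323411729703,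
  1511349272764296128521737478209749132541359497526440924398762490955132842165332998256470282,
  1511349272764296128521727646255349472643270018789148129886313477272450415444514047819719872,
  1511349272764296128521736227137849654585529841999528427546067154719368412956237216534043697,
  1511349272764296128521746325202628877506900100732906006098517688016218001227308176398092916,
  1511349272764296128521747887259852004690232959765891904548599132056781066962743695846168237,
  1511349272764296128521728793006694375551145067021680530063230559260536353228990805056177605,
  1511349272764296128521719057434936581207171093345394356648679062879383968657754676776189042,
  1511349272764296128521731301933688204054995962000905816170634335388595123946352819862606414,
  1511349272764296128521738946491432391893000944330192791081917004890159315603851038941170146,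
  1511349272764296128521715394750659473440210680749220293245722328330722371661524875714604038]

/-- Successor tables (base 64) of the 22 factors, then the matching. -/
def nxtC : List ℕ := [
  263439354898294021231896683658924294193103390614434990974292761100252003724403867542609805960596816676088408,
  448998467958844745095405719747349052658591181698098062892776972609799373319525740001987508538535978983138900,
  590669409774762545590852295571054357506724955015035684437389677849881765852283746469341883425979781312521576,
  149892822311335754623367358076339702633138038344481093242184996589862766307421487005507875481952765476985561,
  236248750516968182601924499060173586723955677594682268613752274234997682964526868740687630666587214595409563,
  1065942957329026197090144771325748584888364811834944696104459375995770371328778900119141019669352196783847210,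
  844655365465321333134382345438058366665244555930076559487884563950909925413806237104467550937626714330252495,
  78742439677221872759488205871267720217634905710665995942784251334716629112491965243856038220683096800707618,
  379575042804825482224689828620921258607707155017186210436646472573763590185001866068374689033316579134478546,
  917465265291763140213484133501904297854205248177574888494594419685704439560153705631028675898028651191301280,
  41490863021833026075008942026533348689472483519182577167028504978411967957192516185982800443045769145038933,
  344151104318303159527161106004634566780994438805022459658081296957619058426683464335945292450703064851162513,
  304203841430386677500622337007387758913259949716832480952193481605201839281903958123803624619740323880698963,
  717981543288208494881576687634140054549602691829315446758354678549415116380042928109839892862991435789837611,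
  1365788118628572264870099912622696165511059136600275335649468693887454299708507310329686398937538405566602014,
  1202815454001106638054661664006742029035696284043856470291857405813056342255515182515503579525156255164381,
  114258642750893574484537667928790666494133554749214540453721137908583813515875579201664290648848326132106192,
  520656281858314506644838663859260914078837164005741068798207505381611126289054329387058315374307442465806051,
  479684333793285984465985417328725083202289433645404596762898849671117258869433342413292917522753877891991856,
  206022239892531748797453901449326994676775473392240724503959603849225898209124396444961673213267553407097948,
  1479988892947688532761253949465559812999714026217838348637996026710434502578074869302933465202423396453525335,
  814864291393559730790068319990326042180478963665197726823541447824571314104339843551128522850676930530571802,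
  1126499026942187162695586914240004008095423782401145133420221622263402412532303479882986963745151572236404182]

/-- Edge colouring table (base 32), one row per vertex. -/
def colC : List ℕ := [
  973287168178858434337059962957360862008167362680494801142852142500859442514889736556633847,
  649386867630827895382766330947550685219796235665491556468093622347442278976665725985087223,
  475730656662523021526049885797312780809825323191338660302014930200092334293156709839658743,
  1029529180297163762695504036260049181563301380276179375835580584499007153928660219886034679,
  227091029615025602872462498869887687553335429114846275776887838683080584185400281068723959,
  1215547972089746547650140056184814514313476996842110012677521461223933636157717978428464887,
  259562394462927460805194050585646766453186930032650557546959507954356335376809958213148407,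
  32404936130279006378382369981599096190110446316637106415578051661195346483561123769212663,
  784195244474076181412919402783650725910366220727391889383051903327349017290978053876080375,
  715216108588867381197379460735173555407855462863194729616247191219005049758613682467364599,
  545230573105119545877659817661868363013541354852777407948488362112760124095264657132740343,
  1210833487797292913332541050212727035830495386199093553394816893562542471393988031205334775,
  98742536906545824608938307963415846318835425376292166583821853643606943459920635844353783,
  1188435860308919667815627573100974241085555433736614710482340789843129621951954635449949943,
  1110723618961117674871498552211714232288426979698007967597850350007957777283982922163674871,
  1147954997493826758755317981836744635562820433635041284681315718491218548914551545158325766,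
  127655113280161008113776710378075463278939962901644487577507471540642957164257152998093040,
  70634631227679743047801780115149731446784348697124323046582885464344315745124078559076747,
  279036292627146553174036649340513528786106632565513965338689452068516264956969107092354344,
  840760408176557053278882253982826351417026510124196837977197849435917776543716540268619980,
  488570379240814165437344701671475442818938004848376358771165853614200298982210894875172257,
  1122424262317074525527788217982539401820233960714431752455729116687703128412607737717078090,
  1353669806399718248234105758484145743680533774057436342402833132738304396256421074285592950,
  414416713389503529129333662822171617651341547576239108446078079739594548393643764560733908,
  786356434899712519636045952536458882271034751884625057966729191264342711600640805738732192,
  593703202591863948716992682180312541291738755709966696336050385064145738092483040920683555,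
  730889528178574253909285861206522460351178245043151502541792038733297913023535049129658517,
  1046593503767649250871234476514709384993905528154199296482866114363025185719119744020256292,
  964127154732068930987128492553127575615180402812916768460094462117913400922286263517694131,
  352107001288124482834033717506178156520374103161833145002294191393530525052686094645694095,
  1410491329079720245703887361123792182598739868687576817664116447811436849886072517524896910,
  195669766357269638583509093896236185254147017227059664922119323856293421568546655169943025,
  19095430460451181618331202298225297958074461766034692745504932124633540451761197364134473,
  676578116289027543954756450419474880195526058845000549527616026601420185240320418005798220,
  1345539968827243262024271408363626829531214043104399144013201932924387318864097899330547111,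
  344923510371094144496011981228547511814258622628558545886367262169675020971760485494208785,
  918077454450590992482329154642066091732620040878691170500052076557529189627281584599571029,
  915729533431803462038361674376591357737630056335752587983524073722295909457474320320417312,
  850552239079321051387885604570514447003642772650450767496333836466097469304040276961675306,
  610746458046057072957829189676457101207645078622865744509290819382714333719601861929568624,
  1276267878328045340099142714219268252657138895836861878544003718835203834139875460293600642,
  165563356862185351115884225704124152954545174843699911462921454387354020471018839887655942,
  1289477865984513215026205405365939941654656202764353602435196235487936351658580417659208933,
  397242906568388929082683697726621203603518837556168982064408259286523811745429165423272045,
  553272687041015120687075612302918246376729893517047475740899273004954083793108570925633987,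
  1511349272764296128521722923654614549500041682632670778820242209921975813454918870467096082,
  1511349272764296128521738747965858309652789524505488115556844786696403722996095123596817012,
  1511349272764296128521714355258372446666929465231410555766221341957977657872590686537568929,
  1511349272764296128521742583735965359666467823262174530607289643559495288248789377001112658,
  1511349272764296128521729265059924183073800978767206899079915305986374776738287099034796647,
  1511349272764296128521734426565246103515214945950905352256162450410242922619753879466725643,
  1511349272764296128521737830127070474897255042596339750002546893979449831441753984713005358,
  1511349272764296128521730484117694376072719256032079629083930326674023083787189178730785250,
  1511349272764296128521719516369460294589921501715389091619442595622933179123846829761216516,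
  1511349272764296128521745987836689433329366478385143308787292461179376606250141829719000243,
  1511349272764296128521725301455008537440322102943362390855090356560638449479718869283180165,
  1511349272764296128521710216393639293606310102176459063349293703432797067583854735748387949,
  1511349272764296128521717930486036344404206885513986338961819797927039869447855423870243272,
  1511349272764296128521747474465547979635204910068623460091594883929548967980317500843932873,
  1511349272764296128521723850757981672831377924496394138987094934839674095266878063543590223]

/-- Digit `b` in base `m` of the `a`-th entry of a table. -/
def entry (m : ℕ) (L : List ℕ) (a b : ℕ) : ℕ := (L.getD a 0 / m ^ b) % m

/-- Bounded universal quantifier, as a Boolean. -/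
def allBelow : ℕ → (ℕ → Bool) → Bool
  | 0, _ => true
  | n + 1, p => p n && allBelow n p

lemma allBelow_spec {n : ℕ} {p : ℕ → Bool} (h : allBelow n p = true) : ∀ i < n, p i = true := by
  induction n with
  | zero => intro i hi; omega
  | succ n ih =>
    rw [allBelow, Bool.and_eq_true] at h
    intro i hi
    rcases Nat.lt_succ_iff_lt_or_eq.mp hi with h' | h'
    · exact ih h.2 i h'
    · exact h' ▸ h.1

/-- The check for a pair of vertices. -/
def checkPair (c : ℕ → ℕ → ℕ) (x : ℕ → ℕ → ℕ) (a b : ℕ) : Bool :=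
  Nat.beq (c a b) (c b a) && Nat.ble (c a b) 23 &&
  (Nat.beq (c a b) 23 == Nat.beq (a / 15) (b / 15)) &&
  (Nat.beq (c a b) 23 || Nat.beq b (x (c a b) a) || Nat.beq a (x (c a b) b))

/-- The check for a factor and a vertex. -/
def checkStep (k : ℕ) (c : ℕ → ℕ → ℕ) (x : ℕ → ℕ → ℕ) (i a : ℕ) : Bool :=
  Nat.ble (x i a) 59 && Nat.beq (c a (x i a)) i && Nat.beq (Nat.rec a (fun _ y => x i y) k) a

/-- The length of the cycles of factor `i` (the matching, `i = 22`, is given length 2). -/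
def len (α i : ℕ) : ℕ := bif Nat.blt i α then 3 else bif Nat.blt i 22 then 5 else 2

/-- The complete check. -/
def check (α : ℕ) (c : ℕ → ℕ → ℕ) (x : ℕ → ℕ → ℕ) : Bool :=
  allBelow 60 (fun a => allBelow 60 fun b => checkPair c x a b) &&
  allBelow 23 (fun i => allBelow 60 fun a => checkStep (len α i) c x i a)

theorem checkA : check 0 (entry 32 colA) (entry 64 nxtA) = true := by decide +kernel
theorem checkB : check 6 (entry 32 colB) (entry 64 nxtB) = true := by decide +kernel
theorem checkC : check 12 (entry 32 colC) (entry 64 nxtC) = true := by decide +kernel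

/-- A graph whose edges join `v` to `f v`, with `f` a fixed point free map of prime order `k > 2`,
is a `C_k`-factor. -/
lemma isCycleFactor_of_map {V : Type*} (H : SimpleGraph V) (f : V → V) (k : ℕ) (hk : k.Prime)
    (hk2 : 2 < k) (hper : ∀ v, f^[k] v = v) (hne : ∀ v, f v ≠ v)
    (hadj : ∀ a b, H.Adj a b ↔ b = f a ∨ a = f b) : IsCycleFactor H k := by
  have hinv : ∀ v, f (f^[k - 1] v) = v := by
    intro v
    have := hper v
    rwa [show k = (k - 1) + 1 by omega, Function.iterate_succ_apply'] at this
  have hinv' : ∀ v, f^[k - 1] (f v) = v := by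
    intro v
    have := hper v
    rwa [show k = (k - 1) + 1 by omega, Function.iterate_succ_apply] at this
  refine ⟨fun v => ?_, fun v => ?_⟩
  · have hs : H.neighborSet v = {f v, f^[k - 1] v} := by
      ext b
      simp only [SimpleGraph.mem_neighborSet, hadj, Set.mem_insert_iff, Set.mem_singleton_iff]
      refine or_congr Iff.rfl ⟨fun h => ?_, fun h => ?_⟩
      · rw [h, hinv']
      · rw [h, hinv]
    rw [hs]
    apply Set.ncard_pair
    intro h
    have h2 : Function.IsPeriodicPt f 2 v := by
      change f (f v) = v
      rw [h, hinv]
    have h3 := h2.gcd (show Function.IsPeriodicPt f k v from hper v)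
    rw [(Nat.coprime_primes Nat.prime_two hk).2 (by omega)] at h3
    exact hne v h3
  · have hmp : Function.minimalPeriod f v = k := by
      have hd : Function.minimalPeriod f v ∣ k :=
        Function.IsPeriodicPt.minimalPeriod_dvd (show Function.IsPeriodicPt f k v from hper v)
      rcases (Nat.dvd_prime hk).1 hd with h | h
      · exact absurd (Function.minimalPeriod_eq_one_iff_isFixedPt.1 h) (hne v)
      · exact h
    have hs : (H.connectedComponentMk v).supp = Set.image (fun i => f^[i] v) (Set.Iio k) := by
      ext w
      rw [SimpleGraph.ConnectedComponent.mem_supp_iff, SimpleGraph.ConnectedComponent.eq]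
      constructor
      · intro h
        obtain ⟨p⟩ := h.symm
        have key : ∀ {a b : V}, H.Walk a b → (∃ i, f^[i] v = a) → ∃ i, f^[i] v = b := by
          intro a b p
          induction p with
          | nil => exact id
          | cons hab _ ih =>
            rintro ⟨i, rfl⟩
            apply ih
            rcases (hadj _ _).1 hab with h | h
            · exact ⟨i + 1, by rw [h, Function.iterate_succ_apply']⟩
            · refine ⟨(k - 1) + i, ?_⟩
              rw [Function.iterate_add_apply, h, hinv']
        obtain ⟨i, hi⟩ := key p ⟨0, rfl⟩
        refine ⟨i % k, Nat.mod_lt _ hk.pos, ?_⟩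
        change f^[i % k] v = w
        rw [← hi]
        exact Function.IsPeriodicPt.iterate_mod_apply (hper v) i
      · rintro ⟨i, -, rfl⟩
        apply SimpleGraph.Reachable.symm
        change H.Reachable v (f^[i] v)
        induction i with
        | zero => exact SimpleGraph.Reachable.refl _
        | succ i ih =>
          rw [Function.iterate_succ_apply']
          exact ih.trans (SimpleGraph.Adj.reachable ((hadj _ _).2 (Or.inl rfl)))
    rw [hs, Set.InjOn.ncard_image]
    · simp
    · rw [← hmp]
      exact Function.iterate_injOn_Iio_minimalPeriod

lemma hw_of_check (α β : ℕ) (hαβ : α + β = 22) (c x : ℕ → ℕ → ℕ) (h : check α c x = true) :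
    HWMultipartite 4 15 3 5 α β := by
  rw [check, Bool.and_eq_true] at h
  have hP : ∀ a < 60, ∀ b < 60, c a b = c b a ∧ c a b ≤ 23 ∧ (c a b = 23 ↔ a / 15 = b / 15) ∧
      (c a b = 23 ∨ b = x (c a b) a ∨ a = x (c a b) b) := by
    intro a ha b hb
    have := allBelow_spec (allBelow_spec h.1 a ha) b hb
    simp only [checkPair, Bool.and_eq_true, Bool.or_eq_true, Nat.beq_eq, Nat.ble_eq,
      beq_iff_eq, or_assoc, and_assoc] at this
    obtain ⟨h1, h2, h3, h4⟩ := this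
    rw [Bool.eq_iff_iff, Nat.beq_eq, Nat.beq_eq] at h3
    exact ⟨h1, h2, h3, h4⟩
  have hS : ∀ i < 23, ∀ a < 60, x i a < 60 ∧ c a (x i a) = i ∧ (x i)^[len α i] a = a := by
    intro i hi a ha
    have := allBelow_spec (allBelow_spec h.2 i hi) a ha
    simp only [checkStep, Bool.and_eq_true, Nat.beq_eq, Nat.ble_eq] at this
    refine ⟨by omega, this.1.2, ?_⟩
    have hrec : ∀ k : ℕ, (Nat.rec a (fun _ y => x i y) k : ℕ) = (x i)^[k] a := by
      intro k
      induction k with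
      | zero => rfl
      | succ k ih => rw [Function.iterate_succ_apply', ← ih]
    rw [← hrec]
    exact this.2
  let e : Fin 4 × Fin 15 ≃ Fin 60 := finProdFinEquiv
  have he : ∀ v, (e v : ℕ) / 15 = v.1 := by
    intro v
    change ((v.2 : ℕ) + 15 * v.1) / 15 = v.1
    omega
  let C : Fin 4 × Fin 15 → Fin 4 × Fin 15 → ℕ := fun a b => c (e a) (e b)
  have hCs : ∀ a b, C a b = C b a := fun a b => (hP _ (e a).2 _ (e b).2).1
  have hC23 : ∀ a b, C a b = 23 ↔ a.1 = b.1 := by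
    intro a b
    have := (hP _ (e a).2 _ (e b).2).2.2.1
    rw [he, he, Fin.val_inj] at this
    exact this
  have hCle : ∀ a b, C a b ≤ 23 := fun a b => (hP _ (e a).2 _ (e b).2).2.1
  let G : ℕ → SimpleGraph (Fin 4 × Fin 15) := fun i =>
    { Adj := fun a b => C a b = i ∧ i < 23
      symm := ⟨fun a b hab => ⟨(hCs b a).trans hab.1, hab.2⟩⟩
      loopless := ⟨fun a ha => by
        have := (hC23 a a).2 rfl
        omega⟩ }
  have hG : ∀ i a b, (G i).Adj a b ↔ C a b = i ∧ i < 23 := fun _ _ _ => Iff.rfl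
  let f : ℕ → Fin 4 × Fin 15 → Fin 4 × Fin 15 := fun i v =>
    if hi : i < 23 then e.symm ⟨x i (e v), (hS i hi _ (e v).2).1⟩ else v
  have hf : ∀ i < 23, ∀ v, (e (f i v) : ℕ) = x i (e v) := by
    intro i hi v
    simp only [f, dif_pos hi, Equiv.apply_symm_apply]
  have hfi : ∀ i < 23, ∀ n v, (e ((f i)^[n] v) : ℕ) = (x i)^[n] (e v) := by
    intro i hi n v
    induction n with
    | zero => rfl
    | succ n ih => rw [Function.iterate_succ_apply', Function.iterate_succ_apply', hf i hi, ih]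
  have hper : ∀ i < 23, ∀ v, (f i)^[len α i] v = v := by
    intro i hi v
    apply e.injective
    apply Fin.ext
    rw [hfi i hi]
    exact (hS i hi _ (e v).2).2.2
  have hCf : ∀ i < 23, ∀ v, C v (f i v) = i := by
    intro i hi v
    change c (e v) (e (f i v)) = i
    rw [hf i hi]
    exact (hS i hi _ (e v).2).2.1
  have hne : ∀ i < 23, ∀ v, f i v ≠ v := by
    intro i hi v hv
    have h1 := hCf i hi v
    have h2 := (hC23 v v).2 rfl
    rw [hv] at h1
    omega
  have hadj : ∀ i < 23, ∀ a b, (G i).Adj a b ↔ b = f i a ∨ a = f i b := by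
    intro i hi a b
    constructor
    · rintro ⟨hab, -⟩
      have h4 := (hP _ (e a).2 _ (e b).2).2.2.2
      change C a b = 23 ∨ (e b : ℕ) = x (C a b) (e a) ∨ (e a : ℕ) = x (C a b) (e b) at h4
      rw [hab, ← hf i hi, ← hf i hi, Fin.val_inj, Fin.val_inj, e.injective.eq_iff,
        e.injective.eq_iff] at h4
      rcases h4 with h4 | h4
      · omega
      · exact h4
    · rintro (rfl | rfl)
      · exact ⟨hCf i hi a, hi⟩
      · exact ⟨(hCs _ _).trans (hCf i hi b), hi⟩
  have hK : ∀ a b, (Kpartite 4 15).Adj a b ↔ a.1 ≠ b.1 := by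
    intro a b
    rw [Kpartite, SimpleGraph.fromRel_adj]
    constructor
    · rintro ⟨-, h | h⟩
      · exact h
      · exact h.symm
    · intro h
      exact ⟨fun hab => h (by rw [hab]), Or.inl h⟩
  have hD : ∀ a b, (Kpartite 4 15 \ G 22).Adj a b ↔ C a b < 22 := by
    intro a b
    rw [SimpleGraph.sdiff_adj, hK, hG, Ne, ← hC23]
    have := hCle a b
    omega
  refine ⟨G 22, fun hodd => absurd (by decide) hodd, fun _ v => ?_, G, ⟨?_, ?_, ?_⟩, ?_, ?_⟩
  · have hl : len α 22 = 2 := by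
      have : Nat.blt 22 α = false := by
        rw [Bool.eq_false_iff, Ne, Nat.blt_eq]
        omega
      rw [len, this]
      rfl
    have hs : (G 22).neighborSet v = {f 22 v} := by
      ext b
      rw [SimpleGraph.mem_neighborSet, hadj 22 (by omega), Set.mem_singleton_iff]
      refine ⟨?_, Or.inl⟩
      rintro (h | h)
      · exact h
      · have := hper 22 (by omega) b
        rw [hl] at this
        rw [h]
        exact this.symm
    rw [hs, Set.ncard_singleton]
  · intro i hi a b hab
    rw [hD, ((hG i a b).1 hab).1]
    omega
  · intro i _ j _ hij
    rw [SimpleGraph.disjoint_edgeSet, disjoint_iff_inf_le]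
    intro a b hab
    exact absurd (hab.1.1.symm.trans hab.2.1) hij
  · ext s
    induction s using Sym2.ind with
    | _ a b =>
      simp only [SimpleGraph.mem_edgeSet, Set.mem_iUnion, Set.mem_Iio, exists_prop]
      rw [hD]
      constructor
      · intro h
        exact ⟨C a b, by omega, rfl, by omega⟩
      · rintro ⟨i, hi, hab, -⟩
        omega
  · intro i hi
    have hl : len α i = 3 := by
      have h1 : Nat.blt i α = true := by rwa [Nat.blt_eq]
      rw [len, h1]
      rfl
    refine isCycleFactor_of_map _ (f i) 3 (by norm_num) (by norm_num) ?_ (hne i (by omega))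
      (hadj i (by omega))
    rw [← hl]
    exact hper i (by omega)
  · intro i hi hi'
    have hl : len α i = 5 := by
      have h1 : Nat.blt i α = false := by
        rw [Bool.eq_false_iff, Ne, Nat.blt_eq]
        omega
      have h2 : Nat.blt i 22 = true := by
        rw [Nat.blt_eq]
        omega
      rw [len, h1, h2]
      rfl
    refine isCycleFactor_of_map _ (f i) 5 (by norm_num) (by norm_num) ?_ (hne i (by omega))
      (hadj i (by omega))
    rw [← hl]
    exact hper i (by omega)

theorem stmt_14 : HWMultipartite 4 15 3 5 0 22 ∧ HWMultipartite 4 15 3 5 6 16 ∧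
    HWMultipartite 4 15 3 5 12 10 :=
  ⟨hw_of_check 0 22 rfl _ _ checkA, hw_of_check 6 16 rfl _ _ checkB,
    hw_of_check 12 10 rfl _ _ checkC⟩
end

section
/- For every pair of nonnegative integers (α, β) with α + β = 29, there exists a partition of the edge set of K_60 minus a perfect matching into α C_3-factors and β C_5-factors. -/
open SimpleGraph

/-! ### Successor maps and the 2-factors they define -/

/-- The undirected graph of a map `s`. -/
def mapGraph {V : Type*} (s : V → V) : SimpleGraph V :=
  SimpleGraph.fromRel (fun u v => v = s u)

theorem mapGraph_adj {V : Type*} {s p : V → V} (h1 : ∀ u, s (p u) = u) (h2 : ∀ u, p (s u) = u)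
    (hne : ∀ u, s u ≠ u) (u v : V) : (mapGraph s).Adj u v ↔ v = s u ∨ v = p u := by
  unfold mapGraph
  rw [SimpleGraph.fromRel_adj]
  constructor
  · rintro ⟨_, h | h⟩
    · exact Or.inl h
    · right; rw [h, h2]
  · rintro (h | h)
    · subst h; exact ⟨(hne u).symm, Or.inl rfl⟩
    · subst h
      refine ⟨fun h => hne u ?_, Or.inr (h1 u).symm⟩
      have := h1 u
      rw [← h] at this
      exact this

theorem mapGraph_cycleFactor {V : Type*} [Finite V] {s p : V → V} (h1 : ∀ u, s (p u) = u)
    (h2 : ∀ u, p (s u) = u) (hne : ∀ u, s u ≠ u) (hsp : ∀ u, s u ≠ p u) (k : ℕ) (hk : k.Prime)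
    (hper : ∀ u, s^[k] u = u) : IsCycleFactor (mapGraph s) k := by
  have hadj := mapGraph_adj h1 h2 hne
  constructor
  · intro v
    have : (mapGraph s).neighborSet v = {s v, p v} := by
      ext w
      simp [hadj]
    rw [this, Set.ncard_pair (hsp v)]
  · intro v
    have hmin : Function.minimalPeriod s v = k := by
      have hd : Function.minimalPeriod s v ∣ k :=
        Function.IsPeriodicPt.minimalPeriod_dvd (hper v)
      rcases (Nat.dvd_prime hk).1 hd with h | h
      · exact absurd (Function.minimalPeriod_eq_one_iff_isFixedPt.1 h) (hne v)
      · exact h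
    have hp : ∀ w, p w = s^[k - 1] w := by
      intro w
      have : s^[k - 1 + 1] w = w := by
        rw [Nat.sub_add_cancel hk.one_lt.le]; exact hper w
      rw [Function.iterate_succ_apply'] at this
      calc p w = p (s (s^[k - 1] w)) := by rw [this]
        _ = _ := h2 _
    have hsupp : ((mapGraph s).connectedComponentMk v).supp
        = (fun n => s^[n] v) '' Set.Iio k := by
      ext w
      rw [SimpleGraph.ConnectedComponent.mem_supp_iff, SimpleGraph.ConnectedComponent.eq]
      constructor
      · intro hw
        have hO : ∃ n, s^[n] v = w := by
          replace hw := hw.symm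
          rw [SimpleGraph.reachable_iff_reflTransGen] at hw
          induction hw with
          | refl => exact ⟨0, rfl⟩
          | tail _ hbc ih =>
            obtain ⟨n, rfl⟩ := ih
            rcases (hadj _ _).1 hbc with h | h
            · exact ⟨n + 1, by rw [h, Function.iterate_succ_apply']⟩
            · exact ⟨(k - 1) + n, by rw [h, hp, Function.iterate_add_apply]⟩
        obtain ⟨n, rfl⟩ := hO
        refine ⟨n % k, Nat.mod_lt _ hk.pos, ?_⟩
        have := Function.iterate_mod_minimalPeriod_eq (f := s) (x := v) (n := n)
        rw [hmin] at this
        exact this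
      · rintro ⟨n, hn, rfl⟩
        clear hn
        apply SimpleGraph.Reachable.symm
        clear hmin
        induction n with
        | zero => exact SimpleGraph.Reachable.refl _
        | succ n ih =>
          refine ih.trans (SimpleGraph.Adj.reachable ?_)
          rw [hadj]
          left
          exact Function.iterate_succ_apply' _ _ _
    rw [hsupp, Set.InjOn.ncard_image, ← Finset.coe_Iio, Set.ncard_coe_finset]
    · simp
    · have := Function.iterate_injOn_Iio_minimalPeriod (f := s) (x := v)
      rw [hmin] at this
      exact this

/-- Abstract criterion: maps `s i` with inverses `p i`, and an involution `ι`, whose values at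
each vertex cover all vertices, define a Hamilton–Waterloo decomposition. -/
theorem hw_of_cover (α β : ℕ) (hab : α + β = 29) (s p : ℕ → Fin 60 → Fin 60)
    (ι : Fin 60 → Fin 60)
    (h1 : ∀ i < 29, ∀ u, s i (p i u) = u) (h2 : ∀ i < 29, ∀ u, p i (s i u) = u)
    (h3 : ∀ i < α, ∀ u, (s i)^[3] u = u) (h5 : ∀ i, α ≤ i → i < 29 → ∀ u, (s i)^[5] u = u)
    (hι : ∀ u, ι (ι u) = u)
    (hcov : ∀ u w, w = u ∨ w = ι u ∨ ∃ i < 29, w = s i u ∨ w = p i u) :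
    HW 60 3 5 α β := by
  -- the slots at a vertex
  let f : Fin 60 → Option (Option (Fin 29 × Bool)) → Fin 60 := fun u x =>
    match x with
    | none => u
    | some none => ι u
    | some (some (i, true)) => s i u
    | some (some (i, false)) => p i u
  have hsurj : ∀ u, Function.Surjective (f u) := by
    intro u w
    rcases hcov u w with h | h | ⟨i, hi, h | h⟩
    · exact ⟨none, h.symm⟩
    · exact ⟨some none, h.symm⟩
    · exact ⟨some (some (⟨i, hi⟩, true)), h.symm⟩
    · exact ⟨some (some (⟨i, hi⟩, false)), h.symm⟩
  have hinj : ∀ u, Function.Injective (f u) := fun u =>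
    ((Fintype.bijective_iff_surjective_and_card (f u)).2 ⟨hsurj u, by simp⟩).1
  have hιne : ∀ u, ι u ≠ u := fun u h => by
    have := @hinj u (some none) none h
    simp at this
  have hsne : ∀ i < 29, ∀ u, s i u ≠ u := fun i hi u h => by
    have := @hinj u (some (some (⟨i, hi⟩, true))) none h
    simp at this
  have hsp : ∀ i < 29, ∀ u, s i u ≠ p i u := fun i hi u h => by
    have := @hinj u (some (some (⟨i, hi⟩, true))) (some (some (⟨i, hi⟩, false))) h
    simp at this
  have hsι : ∀ i < 29, ∀ u, s i u ≠ ι u := fun i hi u h => by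
    have := @hinj u (some (some (⟨i, hi⟩, true))) (some none) h
    simp at this
  have hpι : ∀ i < 29, ∀ u, p i u ≠ ι u := fun i hi u h => by
    have := @hinj u (some (some (⟨i, hi⟩, false))) (some none) h
    simp at this
  have hIadj : ∀ u v, (mapGraph ι).Adj u v ↔ v = ι u := by
    intro u v
    rw [mapGraph_adj hι hι hιne]
    simp
  have hF : ∀ i < 29, ∀ u v, (mapGraph (s i)).Adj u v ↔ v = s i u ∨ v = p i u :=
    fun i hi => mapGraph_adj (h1 i hi) (h2 i hi) (hsne i hi)
  have hle : ∀ i < 29, mapGraph (s i) ≤ (⊤ : SimpleGraph (Fin 60)) \ mapGraph ι := by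
    intro i hi u v huv
    rw [SimpleGraph.sdiff_adj]
    refine ⟨huv.ne, fun hI => ?_⟩
    rw [hIadj] at hI
    subst hI
    rcases (hF i hi _ _).1 huv with h | h
    · exact hsι i hi u h.symm
    · exact hpι i hi u h.symm
  refine ⟨mapGraph ι, fun h => absurd h (by decide), fun _ v => ?_, fun i => mapGraph (s i),
    ⟨?_, ?_, ?_⟩, ?_, ?_⟩
  · have : (mapGraph ι).neighborSet v = {ι v} := by
      ext w
      simp [hIadj]
    rw [this, Set.ncard_singleton]
  · rw [hab]; exact hle
  · rw [hab]
    intro i hi j hj hij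
    rw [Set.disjoint_left]
    intro e
    induction e with
    | h u v =>
      intro hei hej
      rw [SimpleGraph.mem_edgeSet] at hei hej
      rw [hF i hi] at hei
      rw [hF j hj] at hej
      apply hij
      rcases hei with h | h <;> rcases hej with h' | h'
      · have := @hinj u (some (some (⟨i, hi⟩, true))) (some (some (⟨j, hj⟩, true)))
          (h.symm.trans h')
        simpa using this
      · have := @hinj u (some (some (⟨i, hi⟩, true))) (some (some (⟨j, hj⟩, false)))
          (h.symm.trans h')
        simp at this
      · have := @hinj u (some (some (⟨i, hi⟩, false))) (some (some (⟨j, hj⟩, true)))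
          (h.symm.trans h')
        simp at this
      · have := @hinj u (some (some (⟨i, hi⟩, false))) (some (some (⟨j, hj⟩, false)))
          (h.symm.trans h')
        simpa using this
  · rw [hab]
    ext e
    induction e with
    | h u v =>
      simp only [SimpleGraph.mem_edgeSet, Set.mem_iUnion, Set.mem_Iio, exists_prop]
      constructor
      · intro h
        rw [SimpleGraph.sdiff_adj, hIadj] at h
        rcases hcov u v with hv | hv | ⟨i, hi, hv⟩
        · exact absurd hv.symm h.1.ne
        · exact absurd hv h.2
        · exact ⟨i, hi, (hF i hi u v).2 hv⟩
      · rintro ⟨i, hi, h⟩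
        exact hle i hi h
  · intro i hi
    have hi' : i < 29 := by omega
    exact mapGraph_cycleFactor (h1 i hi') (h2 i hi') (hsne i hi') (hsp i hi') 3 Nat.prime_three
      (h3 i hi)
  · intro i hi hi'
    rw [hab] at hi'
    exact mapGraph_cycleFactor (h1 i hi') (h2 i hi') (hsne i hi') (hsp i hi') 5 Nat.prime_five
      (h5 i hi hi')

/-! ### Encoded factors and the checker

A factor is coded by a pair `(N, t)`: the base-64 digits of `N` are the values of a successor
map on `{0, …, 59}`, which is conjugated by the translation by `4 * t` modulo 60. -/

def st (c : ℕ × ℕ) (u : ℕ) : ℕ :=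
  Nat.mod (Nat.add (Nat.mod (Nat.shiftRight c.1
    (Nat.mul 6 (Nat.mod (Nat.add u (Nat.sub 60 (Nat.mul 4 c.2))) 60))) 64) (Nat.mul 4 c.2)) 60

def chk3 (c : ℕ × ℕ) : Bool :=
  (List.range 60).all fun u => Nat.beq (st c (st c (st c u))) u

def chk5 (c : ℕ × ℕ) : Bool :=
  (List.range 60).all fun u => Nat.beq (st c (st c (st c (st c (st c u))))) u

/-- Bit mask of a list of vertices. -/
def mask (l : List ℕ) : ℕ :=
  l.foldr (fun w m => Nat.lor (Nat.shiftLeft 1 w) m) 0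

def nbrs (A B : List (ℕ × ℕ)) (u : ℕ) : List ℕ :=
  u :: Nat.xor u 1 :: (A.flatMap (fun c => [st c u, st c (st c u)]) ++
    B.flatMap (fun c => [st c u, st c (st c (st c (st c u)))]))

def good (a : ℕ) (A B : List (ℕ × ℕ)) : Bool :=
  Nat.beq A.length a && Nat.beq (A.length + B.length) 29 && A.all chk3 && B.all chk5 &&
    (List.range 60).all fun u => Nat.beq (mask (nbrs A B u)) 1152921504606846975

def orbs (k : ℕ) (l : List ℕ) : List (ℕ × ℕ) :=
  l.flatMap fun N => (List.range k).map fun t => (N, t)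

theorem mem_of_testBit_mask (l : List ℕ) (w : ℕ) (h : (mask l).testBit w = true) : w ∈ l := by
  induction l with
  | nil => simp [mask] at h
  | cons a l ih =>
    have e : mask (a :: l) = (1 <<< a) ||| mask l := rfl
    rw [e, Nat.testBit_or, Bool.or_eq_true] at h
    rcases h with h | h
    · rw [Nat.one_shiftLeft, Nat.testBit_two_pow] at h
      simp at h
      simp [h]
    · exact List.mem_cons_of_mem _ (ih h)

theorem st_lt (c : ℕ × ℕ) (u : ℕ) : st c u < 60 := Nat.mod_lt _ (by norm_num)

theorem xor_one_lt : ∀ u : Fin 60, Nat.xor u 1 < 60 := by decide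

theorem hw_of_good (a : ℕ) (A B : List (ℕ × ℕ)) (h : good a A B = true) (β : ℕ)
    (hab : a + β = 29) : HW 60 3 5 a β := by
  unfold good at h
  simp only [Bool.and_eq_true, List.all_eq_true, Nat.beq_eq, chk3, chk5, List.mem_range] at h
  obtain ⟨⟨⟨⟨hA, hlen⟩, hc3⟩, hc5⟩, hcov⟩ := h
  let c : ℕ → ℕ × ℕ := fun i => (A ++ B).getD i (0, 0)
  have hcA : ∀ i < a, c i ∈ A := by
    intro i hi
    have hi' : i < A.length := by omega
    have : c i = A[i] := by
      simp [c, List.getD_eq_getElem?_getD, List.getElem?_append_left hi', hi']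
    rw [this]; exact List.getElem_mem _
  have hcB : ∀ i, a ≤ i → i < 29 → c i ∈ B := by
    intro i hi hi2
    have hi' : i - A.length < B.length := by omega
    have hi3 : A.length ≤ i := by omega
    have : c i = B[i - A.length] := by
      simp [c, List.getD_eq_getElem?_getD, List.getElem?_append_right hi3, hi']
    rw [this]; exact List.getElem_mem _
  have hAi : ∀ x ∈ A, ∃ i < a, c i = x := by
    intro x hx
    obtain ⟨i, hi, rfl⟩ := List.getElem_of_mem hx
    exact ⟨i, by omega, by
      simp [c, List.getD_eq_getElem?_getD, List.getElem?_append_left hi, hi]⟩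
  have hBi : ∀ x ∈ B, ∃ i, a ≤ i ∧ i < 29 ∧ c i = x := by
    intro x hx
    obtain ⟨i, hi, rfl⟩ := List.getElem_of_mem hx
    refine ⟨A.length + i, by omega, by omega, ?_⟩
    simp [c, List.getD_eq_getElem?_getD, hi]
  let s : ℕ → Fin 60 → Fin 60 := fun i u => ⟨st (c i) u, st_lt _ _⟩
  let p : ℕ → Fin 60 → Fin 60 := fun i => if i < a then (s i)^[2] else (s i)^[4]
  have h3 : ∀ i < a, ∀ u, (s i)^[3] u = u := fun i hi u =>
    Fin.ext (hc3 _ (hcA i hi) u u.2)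
  have h5 : ∀ i, a ≤ i → i < 29 → ∀ u, (s i)^[5] u = u := fun i hi hi2 u =>
    Fin.ext (hc5 _ (hcB i hi hi2) u u.2)
  refine hw_of_cover a β hab s p (fun u => ⟨Nat.xor u 1, ?_⟩) ?_ ?_ h3 h5 ?_ ?_
  · exact xor_one_lt u
  · intro i hi u
    by_cases hia : i < a
    · simp only [p, if_pos hia]; exact h3 i hia u
    · simp only [p, if_neg hia]; exact h5 i (by omega) hi u
  · intro i hi u
    by_cases hia : i < a
    · simp only [p, if_pos hia]; exact h3 i hia u
    · simp only [p, if_neg hia]; exact h5 i (by omega) hi u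
  · intro u
    apply Fin.ext
    exact Nat.xor_xor_cancel_right u 1
  · intro u w
    have hw : (w : ℕ) ∈ nbrs A B u := by
      apply mem_of_testBit_mask
      rw [hcov u u.2]
      have : (1152921504606846975 : ℕ) = 2 ^ 60 - 1 := by norm_num
      rw [this, Nat.testBit_two_pow_sub_one]
      simp
    simp only [nbrs, List.mem_cons, List.mem_append, List.mem_flatMap, List.not_mem_nil,
      or_false] at hw
    rcases hw with h | h | ⟨x, hx, h⟩ | ⟨x, hx, h⟩
    · exact Or.inl (Fin.ext h)
    · exact Or.inr (Or.inl (Fin.ext h))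
    · right; right
      obtain ⟨i, hi, rfl⟩ := hAi x hx
      refine ⟨i, by omega, ?_⟩
      rcases h with h | h
      · exact Or.inl (Fin.ext h)
      · right
        simp only [p, if_pos hi]
        exact Fin.ext h
    · right; right
      obtain ⟨i, hi, hi2, rfl⟩ := hBi x hx
      refine ⟨i, hi2, ?_⟩
      rcases h with h | h
      · exact Or.inl (Fin.ext h)
      · right
        simp only [p, if_neg (not_lt.2 hi)]
        exact Fin.ext h

/-! ### The decompositions -/

def tri00 : List (ℕ × ℕ) := []

def pen00 : List (ℕ × ℕ) := orbs 1 [484191960067278460249850679575079019978619466120155241812119895788733647427435382495799791674446581298980180,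
  375089098506940439356351360524766554432208572561698743798899895400427703833345640078056192474843946910321430,
  1070581948987528307708342922265461771349019063028729411826537478869343123525433358393530151825273540724213205,
  446320017760238433803921065410393632256458573361192132630632931846511577901812002274680827973593162478351785,
  924964489491072709804262197071471077066334570418993668872554300424694000829469360849130808503742024696632855]

def tri01 : List (ℕ × ℕ) := orbs 1 [373394033874921117178493446944727547241691462161399370781535403715418168392970931709784437522821685073241365]

def pen01 : List (ℕ × ℕ) := orbs 1 [455362114460049959546649482582159776136662747544872114744928681476720249028914533276925832778077659641066900,
  521441014925080066080493870964355313836238865641006703893717590359368995022726065845547860041632972299126295,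
  1035623558070908815535062053730266558781716248790446007002704011790868596297101885353187639857754116789011800,
  409507986533781996599534419465789342631562359422424188535539391827289944501096563035468567915566017313080810]

def tri03 : List (ℕ × ℕ) := orbs 1 [521306630240299086846971882643562256745614461256167309186248227109768951757259312711852942583290335810381140,
  410627692674858592246487488998400399825940210922269108896434345143926287023464296730741903809504942916470165,
  448478956713525336960548247667425784711090722181897137997310911250756862433057915647261339783109983806248215]

def pen03 : List (ℕ × ℕ) := orbs 1 [382122174792905961601641597155829071740540859827913400241582202295907909935284622884913429909088850905482795,
  923968115856852516134241976104810631864316660248560353224695565569133408422017045947605215278055629121029590]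

def tri05 : List (ℕ × ℕ) := orbs 1 [411791937802485455084420931364110695753556634581799277916167158126904776579506455272681637723197349859255765,
  521297811245368548413828582807912421303563784372110847261775654989261540522939598626106657138350467627713815,
  373958725144067156225700364546181067451060239072900227783440345921434514203383703131546603759581025172551190,
  446750295910344014401443615820126025932046842222967798988508754552589187369522126980363628843277149584311640,
  482908450719143169615008670104315050907714220990115604929852006450971838669755275610844129263364868822619540]

def pen05 : List (ℕ × ℕ) := []

def tri10 : List (ℕ × ℕ) := []

def pen10 : List (ℕ × ℕ) := orbs 1 [111589403073548737766580030308627898669287567256366519276324965169645912200229891309072902631873959847942435,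
  2307361934003366523417436976057068923177717177008607697715014436559730727398944931548438502638060655771365,
  1431717012911987607166485930946675690963524516805183327761869267743327093059040204910022162474027299421174180,
  73714704830598051390955888243605040985773725320403409497344123836135567667548533243589110731466786552572280,
  1286102309351442669192099733653022466366190519367492910746870367931404674344097842125391470493065873563552230]

def tri11 : List (ℕ × ℕ) := orbs 1 [609497621058929496346034735357774792107710190627939611381068385930834244140152624387794687539788518152420]

def pen11 : List (ℕ × ℕ) := orbs 1 [94047870956383309092165113097985616805012095010169401842759485868429893854819515634867171078492095756872035,
  148835658250425228748009733037243905858109295928144022823680074918553146711224462602311155221190166347659750,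
  1396758578250353660073686101651157661136706762809036537016511412451357384013974002729726987590738046689966375,
  36723494024934263836905968016742387161178554860734051836860633472133696391336283293511957012528814812985785]

def tri13 : List (ℕ × ℕ) := orbs 1 [148522093986436899164824470434192484296030709285395878016093891780281617608428533626456299748008439255292195,
  37843156420996404564340076789030627376356458951497677726280009814438952874633517645345260974223046361381220,
  75694420459663149278400835458056012261506970211125706827156575921269528284227136561864696947828087251159270]

def pen13 : List (ℕ × ℕ) := orbs 1 [20987110868446661496820501953913276876099234618914324035358414290695930701783283799827088062515047673248250,
  1285282359360519165942048259068282915674207495534217153574072433842756484700205264552986113163674047052478885]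

def tri15 : List (ℕ × ℕ) := orbs 1 [39007401548623267402273519154740923303972882611027846746012822797417442430675676187284994887915453304166820,
  148513274991506360731681170598542648853980032401339416091621319659774206374108819540710014303068571072624870,
  1174188890204968543552952336811295001476487102128796613286010591947180054552924046149960924299128617462245,
  73965759656481826719296203610756253482463090252196367818354419223101853220691347894966986007995253029222695,
  110123914465280981932861257894945278458130469019344173759697671121484504520924496525447486428082972267530595]

def pen15 : List (ℕ × ℕ) := []

def tri20 : List (ℕ × ℕ) := []

def pen20 : List (ℕ × ℕ) := orbs 1 [297890681570328857988339717984060424803429085886889050865077753731906680463381837973620906168278516936586905,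
  188698230220470598913521715587023302850338487077561032311890057863448033177014026721643719348940921299917915,
  1251149480608000011314656897091292808992620417860124558098864905814030866524533185146707734251829598191195930,
  260017361295334784910226735398758910782591549981845822934042031809358254238929551665266364910896343809378030,
  1105533399079498460042759540317918241560617475892283651562068464698283884815850398932038291636033824677095260]

def tri21 : List (ℕ × ℕ) := orbs 1 [187001765747990023014080697579691722903332207063726754305795001129240330685436941057111886022627083343214170]

def pen21 : List (ℕ × ℕ) := orbs 1 [274704992702875362708215571834794499788999859495697898057192871729283040430300158499090210981928759177184985,
  335138336587669210097399804946044145361048864826374487414271420135954656666484683180572199000738780050724700,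
  1216191067818873312051976292549421150528135061329823189667044454442581810069378075896051996162345460373575325,
  223115740279358109524521406107429964751015630792206358298980796309983917142691650336861392611492675202176815]

def tri23 : List (ℕ × ℕ) := orbs 1 [334914362113367992682559133278526432407255206158494692710507824523591114049725322059180391083095734080353945,
  224235424547927498082074739633364575487580955824596492420693942557748449315930306078069352309310341186442970,
  262086688586594242796135498302389960372731467084224521521570508664579024725523924994588788282915382076221020]

def pen23 : List (ℕ × ℕ) := orbs 1 [201554642825251602944526369755188451264537535918282593123641892660003798728138832885766570970583537530804080,
  1104625237266844457921874634277366325923224870346189418775779155662503842698069019661427813659272558243927835]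

def tri25 : List (ℕ × ℕ) := orbs 1 [225399669675554360920008181999074871415197379484126661440426755540726938871972464620009086223002748129228570,
  334905543118437454249415833442876596965204529274438230786035252403083702815405607973434105638155865897686620,
  187566457017136062061287615181145243112700983975227611307699943335256676495849712478874052259386423442523995,
  260358027783412920237030866455090201593687587125295182512768351966411349661988136327691077343082547854284445,
  296516182592212075450595920739279226569354965892442988454111603864794000962221284958171577763170267092592345]

def pen25 : List (ℕ × ℕ) := []

def tri30 : List (ℕ × ℕ) := []

def pen30 : List (ℕ × ℕ) := orbs 1 [670493238564058580471610367250511545841073158619147114134032673094909602680277923421589019847493144563288030,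
  561479966793407671746455639135732788631194074050568553359420798142520698541462976936234224246069792899739040,
  890014416683540711856513888410078889658429972626307107494100986272008013267624168938251660604274787457034335,
  632622674224975167323191912565547501781588571891103886800490828563649451449902922340953021212835588525922355,
  744395579219128500654922003736366851989071627476511525701301069006411185525948449071749473506340742627539105]

def tri31 : List (ℕ × ℕ) := orbs 1 [559786302001852210696228109789061495633367873556303775149105752218644415967127825955799274821694797673531295]

def pen31 : List (ℕ × ℕ) := orbs 1 [636019236206542013162699941318968659400965520573037076289929936669534511050528333953172535716121216865228830,
  707743693262324047429883942873155553619628242815209387013733219853180246343828511075480345031696836549535905,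
  855056047639428467513352244628530047901456754089793146810517857080438005526463616639491711905926072730593250,
  595900232788205842287149857556476920493224166942213879944005413980344857510951065538004660643351726508877940]

def tri33 : List (ℕ × ℕ) := orbs 1 [707698898367230180364706545487896205137290872651071713553818575612995199331416206957867779882163448410671070,
  597019960801789685764222151842734348217616622317173513264004693647152534597621190976756741108378055516760095,
  634871224840456430478282910511759733102767133576801542364881259753983110007214809893276177081983096406538145]

def pen33 : List (ℕ × ℕ) := orbs 1 [562689706749710903049347464957104246400801753559674536708358593942483664256076444371282237522530823887775925,
  743310993763177808114068351313894041841509335859923981241094544259270114737676183670771170287631812758022240]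

def tri35 : List (ℕ × ℕ) := orbs 1 [598184205929416548602155594208444644145233045976703682283737506630131024153663349518696475022070462459545695,
  707690079372299641931563245652246369695240195767015251629346003492487788097096492872121494437223580228003745,
  560350993270998249743435027390515015842736650467804632151010694424660761777540597377561441058454137772841120,
  633142564037275107919178278664459974323723253617872203356079103055815434943679021226378466142150262184601570,
  669300718846074263132743332948648999299390632385020009297422354954198086243912169856858966562237981422909470]

def pen35 : List (ℕ × ℕ) := []

def hole : List (ℕ × ℕ) := orbs 1 [1611099471155215525284199649778434964250230136780213274348704090260103523168647270851298546620417788295065991,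
  1675191856149222944491675074257729624613344940598811556564422229684911768854894975453639283194118528124883974,
  1749848552211178152552431384433031553619821824161172596403578021687342216135977943615449886437054107367800965,
  1824323733071531871845886776825628316676774752777181837410352907290760569800439443523408400495175365393675216,
  1898818312736437151409448316150005933496063850386589006860433280308437145453173888502602709026124498131485194,
  1973393561725552738948974252270664659102120993183226756186024511265209685000616459530728552990991449074483407,
  2047965861376164845779366818224808025685057895737733195464384021841382791611117650256028773185245181969240530,
  2122497977855178585451128706954965597526341596132395761007781233277714792307364591994484459278157698595889860,
  1536471307617799683205247460726058475067939518116740942475536996755387320289882197381673952697841941604491923]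

def cfgA0 : List (ℕ × ℕ) := tri00 ++ tri10 ++ tri20 ++ tri30

def cfgB0 : List (ℕ × ℕ) := pen00 ++ pen10 ++ pen20 ++ pen30 ++ hole

theorem cfg0_ok : good 0 cfgA0 cfgB0 = true := by decide +kernel

def cfgA1 : List (ℕ × ℕ) := tri01 ++ tri10 ++ tri20 ++ tri30

def cfgB1 : List (ℕ × ℕ) := pen01 ++ pen10 ++ pen20 ++ pen30 ++ hole

theorem cfg1_ok : good 1 cfgA1 cfgB1 = true := by decide +kernel

def cfgA2 : List (ℕ × ℕ) := tri01 ++ tri11 ++ tri20 ++ tri30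

def cfgB2 : List (ℕ × ℕ) := pen01 ++ pen11 ++ pen20 ++ pen30 ++ hole

theorem cfg2_ok : good 2 cfgA2 cfgB2 = true := by decide +kernel

def cfgA3 : List (ℕ × ℕ) := tri03 ++ tri10 ++ tri20 ++ tri30

def cfgB3 : List (ℕ × ℕ) := pen03 ++ pen10 ++ pen20 ++ pen30 ++ hole

theorem cfg3_ok : good 3 cfgA3 cfgB3 = true := by decide +kernel

def cfgA4 : List (ℕ × ℕ) := tri03 ++ tri11 ++ tri20 ++ tri30

def cfgB4 : List (ℕ × ℕ) := pen03 ++ pen11 ++ pen20 ++ pen30 ++ hole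

theorem cfg4_ok : good 4 cfgA4 cfgB4 = true := by decide +kernel

def cfgA5 : List (ℕ × ℕ) := tri05 ++ tri10 ++ tri20 ++ tri30

def cfgB5 : List (ℕ × ℕ) := pen05 ++ pen10 ++ pen20 ++ pen30 ++ hole

theorem cfg5_ok : good 5 cfgA5 cfgB5 = true := by decide +kernel

def cfgA6 : List (ℕ × ℕ) := tri05 ++ tri11 ++ tri20 ++ tri30

def cfgB6 : List (ℕ × ℕ) := pen05 ++ pen11 ++ pen20 ++ pen30 ++ hole

theorem cfg6_ok : good 6 cfgA6 cfgB6 = true := by decide +kernel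

def cfgA7 : List (ℕ × ℕ) := tri05 ++ tri11 ++ tri21 ++ tri30

def cfgB7 : List (ℕ × ℕ) := pen05 ++ pen11 ++ pen21 ++ pen30 ++ hole

theorem cfg7_ok : good 7 cfgA7 cfgB7 = true := by decide +kernel

def cfgA8 : List (ℕ × ℕ) := tri05 ++ tri13 ++ tri20 ++ tri30

def cfgB8 : List (ℕ × ℕ) := pen05 ++ pen13 ++ pen20 ++ pen30 ++ hole

theorem cfg8_ok : good 8 cfgA8 cfgB8 = true := by decide +kernel

def cfgA9 : List (ℕ × ℕ) := tri05 ++ tri13 ++ tri21 ++ tri30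

def cfgB9 : List (ℕ × ℕ) := pen05 ++ pen13 ++ pen21 ++ pen30 ++ hole

theorem cfg9_ok : good 9 cfgA9 cfgB9 = true := by decide +kernel

def cfgA10 : List (ℕ × ℕ) := tri05 ++ tri15 ++ tri20 ++ tri30

def cfgB10 : List (ℕ × ℕ) := pen05 ++ pen15 ++ pen20 ++ pen30 ++ hole

theorem cfg10_ok : good 10 cfgA10 cfgB10 = true := by decide +kernel

def cfgA11 : List (ℕ × ℕ) := tri05 ++ tri15 ++ tri21 ++ tri30

def cfgB11 : List (ℕ × ℕ) := pen05 ++ pen15 ++ pen21 ++ pen30 ++ hole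

theorem cfg11_ok : good 11 cfgA11 cfgB11 = true := by decide +kernel

def cfgA12 : List (ℕ × ℕ) := tri05 ++ tri15 ++ tri21 ++ tri31

def cfgB12 : List (ℕ × ℕ) := pen05 ++ pen15 ++ pen21 ++ pen31 ++ hole

theorem cfg12_ok : good 12 cfgA12 cfgB12 = true := by decide +kernel

def cfgA13 : List (ℕ × ℕ) := tri05 ++ tri15 ++ tri23 ++ tri30

def cfgB13 : List (ℕ × ℕ) := pen05 ++ pen15 ++ pen23 ++ pen30 ++ hole

theorem cfg13_ok : good 13 cfgA13 cfgB13 = true := by decide +kernel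

def cfgA14 : List (ℕ × ℕ) := tri05 ++ tri15 ++ tri23 ++ tri31

def cfgB14 : List (ℕ × ℕ) := pen05 ++ pen15 ++ pen23 ++ pen31 ++ hole

theorem cfg14_ok : good 14 cfgA14 cfgB14 = true := by decide +kernel

def cfgA15 : List (ℕ × ℕ) := tri05 ++ tri15 ++ tri25 ++ tri30

def cfgB15 : List (ℕ × ℕ) := pen05 ++ pen15 ++ pen25 ++ pen30 ++ hole

theorem cfg15_ok : good 15 cfgA15 cfgB15 = true := by decide +kernel

def cfgA16 : List (ℕ × ℕ) := tri05 ++ tri15 ++ tri25 ++ tri31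

def cfgB16 : List (ℕ × ℕ) := pen05 ++ pen15 ++ pen25 ++ pen31 ++ hole

theorem cfg16_ok : good 16 cfgA16 cfgB16 = true := by decide +kernel

def cfgA17 : List (ℕ × ℕ) :=
  orbs 1 [1389486197849994924867046066403307007967008327937718428143830466986909564651516941445583753076821647329572500,
  306910831585595783201662084322954910582097379042523284427481356598928976246141660393840403560314904377406810] ++
  orbs 3 [667266731637107041582218515522341932357791669968715266960485705462595890048575875033236605739727494059260005,
  818343680877772156555246026366867234579793872321141018697184192885758917862353779000272046896775121286136940,
  21249235211683309619149918282344716394615552259569069137833330483043832662896454845214930344492070756974995,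
  1798194947223994695499146193232372215309430260233129673172681598738314424596406454088199372883087822118746605,
  178996865323449853454566202388143354852272305664018924220655498522424305778199558787151605859250614500158865]

def cfgB17 : List (ℕ × ℕ) :=
  orbs 1 [856812713493703833203317688120675236996721775988840937246239114363513054331112923043309842211334246229714520,
  409471269155830837415318834671667980965311078040451583095244413340968158163576214842412660564617616189875020] ++
  orbs 5 [192562159002613902899433987366459666448619148084457638978468413497586095488223912763469264945500441544796152,
  2030359453711674915773534661172399113633484647550774697207958104942460766938181417550283326324393538422503302]

theorem cfg17_ok : good 17 cfgA17 cfgB17 = true := by decide +kernel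

def cfgA18 : List (ℕ × ℕ) := tri05 ++ tri15 ++ tri25 ++ tri33

def cfgB18 : List (ℕ × ℕ) := pen05 ++ pen15 ++ pen25 ++ pen33 ++ hole

theorem cfg18_ok : good 18 cfgA18 cfgB18 = true := by decide +kernel

def cfgA19 : List (ℕ × ℕ) :=
  orbs 1 [707698898714412834607160189911828443290500940629035860718262674416919623044837699312779960636899674908616020] ++
  orbs 3 [1217370857894497663097392424558567393589428533330700648463406796845264291072486615591381531544430550894038480,
  1349174867210663812440380290807893573621716595844868289257057049081103573936257821164727709930414059437197150,
  528282915897637672561394982625448138452963626950569004929901608682845327210527737909937879535048178130645585,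
  885249236464609280431013028095200502359335153202161496783529639585000725207266215989478222155847137957678305,
  1119297565540813487257967070153458954901996481078123717859593198205684772622274267549075796339694388281871940,
  157817607837669391712657259515424283916586352402669391899955724911696916641924318868396397415786188026071445]

def cfgB19 : List (ℕ × ℕ) :=
  orbs 5 [1728236386526865812755458366973279070596045507511805906350678311229868463710433620663127832212748882990654922,
  608650018616905250611476116381659171855693809459723119280910680156404006360793451985756931009179065794084558]

theorem cfg19_ok : good 19 cfgA19 cfgB19 = true := by decide +kernel

def cfgA20 : List (ℕ × ℕ) := tri05 ++ tri15 ++ tri25 ++ tri35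

def cfgB20 : List (ℕ × ℕ) := pen05 ++ pen15 ++ pen25 ++ pen35 ++ hole

theorem cfg20_ok : good 20 cfgA20 cfgB20 = true := by decide +kernel

def cfgA21 : List (ℕ × ℕ) :=
  orbs 3 [1183545202187153180901281679658805279524055490034164483069136991749342365783709657807816594777128903257597010,
  301346846477928298837002320423839731795859969963040578841968431604376263803474431804347969958869404501261660,
  1628911363017438482393058319525312219671235007886543331085162211899692474275816208708608757340701452100920225,
  92177523946705971824376359585752209283944913942431991601708907469385439715613948289412123920452438644454580,
  612203755530121233550588551852911249452906943181131546605999821660667494360126527193558372048246230890215060,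
  1909121961490724091108143790119595001970431717349846217518281197463614070369574552126795261623564334139783810,
  1087017378315452473099477927941765887382097444790156503659282509661305525959234074582198667886348140439315790]

def cfgB21 : List (ℕ × ℕ) :=
  orbs 3 [433532176704655725998413977159360935331747004799691515451699944459133564273791698744157094704041774328193885] ++
  orbs 5 [1370067027594760454092320654284490521058379407500795003279799338318010093391011518384090627388757410356280294]

theorem cfg21_ok : good 21 cfgA21 cfgB21 = true := by decide +kernel

def cfgA22 : List (ℕ × ℕ) :=
  orbs 1 [707698898714412834607160189911828443290500940629035860718262674416919623044837699312779960636899674908616020] ++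
  orbs 3 [533815340360834035839500184482282973700248859663856009572889161538390607256276878216458410483851576838234500,
  1048510448978035488705942544736218581998990898733434411363215471533845946502358379295787242864298885129674970,
  922292366880949468936937206524539496514808571734020931639154650318180173076043961117919029144472522416042320,
  892069207094968039094090453775474141716838923729841785920974103155770055999336623998239494177672521349630835,
  1470910254689212196107265472561956344780851217985265315949119425702238166725963911743180338588752296548675720,
  1926104704822088712106393864034770546355960986458714035928812773375196685013728815271669077481453057870180945,
  29669287029333446576263596303010532225811404783444759087593807690099962621121942522193857036050216867144585]

def cfgB22 : List (ℕ × ℕ) :=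
  orbs 1 [856812713493703833203317688120675236996721775988840937246239114363513054331112923043309842211334246229714520,
  409471269155830837415318834671667980965311078040451583095244413340968158163576214842412660564617616189875020] ++
  orbs 5 [192156312405944311194270652476808732738200626055772683477410953238065889071132355749806140074465225845855786]

theorem cfg22_ok : good 22 cfgA22 cfgB22 = true := by decide +kernel

def cfgA23 : List (ℕ × ℕ) :=
  orbs 1 [923870115135254351221676959866442154892093719012846705886941331222170953219650242614922223393966750185092500,
  756441066603224129108939022980419001737402396333346323123414166624014599809105647242381344889406372635129210] ++
  orbs 3 [2114877654702851913108113347270271135487337430074160718347860941269126546581551208242816286765225621102604445,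
  1090327549063405996020381710907055840052191874135705620048655212890624690486791236678330684080192659494150620,
  19161194928699739037671279501882327649314648489057903913844866418919839012562012048257183656696904097443075,
  296904422394095903219551980032190795846987682535599456465127534890674013488941107626182179172113098121078890,
  881382899790148920753514917396646361549033129512965754885538158578074694889741846711499641571998932575220885,
  1786211281265784641004664750921441837469386647060671355407578447385683039103445398798289653800915865975225970,
  191240902928113957633828677968477593085645141214128817150586559611926287197088910794526307305436928676823620]

def cfgB23 : List (ℕ × ℕ) :=
  orbs 1 [856812713493703833203317688120675236996721775988840937246239114363513054331112923043309842211334246229714520] ++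
  orbs 5 [91245257702412045292833128867201177206150984069076487178601843797928058031802290120490089238205308770248198]

theorem cfg23_ok : good 23 cfgA23 cfgB23 = true := by decide +kernel

def cfgA24 : List (ℕ × ℕ) :=
  orbs 3 [64643902333359086439108647723375521106850470739940624965774242134085107043351961426305074142564261495530080,
  1263528085727787359504008871044367522378299594700439632580757886889727396894443882369464954826557388353355330,
  322918496082947268437148728763048381921758926477057532280985096969443424719823105463684802903291335958194565,
  797978181798364580407581242077528961553650370704397138636088000710556969138936424681963839318001534801659815,
  493374105295574000449351593150683309975073609823590055444696210338055028936476161874976628430963670636639310,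
  1369103021773865319700933664911969101821485093478611249883806618190558277957720156547523000796420409140688545,
  1652500416718573275239328317031321348258311833862087079552722064189301986195951567897045457422552692637476685,
  628905930547401422649696970834270964970273142916647342122582025299998156322411447469542919883465369874232725]

def cfgB24 : List (ℕ × ℕ) :=
  orbs 5 [176682166507724141584254538229997698489493184315641101593958411614015211521613587745861143514285734568965749]

theorem cfg24_ok : good 24 cfgA24 cfgB24 = true := by decide +kernel

def cfgA25 : List (ℕ × ℕ) :=
  orbs 1 [1809411485100924659491576240815056963478218731446948401505787663791782560464500364757443780900572622595914900,
  1926122070859468092539733001739223187219806037025189306541025266226903806588564438796822610209242586779104610] ++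
  orbs 3 [743232049900619351311906214531695336071446040017403473547551501922188773166930869264882123559859236803934310,
  933084789761787031850115869919657585457541386168740488455392239340391474041049857859855816506253867777026000,
  1673699391459900510509854837323329122214127703394084254025702084456146319825383924048232427121969648768171350,
  171924328790668622814927316575641163440195114844195041663328635408238893874357580965727508669615863296167505,
  594250652762432832728553389321935574141556803212323779421643706593837473055110544427972786238552927315630930,
  325638370770315037077601854169836494951595944895515839621622970990560277985184408143342080772069983606225285] ++
  orbs 5 [490238913919336116924169925396278670473163860512039624151651152004314781477349657724152684372946674985674160]

def cfgB25 : List (ℕ × ℕ) :=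
  orbs 1 [856812713493703833203317688120675236996721775988840937246239114363513054331112923043309842211334246229714520] ++
  orbs 3 [427776486441416488993720504661545680018758569551240159307482373334355829009316882184328996205099914597159800]

theorem cfg25_ok : good 25 cfgA25 cfgB25 = true := by decide +kernel

def cfgA26 : List (ℕ × ℕ) :=
  orbs 3 [775012330489668087438150516764168453608417167628126662329517775522563693262844519773885414630174953651077265,
  1217880425278634168456195657725059940052244722481134489890040539538518215680767975851770316875215000832009625,
  1082016582545385905359406596572334333353911244727973292053551678236243248555948428000254193103243685934286160,
  1488342548386597451723667242971467070514234883293338986992905807028803642768779396073155832259976612756399045,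
  1933116300102352019095513171842029701219342025555289295905686213601116041096937836583851990891355131779458145,
  1566915026279902414455472318699953344733562857979461020659353931046783827187488619554654342440530234108434500,
  1043147002306377202997494173443363680201263616366078464364557608385268158643592628637412724331873515383348565] ++
  orbs 5 [1590429524501072027244004520247739106982838777999882486167176528375934779285118453605969971367530712509801380]

def cfgB26 : List (ℕ × ℕ) :=
  orbs 3 [1720207282167306757298958747101518756424477520981928280436160762800721985862843773348775555558465556651239645]

theorem cfg26_ok : good 26 cfgA26 cfgB26 = true := by decide +kernel

def cfgA27 : List (ℕ × ℕ) :=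
  orbs 3 [673788736674150561367606567791653118809099394365672409184936807147880161720629949335715605163937962107762780,
  1472017640791349126827870169881630585995064551380626343864606729578404937162514045941913921008710790857673620,
  749636007220360635592193737816766903204597976889831191868275919278089608580761278343991713138951094817864720,
  1908688257562196213456485145073939489336240945662424144994821623935556843408508751448822835229912660147941750,
  648908056147088293873401006558041325981264610200239625777375064506088377119104440923744834006453745831994500,
  465995389446031522155882481493494441738416329077489484936528263348656095427231443952868997790614418197806515,
  173756232449082326925313796624835661858602055189483049252062033590683023624935578261764910065596277086585825,
  1706280317244088063984613277095086769390962893450883627861438562914414110383695742093534456850355836111996585,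
  1958857777089287837878655637516222226736384179608215074637300769196491958243909852963142821480084667342119860]

def cfgB27 : List (ℕ × ℕ) :=
  orbs 1 [856812713493703833203317688120675236996721775988840937246239114363513054331112923043309842211334246229714520,
  409471269155830837415318834671667980965311078040451583095244413340968158163576214842412660564617616189875020]

theorem cfg27_ok : good 27 cfgA27 cfgB27 = true := by decide +kernel

def cfgA28 : List (ℕ × ℕ) :=
  orbs 1 [1373682558007217999370423963065230396739065844191402288220123973995585261057563794429125031701141576330116500,
  1199084086128145694134863470940654085862898471143955795562596293569843539572082977726152291169152830838863210] ++
  orbs 3 [54893741494670343275987067151260423143868449590061535872034621533875198927399011716488298570971214665282140,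
  637613637024682825642625976470883382163136348095840260375188637851300047473950342812336843331751104982653000,
  2007511954631704737068819345801810377765349226897216560565665797162873093889156999561744894978586846910457040,
  1637182843821219879544453667884903985191364195556774107299122269520486601083738107150622664722584270170040580,
  2057274142628294353757477112769247613147932594515610596612216291452341567056852201462572855554380274348178345,
  615115835140831199126883940839747315022186494074820036557581001199595730832656782891002470721332750141453745,
  1467943458501115622727779374405488816605479161322888664899060412309270883785036352171611866927851683344067250] ++
  orbs 5 [744633254426457248906451616253758064581292319799945461294310381619154621915077314867464919264870248903811443]

def cfgB28 : List (ℕ × ℕ) :=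
  orbs 1 [856812713493703833203317688120675236996721775988840937246239114363513054331112923043309842211334246229714520]

theorem cfg28_ok : good 28 cfgA28 cfgB28 = true := by decide +kernel

def cfgA29 : List (ℕ × ℕ) :=
  orbs 1 [1981853967786753914947644574402802242948988971691806118396014201988644621174671949164367202595017773871051331,
  2056198994988275195339522234024611196005476398151598853502055333500441595465660053826284700359108406213892115,
  2617162334575759207792380370846472014057119902899485788656549089657751738506841843713655753691388604666539,
  76934797289867106095476869359682944372914638557723128654444168280242783133777875878287818476936731783518602,
  151382851120958469470166457386517194687336120307624084370696820561939176898628183416610988588277017882968926,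
  226107309609119986357937512698193310247773228285130638458590802056876934515554301708784498292081323684004055,
  300624055685344370663152883683705202080132087416091135054878491496293550028827656817121463444338402911426054,
  375238748998322759219168927107678504629339278796571652245905719894788550604106302420126686569651233702315369,
  449683059902878350072370700665180993118341566913155489381393296403683214722224846940717263268778055617656712,
  524593449231020747332979260430445332099671988829872355609096198702718474158838024443019862951008994945180901,
  598685918664167564004613540494340885231542982633543074816350954823592319873634339945682011195684595114081989,
  673362056216777374932718475787213928601808540551005151177361895642490529312162146428644270379162347181470417,
  747770507884554048179555556825340698310807468455344846354599324134595403314545135688676747261094017698707111,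
  822603286359882698025678954382207554834186129352746762859573810246735248692307218946626162311794268667286276,
  897006717709576916789251922554928472148518831229069835771802798654332264794335320339294462387081032576297785,
  971344259379514903518332329288369200040636058163684290805366429082513872378348544914653052682531276171253619,
  1045857388521841472287431316153518595470224088415557326568533943536985227807414056747361462344282018418741718,
  1120564734733828583253259164677867967765149085643551116348127143107511149149013173055524346460348780718162207,
  1194941432247925792320932635764912974141040632076414013723848955669524689486256486003314428533255230753215956,
  1269865243709605722596823757806853249752965920331104571183012974345863769354897353333332682696306716144132430,
  1344438142981067566511981592799250772974742121076145884393570130969449455324167733331608426519369050673187853,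
  1418567832155436455947448305240675445702327642987644411469094790954583319864316686710699758464287272981822722,
  1493178373772512521345665688260951191654612614230037181337919256934943382165510635253952548216389926127157656,
  1567818584236707419511211023062103344430524591656656875557659704401229698814790519824543898079348677167653785,
  1642426965852167163775280953837362767548760818041195603369377183296780402669244834407258553472208658420053614,
  1716820429504798288598231293879216609059746644502062248982213129403785114135022448530689639065499371381393504,
  1791613381579240922744123130482364533737810810352880858866771910985664418930812256874895999644435280919667794,
  1866281737674699645489755062857744740277686960563559691411773455816220091859061598940819547554218195314101098,
  1940362743722533665199933062117057827151120082379018594270202280729498143538969530674538034828907903929208457]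

def cfgB29 : List (ℕ × ℕ) :=
  []

theorem cfg29_ok : good 29 cfgA29 cfgB29 = true := by decide +kernel

theorem stmt_15 (α β : ℕ) (h : α + β = 29) : HW 60 3 5 α β := by
  have ha : α ≤ 29 := by omega
  interval_cases α
  · exact hw_of_good _ _ _ cfg0_ok β h
  · exact hw_of_good _ _ _ cfg1_ok β h
  · exact hw_of_good _ _ _ cfg2_ok β h
  · exact hw_of_good _ _ _ cfg3_ok β h
  · exact hw_of_good _ _ _ cfg4_ok β h
  · exact hw_of_good _ _ _ cfg5_ok β h
  · exact hw_of_good _ _ _ cfg6_ok β h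
  · exact hw_of_good _ _ _ cfg7_ok β h
  · exact hw_of_good _ _ _ cfg8_ok β h
  · exact hw_of_good _ _ _ cfg9_ok β h
  · exact hw_of_good _ _ _ cfg10_ok β h
  · exact hw_of_good _ _ _ cfg11_ok β h
  · exact hw_of_good _ _ _ cfg12_ok β h
  · exact hw_of_good _ _ _ cfg13_ok β h
  · exact hw_of_good _ _ _ cfg14_ok β h
  · exact hw_of_good _ _ _ cfg15_ok β h
  · exact hw_of_good _ _ _ cfg16_ok β h
  · exact hw_of_good _ _ _ cfg17_ok β h
  · exact hw_of_good _ _ _ cfg18_ok β h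
  · exact hw_of_good _ _ _ cfg19_ok β h
  · exact hw_of_good _ _ _ cfg20_ok β h
  · exact hw_of_good _ _ _ cfg21_ok β h
  · exact hw_of_good _ _ _ cfg22_ok β h
  · exact hw_of_good _ _ _ cfg23_ok β h
  · exact hw_of_good _ _ _ cfg24_ok β h
  · exact hw_of_good _ _ _ cfg25_ok β h
  · exact hw_of_good _ _ _ cfg26_ok β h
  · exact hw_of_good _ _ _ cfg27_ok β h
  · exact hw_of_good _ _ _ cfg28_ok β h
  · exact hw_of_good _ _ _ cfg29_ok β h
end

section
/- For each (α, β) ∈ {(2,8), (4,6), (6,4)}, there exists a 2-factorization of K_21 into α C_3-factors and β C_7-factors. -/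
open SimpleGraph

/-- The graph joining each vertex to its image under `f`. -/
def nextGraph {V : Type*} (f : V → V) : SimpleGraph V :=
  SimpleGraph.fromRel (fun u v => f u = v)

theorem nextGraph_adj {V : Type*} (f : V → V) (u v : V) :
    (nextGraph f).Adj u v ↔ u ≠ v ∧ (f u = v ∨ f v = u) := by
  simp [nextGraph]

/-- If every orbit of `f` is a cycle of length `k + 3`, the graph of `f` is a cycle factor. -/
theorem nextGraph_isCycleFactor {V : Type*} (f : V → V) (k : ℕ)
    (hper : ∀ u, f^[k + 3] u = u)
    (hinj : ∀ u, ∀ a < k + 3, ∀ b < k + 3, f^[a] u = f^[b] u → a = b) :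
    IsCycleFactor (nextGraph f) (k + 3) := by
  have hback : ∀ u, f (f^[k + 2] u) = u := fun u => by
    rw [← Function.iterate_succ_apply' f (k + 2) u]; exact hper u
  have hfinj : Function.Injective f := by
    intro x y hxy
    rw [← hper x, ← hper y, Function.iterate_succ_apply f (k + 2) x,
      Function.iterate_succ_apply f (k + 2) y, hxy]
  have hne : ∀ u, f u ≠ u := fun u h => by
    have := hinj u 1 (by omega) 0 (by omega) (by simpa using h)
    omega
  constructor
  · intro v
    have : (nextGraph f).neighborSet v = {f v, f^[k + 2] v} := by
      ext w
      simp only [SimpleGraph.mem_neighborSet, nextGraph_adj, Set.mem_insert_iff,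
        Set.mem_singleton_iff]
      constructor
      · rintro ⟨_, h | h⟩
        · exact Or.inl h.symm
        · exact Or.inr (hfinj (h.trans (hback v).symm))
      · rintro (h | h)
        · exact ⟨fun e => hne v (by rw [← h, ← e]), Or.inl h.symm⟩
        · have hw : f w = v := by rw [h]; exact hback v
          exact ⟨fun e => hne w (hw.trans e), Or.inr hw⟩
    rw [this, Set.ncard_pair]
    intro h
    have := hinj v 1 (by omega) (k + 2) (by omega) (by simpa using h)
    omega
  · intro v
    have : ((nextGraph f).connectedComponentMk v).supp =
        (fun a => f^[a] v) '' (Finset.range (k + 3) : Set ℕ) := by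
      ext w
      simp only [SimpleGraph.ConnectedComponent.mem_supp_iff, SimpleGraph.ConnectedComponent.eq,
        Set.mem_image, Finset.coe_range, Set.mem_Iio]
      constructor
      · intro h
        obtain ⟨p⟩ := h.symm
        have key : ∀ (x y : V) (_ : (nextGraph f).Walk x y),
            (∃ a < k + 3, f^[a] v = x) → ∃ a < k + 3, f^[a] v = y := by
          intro x y p
          induction p with
          | nil => exact id
          | cons hadj _ ih =>
            rintro ⟨a, ha, rfl⟩
            apply ih
            rw [nextGraph_adj] at hadj
            obtain ⟨_, h | h⟩ := hadj
            · rw [← Function.iterate_succ_apply' f a v] at h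
              by_cases hak : a + 1 = k + 3
              · refine ⟨0, by omega, ?_⟩
                rw [← h, Nat.succ_eq_add_one, hak, hper]; rfl
              · exact ⟨a + 1, by omega, h⟩
            · rcases a with _ | a
              · exact ⟨k + 2, by omega, hfinj ((hback v).trans h.symm)⟩
              · rw [Function.iterate_succ_apply' f a v] at h
                exact ⟨a, by omega, (hfinj h).symm⟩
        exact key _ _ p ⟨0, by omega, rfl⟩
      · rintro ⟨a, _, rfl⟩
        apply SimpleGraph.Reachable.symm
        clear * - hne
        induction a with
        | zero => exact SimpleGraph.Reachable.refl _
        | succ a ih =>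
          refine ih.trans (SimpleGraph.Adj.reachable ?_)
          rw [Function.iterate_succ_apply' f a v, nextGraph_adj]
          exact ⟨(hne _).symm, Or.inl rfl⟩
    rw [this, Set.ncard_image_of_injOn, Set.ncard_coe_finset, Finset.card_range]
    intro a ha b hb hab
    simp only [Finset.coe_range, Set.mem_Iio] at ha hb
    exact hinj v a ha b hb hab

/-- Every orbit of `f` is a cycle of length `k`. -/
def CycleCheck (f : Fin 21 → Fin 21) (k : ℕ) : Prop :=
  (∀ u, f^[k] u = u) ∧ ∀ u, ∀ a < k, ∀ b < k, f^[a] u = f^[b] u → a = b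

instance (f : Fin 21 → Fin 21) (k : ℕ) : Decidable (CycleCheck f k) := by
  unfold CycleCheck; infer_instance

theorem hw_of_check_s16 (f : ℕ → Fin 21 → Fin 21) (α β : ℕ)
    (h3 : ∀ i < α, CycleCheck (f i) 3)
    (h7 : ∀ i < α + β, α ≤ i → CycleCheck (f i) 7)
    (hdis : ∀ i < α + β, ∀ j < α + β, i ≠ j → ∀ u, f i u ≠ f j u ∧ f j (f i u) ≠ u)
    (hcov : ∀ u v : Fin 21, u ≠ v → ∃ i < α + β, f i u = v ∨ f i v = u) :
    HW 21 3 7 α β := by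
  refine ⟨⊥, fun _ => rfl, fun h => absurd h (by decide), fun i => nextGraph (f i), ?_, ?_, ?_⟩
  · rw [sdiff_bot]
    refine ⟨fun i _ => le_top, ?_, ?_⟩
    · intro i hi j hj hij
      rw [Set.disjoint_left]
      intro e
      induction e using Sym2.ind with
      | _ u v =>
        simp only [SimpleGraph.mem_edgeSet, nextGraph_adj]
        have a := hdis i hi j hj hij
        have b := hdis j hj i hi hij.symm
        rintro ⟨_, h | h⟩ ⟨_, h' | h'⟩
        · exact (a u).1 (h.trans h'.symm)
        · exact (a u).2 (by rw [h, h'])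
        · exact (a v).2 (by rw [h, h'])
        · exact (a v).1 (h.trans h'.symm)
    · ext e
      induction e using Sym2.ind with
      | _ u v =>
        simp only [SimpleGraph.mem_edgeSet, nextGraph_adj, SimpleGraph.top_adj, Set.mem_iUnion,
          Set.mem_Iio, exists_prop]
        constructor
        · intro h
          obtain ⟨i, hi, h'⟩ := hcov u v h
          exact ⟨i, hi, h, h'⟩
        · rintro ⟨i, _, h, _⟩
          exact h
  · intro i hi
    exact nextGraph_isCycleFactor (f i) 0 (h3 i hi).1 (h3 i hi).2
  · intro i hi hi'
    exact nextGraph_isCycleFactor (f i) 4 (h7 i hi' hi).1 (h7 i hi' hi).2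

/-- Read a table of successor functions. -/
def tableNext (T : List (List ℕ)) (i : ℕ) (u : Fin 21) : Fin 21 :=
  Fin.ofNat 21 ((T.getD i []).getD u.val 0)

/-- Successor table of a 2-factorization. -/
def tableA : List (List ℕ) := [
  [9, 10, 11, 12, 13, 7, 8, 20, 14, 15, 16, 17, 18, 19, 6, 0, 1, 2, 3, 4, 5],
  [13, 7, 8, 9, 10, 11, 12, 18, 19, 20, 14, 15, 16, 17, 4, 5, 6, 0, 1, 2, 3],
  [1, 2, 3, 4, 5, 6, 0, 8, 9, 10, 11, 12, 13, 7, 15, 16, 17, 18, 19, 20, 14],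
  [4, 12, 7, 11, 6, 18, 15, 17, 20, 16, 3, 9, 2, 10, 13, 19, 14, 8, 0, 5, 1],
  [16, 5, 13, 8, 12, 0, 19, 11, 18, 14, 17, 4, 10, 3, 2, 7, 20, 15, 9, 1, 6],
  [20, 17, 6, 7, 9, 13, 1, 4, 12, 19, 15, 18, 5, 11, 0, 3, 8, 14, 16, 10, 2],
  [2, 14, 18, 0, 8, 10, 7, 12, 5, 13, 20, 16, 19, 6, 3, 1, 4, 9, 15, 17, 11],
  [8, 3, 15, 19, 1, 9, 11, 0, 13, 6, 7, 14, 17, 20, 12, 4, 2, 5, 10, 16, 18],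
  [12, 9, 4, 16, 20, 2, 10, 14, 1, 7, 0, 8, 15, 18, 19, 13, 5, 3, 6, 11, 17],
  [11, 13, 10, 5, 17, 14, 3, 19, 15, 2, 8, 1, 9, 16, 18, 20, 7, 6, 4, 0, 12]]

/-- Successor table of a 2-factorization. -/
def tableB : List (List ℕ) := [
  [1, 2, 0, 4, 5, 3, 7, 8, 6, 10, 11, 9, 13, 14, 12, 16, 17, 15, 19, 20, 18],
  [3, 5, 4, 6, 12, 9, 0, 10, 15, 1, 13, 16, 2, 7, 17, 18, 20, 19, 8, 14, 11],
  [5, 4, 3, 10, 7, 13, 16, 1, 11, 17, 2, 14, 15, 0, 8, 20, 19, 18, 9, 6, 12],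
  [4, 3, 5, 14, 11, 8, 9, 17, 2, 12, 15, 0, 6, 16, 1, 19, 18, 20, 13, 10, 7],
  [12, 6, 9, 15, 10, 7, 2, 18, 17, 19, 5, 13, 1, 20, 16, 4, 8, 11, 3, 0, 14],
  [10, 13, 7, 8, 16, 11, 15, 0, 19, 14, 20, 3, 17, 2, 18, 9, 5, 6, 12, 4, 1],
  [8, 11, 14, 9, 6, 17, 20, 16, 1, 4, 12, 18, 19, 15, 0, 7, 10, 3, 2, 13, 5],
  [18, 17, 16, 13, 20, 15, 11, 3, 12, 0, 6, 19, 7, 4, 10, 14, 9, 2, 1, 5, 8],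
  [17, 19, 15, 16, 14, 18, 13, 9, 4, 20, 1, 7, 11, 8, 5, 0, 12, 10, 6, 2, 3],
  [16, 15, 20, 19, 17, 12, 5, 14, 10, 8, 18, 2, 3, 9, 6, 11, 1, 13, 4, 7, 0]]

/-- Successor table of a 2-factorization. -/
def tableC : List (List ℕ) := [
  [13, 11, 5, 20, 0, 7, 10, 2, 12, 19, 14, 17, 15, 4, 6, 8, 3, 1, 9, 18, 16],
  [3, 14, 9, 8, 18, 1, 13, 11, 0, 15, 20, 12, 7, 16, 5, 2, 6, 4, 17, 10, 19],
  [10, 4, 12, 2, 6, 19, 1, 14, 9, 13, 16, 18, 3, 8, 17, 5, 0, 7, 20, 15, 11],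
  [14, 3, 17, 18, 12, 11, 8, 15, 19, 0, 5, 10, 20, 7, 9, 13, 2, 16, 1, 6, 4],
  [15, 12, 4, 9, 19, 13, 20, 6, 16, 11, 1, 3, 10, 18, 8, 17, 14, 0, 5, 2, 7],
  [5, 16, 13, 14, 10, 20, 17, 18, 7, 4, 9, 2, 6, 11, 19, 1, 15, 12, 8, 3, 0],
  [1, 9, 14, 15, 5, 16, 3, 0, 10, 17, 7, 4, 13, 19, 18, 20, 12, 8, 6, 11, 2],
  [12, 2, 10, 17, 16, 3, 11, 4, 1, 5, 15, 8, 19, 14, 20, 6, 18, 13, 0, 7, 9],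
  [11, 13, 0, 4, 15, 17, 2, 9, 5, 6, 3, 16, 18, 20, 12, 14, 7, 19, 10, 1, 8],
  [6, 7, 8, 13, 14, 12, 5, 3, 4, 16, 17, 15, 9, 10, 11, 18, 19, 20, 2, 0, 1]]

theorem hw_A : HW 21 3 7 2 8 :=
  hw_of_check_s16 (tableNext tableA) 2 8 (by decide +kernel) (by decide +kernel)
    (by decide +kernel) (by decide +kernel)

theorem hw_B : HW 21 3 7 4 6 :=
  hw_of_check_s16 (tableNext tableB) 4 6 (by decide +kernel) (by decide +kernel)
    (by decide +kernel) (by decide +kernel)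

theorem hw_C : HW 21 3 7 6 4 :=
  hw_of_check_s16 (tableNext tableC) 6 4 (by decide +kernel) (by decide +kernel)
    (by decide +kernel) (by decide +kernel)

theorem stmt_16 : HW 21 3 7 2 8 ∧ HW 21 3 7 4 6 ∧ HW 21 3 7 6 4 := by
  exact ⟨hw_A, hw_B, hw_C⟩
end
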